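/- Suppose σ_n → ∞. Then for every 1 ≤ s < ∞ there is a constant C_s such that for all n, sup_{t∈ℝ} (1 + |t|^s) |F_n(t) − Φ(t)| ≤ C_s σ_n^{−1}. -/

import Mathlib

open MeasureTheory ProbabilityTheory Filter
open scoped ENNReal NNReal

noncomputable section

variable {Ω : Type*} [MeasurableSpace Ω] {𝒳 : ℕ → Type*} [∀ j, MeasurableSpace (𝒳 j)]

/-- The σ-algebra generated by `X_0, …, X_j`. -/
def pastSigma (X : ∀ j, Ω → 𝒳 j) (j : ℕ) : MeasurableSpace Ω :=
  ⨆ i ∈ Finset.range (j + 1), MeasurableSpace.comap (X i) inferInstance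

/-- `X` is an inhomogeneous Markov chain (on the probability space `(Ω, μ)`) whose `n`-step
transition probabilities from time `j` are given by the Markov kernels `κ j n`: for every
measurable `Γ`, `ℙ(X_{j+n} ∈ Γ | X_0, …, X_j) = (κ j n) (X j) Γ` a.s. -/
structure IsInhomMarkov (μ : Measure Ω) (X : ∀ j, Ω → 𝒳 j)
    (κ : ∀ j n, Kernel (𝒳 j) (𝒳 (j + n))) : Prop where
  meas : ∀ j, Measurable (X j)
  isMarkovKernel : ∀ j n, IsMarkovKernel (κ j n)
  cond : ∀ j n (Γ : Set (𝒳 (j + n))), MeasurableSet Γ →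
    (μ[(fun ω => Γ.indicator (fun _ => (1 : ℝ)) (X (j + n) ω)) | pastSigma X j])
      =ᵐ[μ] fun ω => (κ j n (X j ω) Γ).toReal

/-- The standard normal distribution function `Φ`. -/
def stdNormalCDF (t : ℝ) : ℝ := (gaussianReal 0 1 (Set.Iic t)).toReal

section
open MeasureTheory ProbabilityTheory Filter
open scoped ENNReal NNReal
noncomputable section
namespace WBE
open Set Topology

/-- Fejer kernel -/
def fk (y : ℝ) : ℝ := 2 * (1 - Real.cos y) / y ^ 2

lemma fk_meas : Measurable fk := by unfold fk; fun_prop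

lemma fk_nonneg (y : ℝ) : 0 ≤ fk y := by
  unfold fk
  have := Real.cos_le_one y
  have : 0 ≤ 1 - Real.cos y := by linarith
  positivity

lemma fk_le (y : ℝ) : fk y ≤ 5 * (1 + y ^ 2)⁻¹ := by
  rw [← div_eq_mul_inv, le_div_iff₀ (by positivity)]
  unfold fk
  by_cases hy : y = 0
  · simp [hy]
  have h1 := Real.one_sub_sq_div_two_le_cos (x := y)
  have h2 := Real.neg_one_le_cos y
  have hy2 : 0 < y ^ 2 := by positivity
  rw [div_mul_eq_mul_div, div_le_iff₀ hy2]
  nlinarith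

lemma fk_int : Integrable fk := by
  refine (integrable_inv_one_add_sq.const_mul 5).mono' fk_meas.aestronglyMeasurable ?_
  refine Eventually.of_forall fun y => ?_
  rw [Real.norm_of_nonneg (fk_nonneg y)]
  exact fk_le y

lemma fk_pos : 0 < ∫ y, fk y := by
  rw [integral_pos_iff_support_of_nonneg fk_nonneg fk_int]
  have : Ioo (0:ℝ) 1 ⊆ Function.support fk := by
    intro y hy
    have h := Real.cos_lt_cos_of_nonneg_of_le_pi (le_refl 0) (by linarith [Real.pi_gt_three, hy.2]) hy.1
    rw [Real.cos_zero] at h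
    have h0 := hy.1
    have : 0 < fk y := by unfold fk; have : 0 < 1 - Real.cos y := by linarith
                          positivity
    exact this.ne'
  refine lt_of_lt_of_le ?_ (measure_mono this)
  simp

lemma fk_eq {y : ℝ} (hy : y ≠ 0) : ∫ u in (-1:ℝ)..1, (1 - |u|) * Real.cos (u * y) = fk y := by
  have hc : ∀ a b : ℝ, IntervalIntegrable (fun u : ℝ => (1 - |u|) * Real.cos (u * y)) volume a b :=
    fun a b => Continuous.intervalIntegrable (by fun_prop) _ _
  have h1 : ∫ u in (0:ℝ)..1, (1 - |u|) * Real.cos (u * y) = (1 - Real.cos y) / y ^ 2 := by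
    have : ∫ u in (0:ℝ)..1, (1 - |u|) * Real.cos (u * y)
        = ∫ u in (0:ℝ)..1, (1 - u) * Real.cos (u * y) := by
      refine intervalIntegral.integral_congr fun u hu => ?_
      rw [uIcc_of_le zero_le_one] at hu
      simp [abs_of_nonneg hu.1]
    rw [this, intervalIntegral.integral_eq_sub_of_hasDerivAt
      (f := fun u => (1 - u) * (Real.sin (u * y) / y) - Real.cos (u * y) / y ^ 2)]
    · simp; field_simp; ring
    · intro u _
      have h1 : HasDerivAt (fun u : ℝ => u * y) y u := by simpa using (hasDerivAt_id u).mul_const y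
      have h2 := ((hasDerivAt_const u (1:ℝ)).sub (hasDerivAt_id u)).mul (h1.sin.div_const y)
      have h3 := h2.sub (h1.cos.div_const (y ^ 2))
      refine h3.congr_deriv ?_
      simp; field_simp; ring
    · exact Continuous.intervalIntegrable (by fun_prop) _ _
  have h2 : ∫ u in (-1:ℝ)..0, (1 - |u|) * Real.cos (u * y) = (1 - Real.cos y) / y ^ 2 := by
    rw [← h1, ← neg_zero, ← intervalIntegral.integral_comp_neg]
    simp
  rw [← intervalIntegral.integral_add_adjacent_intervals (hc (-1) 0) (hc 0 1), h1, h2]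
  unfold fk; ring

/-- fourier side -/
lemma fourier_side (P : Measure ℝ) [IsProbabilityMeasure P] (a x : ℝ) :
    ∫ w, (∫ y in Ioc a x, ∫ u in Ioc (-1:ℝ) 1, (1 - |u|) * Real.cos (u * (y - w))) ∂P
     = ∫ u in Ioc (-1:ℝ) 1, (1 - |u|) *
        (charFun P u * ∫ y in Ioc a x, Complex.exp (-(u * y) * Complex.I)).re := by
  have e1 : ∀ w : ℝ, ∫ y in Ioc a x, ∫ u in Ioc (-1:ℝ) 1, (1 - |u|) * Real.cos (u * (y - w))
      = ∫ u in Ioc (-1:ℝ) 1, (1 - |u|) *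
        (Complex.exp (u * w * Complex.I) * ∫ y in Ioc a x, Complex.exp (-(u * y) * Complex.I)).re := by
    intro w
    rw [integral_integral_swap]
    · refine integral_congr_ae (Eventually.of_forall fun u => ?_)
      simp only
      rw [integral_const_mul]
      congr 1
      rw [← integral_const_mul]
      have hi : IntegrableOn (fun y : ℝ => Complex.exp (u * w * Complex.I) *
          Complex.exp (-(u * y) * Complex.I)) (Ioc a x) :=
        (Continuous.integrableOn_Icc (by fun_prop)).mono_set Ioc_subset_Icc_self
      have := integral_re hi
      simp only [RCLike.re_to_complex] at this
      rw [← this]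
      refine integral_congr_ae (Eventually.of_forall fun y => ?_)
      simp only
      rw [← Complex.exp_add, show (u * w * Complex.I + -(u * y) * Complex.I : ℂ)
        = ((u * (w - y) : ℝ) : ℂ) * Complex.I by push_cast; ring, Complex.exp_ofReal_mul_I_re,
        ← Real.cos_neg]
      congr 1; ring
    · rw [Measure.prod_restrict]
      refine IntegrableOn.mono_set (t := Icc a x ×ˢ Icc (-1:ℝ) 1) ?_
        (prod_mono Ioc_subset_Icc_self Ioc_subset_Icc_self)
      refine ContinuousOn.integrableOn_compact (isCompact_Icc.prod isCompact_Icc) ?_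
      refine Continuous.continuousOn ?_
      unfold Function.uncurry
      fun_prop
  simp_rw [e1]
  have hE : ∀ u : ℝ, ‖∫ y in Ioc a x, Complex.exp (-(u * y) * Complex.I)‖ ≤ |x - a| := by
    intro u
    refine (norm_integral_le_integral_norm _).trans ?_
    have : ∀ y : ℝ, ‖Complex.exp (-(u * y) * Complex.I)‖ = 1 := by
      intro y
      rw [show (-(u * y) * Complex.I : ℂ) = ((-(u*y) : ℝ) : ℂ) * Complex.I by push_cast; ring]
      exact Complex.norm_exp_ofReal_mul_I _
    simp_rw [this]
    simp [le_abs_self]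
  have hEc : Continuous fun u : ℝ => ∫ y in Ioc a x, Complex.exp (-(u * y) * Complex.I) := by
    refine continuous_of_dominated (bound := fun _ => 1) ?_ ?_ ?_ ?_
    · intro u; exact Continuous.aestronglyMeasurable (by fun_prop)
    · intro u
      refine Eventually.of_forall fun y => ?_
      rw [show (-(u * y) * Complex.I : ℂ) = ((-(u*y) : ℝ) : ℂ) * Complex.I by push_cast; ring]
      exact (Complex.norm_exp_ofReal_mul_I _).le
    · exact integrable_const _
    · refine Eventually.of_forall fun y => ?_
      fun_prop
  rw [integral_integral_swap]
  · refine integral_congr_ae (Eventually.of_forall fun u => ?_)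
    simp only
    rw [integral_const_mul]
    congr 1
    rw [charFun_apply_real, ← integral_mul_const]
    have hi : Integrable (fun w : ℝ => Complex.exp (u * w * Complex.I) *
        ∫ y in Ioc a x, Complex.exp (-(u * y) * Complex.I)) P := by
      refine Integrable.mul_const ?_ _
      refine Integrable.mono' (g := fun _ => 1) (integrable_const _)
        (Continuous.aestronglyMeasurable (by fun_prop)) (Eventually.of_forall fun w => ?_)
      rw [show (u * w * Complex.I : ℂ) = ((u*w : ℝ) : ℂ) * Complex.I by push_cast; ring]
      exact (Complex.norm_exp_ofReal_mul_I _).le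
    have := integral_re hi
    simpa only [RCLike.re_to_complex] using this
  · refine Integrable.mono' (g := fun _ => 2 * |x - a|) (integrable_const _)
        (Continuous.aestronglyMeasurable ?_) ?_
    · unfold Function.uncurry
      exact (by fun_prop : Continuous fun p : ℝ × ℝ => 1 - |p.2|).mul (Complex.continuous_re.comp
        ((by fun_prop : Continuous fun p : ℝ × ℝ => Complex.exp (p.2 * p.1 * Complex.I)).mul
          (hEc.comp continuous_snd)))
    have hae : ∀ᵐ p ∂(P.prod (volume.restrict (Ioc (-1:ℝ) 1))), p.2 ∈ Ioc (-1:ℝ) 1 := by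
      rw [← Measure.restrict_univ (μ := P), Measure.prod_restrict]
      filter_upwards [ae_restrict_mem (MeasurableSet.univ.prod measurableSet_Ioc)] with p hp
      exact hp.2
    filter_upwards [hae] with p hp
    unfold Function.uncurry
    rw [norm_mul]
    have h1 : ‖(1 - |p.2| : ℝ)‖ ≤ 2 := by
      rw [Real.norm_eq_abs, abs_le]
      have := abs_le.2 ⟨hp.1.le, hp.2⟩
      have := abs_nonneg p.2
      constructor <;> linarith
    refine mul_le_mul h1 ?_ (norm_nonneg _) (by norm_num)
    refine (Complex.abs_re_le_norm _).trans ?_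
    rw [norm_mul, show (p.2 * p.1 * Complex.I : ℂ) = ((p.2*p.1 : ℝ) : ℂ) * Complex.I by push_cast; ring,
      Complex.norm_exp_ofReal_mul_I, one_mul]
    exact hE _

lemma space_side (P : Measure ℝ) [IsProbabilityMeasure P] (a x : ℝ) :
    ∫ w, (∫ y in Ioc a x, ∫ u in Ioc (-1:ℝ) 1, (1 - |u|) * Real.cos (u * (y - w))) ∂P
     = ∫ v, fk v * P.real (Ioc (a - v) (x - v)) := by
  have e1 : ∀ w : ℝ, ∫ y in Ioc a x, ∫ u in Ioc (-1:ℝ) 1, (1 - |u|) * Real.cos (u * (y - w))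
      = ∫ v, fk v * (Ioc (a - v) (x - v)).indicator (fun _ => (1:ℝ)) w := by
    intro w
    have : ∀ᵐ y ∂(volume.restrict (Ioc a x)),
        ∫ u in Ioc (-1:ℝ) 1, (1 - |u|) * Real.cos (u * (y - w)) = fk (y - w) := by
      refine ae_restrict_of_ae ?_
      have : ∀ᵐ y : ℝ, y ≠ w := by simp [ae_iff]
      filter_upwards [this] with y hy
      rw [← intervalIntegral.integral_of_le (by norm_num), fk_eq (sub_ne_zero.2 hy)]
    rw [integral_congr_ae this, ← integral_indicator measurableSet_Ioc,
      ← integral_add_right_eq_self _ w]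
    refine integral_congr_ae (Eventually.of_forall fun v => ?_)
    simp only [indicator, mem_Ioc, add_sub_cancel_right]
    have : (a < v + w ∧ v + w ≤ x) ↔ (a - v < w ∧ w ≤ x - v) := by
      constructor <;> rintro ⟨h1, h2⟩ <;> constructor <;> linarith
    simp only [this]
    split_ifs <;> simp
  simp_rw [e1]
  rw [integral_integral_swap]
  · refine integral_congr_ae (Eventually.of_forall fun v => ?_)
    simp only
    rw [integral_const_mul, integral_indicator_const _ measurableSet_Ioc]
    simp
  · refine Integrable.mono' (g := fun p : ℝ × ℝ => fk p.2) ?_ ?_ ?_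
    · exact fk_int.comp_snd P
    · refine Measurable.aestronglyMeasurable ?_
      unfold Function.uncurry
      refine (fk_meas.comp measurable_snd).mul ?_
      have : (fun p : ℝ × ℝ => (Ioc (a - p.2) (x - p.2)).indicator (fun _ => (1:ℝ)) p.1)
        = ({p : ℝ × ℝ | a - p.2 < p.1} ∩ {p : ℝ × ℝ | p.1 ≤ x - p.2}).indicator (fun _ => (1:ℝ)) := by
        ext p; simp [indicator]
      rw [this]
      refine measurable_const.indicator ((measurableSet_lt ?_ ?_).inter (measurableSet_le ?_ ?_)) <;> fun_prop
    · refine Eventually.of_forall fun p => ?_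
      unfold Function.uncurry
      rw [norm_mul, Real.norm_of_nonneg (fk_nonneg _)]
      refine mul_le_of_le_one_right (fk_nonneg _) ?_
      unfold indicator; split_ifs <;> simp

lemma expInt_bound (a x u : ℝ) (hax : a ≤ x) :
    |u| * ‖∫ y in Ioc a x, Complex.exp (-(u * y) * Complex.I)‖ ≤ 2 := by
  by_cases hu : u = 0
  · simp [hu]
  rw [← intervalIntegral.integral_of_le hax]
  have hc : (-(u * Complex.I) : ℂ) ≠ 0 := by simp [hu]
  have : ∀ y : ℝ, Complex.exp (-(u * y) * Complex.I) = Complex.exp ((-(u * Complex.I)) * y) := by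
    intro y; congr 1; ring
  simp_rw [this]
  rw [integral_exp_mul_complex hc, norm_div]
  have h1 : ‖(-(u * Complex.I) : ℂ)‖ = |u| := by simp
  rw [h1, mul_div_cancel₀ _ (abs_ne_zero.2 hu)]
  refine (norm_sub_le _ _).trans ?_
  have h2 : ∀ y : ℝ, ‖Complex.exp ((-(u * Complex.I)) * y)‖ = 1 := by
    intro y
    rw [show (-(u * Complex.I) * y : ℂ) = ((-(u*y) : ℝ) : ℂ) * Complex.I by push_cast; ring]
    exact Complex.norm_exp_ofReal_mul_I _
  rw [h2, h2]; norm_num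

end WBE
end
end

section
open MeasureTheory ProbabilityTheory Filter
open scoped ENNReal NNReal
noncomputable section
namespace WBE
open Set Topology

lemma fk_mul_int (g : ℝ → ℝ) (hg : Measurable g) (M : ℝ) (hb : ∀ v, |g v| ≤ M) :
    Integrable (fun v => fk v * g v) := by
  refine fk_int.mul_bdd (c := M) hg.aestronglyMeasurable (Eventually.of_forall hb)

lemma meas_F (P : Measure ℝ) [IsProbabilityMeasure P] (x : ℝ) :
    Measurable fun v => P.real (Iic (x - v)) := by
  have h : Monotone fun v => P.real (Iic v) := fun a b hab =>
    measureReal_mono (Iic_subset_Iic.2 hab)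
  exact h.measurable.comp (measurable_const.sub measurable_id)

lemma Ioc_real (P : Measure ℝ) [IsProbabilityMeasure P] {a x : ℝ} (h : a ≤ x) :
    P.real (Ioc a x) = P.real (Iic x) - P.real (Iic a) := by
  have e : Ioc a x = Iic x \ Iic a := by ext y; simp [and_comm]
  rw [e, measureReal_diff (Iic_subset_Iic.2 h) measurableSet_Iic]

lemma smooth_bound (P Q : Measure ℝ) [IsProbabilityMeasure P] [IsProbabilityMeasure Q]
    (B : ℝ → ℝ) (hB : Integrable B) (hB0 : ∀ u, 0 ≤ B u)
    (h : ∀ u, |u| ≤ 1 → ‖charFun P u - charFun Q u‖ ≤ |u| * B u) (a x : ℝ) (hax : a ≤ x) :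
    |(∫ v, fk v * P.real (Ioc (a - v) (x - v))) - ∫ v, fk v * Q.real (Ioc (a - v) (x - v))|
      ≤ 2 * ∫ u, B u := by
  rw [← space_side, ← space_side, fourier_side, fourier_side]
  have hEc : Continuous fun u : ℝ => ∫ y in Ioc a x, Complex.exp (-(u * y) * Complex.I) := by
    refine continuous_of_dominated (bound := fun _ => 1) ?_ ?_ ?_ ?_
    · intro u; exact Continuous.aestronglyMeasurable (by fun_prop)
    · intro u
      refine Eventually.of_forall fun y => ?_
      rw [show (-(u * y) * Complex.I : ℂ) = ((-(u*y) : ℝ) : ℂ) * Complex.I by push_cast; ring]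
      exact (Complex.norm_exp_ofReal_mul_I _).le
    · exact integrable_const _
    · refine Eventually.of_forall fun y => ?_
      fun_prop
  have hint : ∀ (P : Measure ℝ) [IsProbabilityMeasure P], IntegrableOn (fun u : ℝ => (1 - |u|) *
        (charFun P u * ∫ y in Ioc a x, Complex.exp (-(u * y) * Complex.I)).re) (Ioc (-1) 1) := by
    intro P _
    refine (Continuous.integrableOn_Icc ?_).mono_set Ioc_subset_Icc_self
    exact (by fun_prop : Continuous fun p : ℝ => 1 - |p|).mul (Complex.continuous_re.comp
      (continuous_charFun.mul hEc))
  rw [← integral_sub (hint P) (hint Q), ← Real.norm_eq_abs]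
  refine (norm_integral_le_of_norm_le (g := fun u => 2 * B u) (hB.const_mul 2).integrableOn ?_).trans ?_
  · filter_upwards [ae_restrict_mem measurableSet_Ioc] with u hu
    have hu1 : |u| ≤ 1 := abs_le.2 ⟨hu.1.le, hu.2⟩
    rw [← mul_sub, ← Complex.sub_re, ← sub_mul, norm_mul]
    have h1 : ‖(1 - |u| : ℝ)‖ ≤ 1 := by
      rw [Real.norm_eq_abs, abs_le]
      have := abs_nonneg u
      constructor <;> linarith
    refine (mul_le_of_le_one_left (norm_nonneg _) h1).trans ?_
    refine (Complex.abs_re_le_norm _).trans ?_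
    rw [norm_mul]
    refine (mul_le_mul_of_nonneg_right (h u hu1) (norm_nonneg _)).trans ?_
    have := expInt_bound a x u hax
    calc _ = (|u| * ‖∫ y in Ioc a x, Complex.exp (-(u * y) * Complex.I)‖) * B u := by ring
      _ ≤ _ := mul_le_mul_of_nonneg_right this (hB0 u)
  · rw [integral_const_mul]
    refine mul_le_mul_of_nonneg_left ?_ (by norm_num)
    exact setIntegral_le_integral hB (Eventually.of_forall hB0)

lemma tendsto_Iic (P : Measure ℝ) [IsProbabilityMeasure P] :
    Tendsto (fun a => P.real (Iic a)) atBot (𝓝 0) := by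
  exact (tendsto_cdf_atBot P).congr (fun a => cdf_eq_real P a)

lemma smooth_bound' (P Q : Measure ℝ) [IsProbabilityMeasure P] [IsProbabilityMeasure Q]
    (B : ℝ → ℝ) (hB : Integrable B) (hB0 : ∀ u, 0 ≤ B u)
    (h : ∀ u, |u| ≤ 1 → ‖charFun P u - charFun Q u‖ ≤ |u| * B u) (x : ℝ) :
    |∫ v, fk v * (P.real (Iic (x - v)) - Q.real (Iic (x - v)))| ≤ 2 * ∫ u, B u := by
  have hF1 : ∀ (P : Measure ℝ) [IsProbabilityMeasure P] x v, |P.real (Iic (x - v))| ≤ 1 := by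
    intro P _ x v
    rw [abs_of_nonneg measureReal_nonneg]; exact measureReal_le_one
  have hi : ∀ (P : Measure ℝ) [IsProbabilityMeasure P] x, Integrable fun v => fk v * P.real (Iic (x - v)) :=
    fun P _ x => fk_mul_int _ (meas_F P x) 1 (hF1 P x)
  have hz : ∀ (P : Measure ℝ) [IsProbabilityMeasure P],
      Tendsto (fun a => ∫ v, fk v * P.real (Iic (a - v))) atBot (𝓝 0) := by
    intro P _
    rw [show (0:ℝ) = ∫ v : ℝ, fk v * 0 by simp]
    refine tendsto_integral_filter_of_dominated_convergence fk ?_ ?_ fk_int ?_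
    · exact Eventually.of_forall fun a => (hi P a).aestronglyMeasurable
    · refine Eventually.of_forall fun a => Eventually.of_forall fun v => ?_
      rw [norm_mul, Real.norm_of_nonneg (fk_nonneg v)]
      exact mul_le_of_le_one_right (fk_nonneg v) (hF1 P a v)
    · refine Eventually.of_forall fun v => ?_
      refine Tendsto.const_mul _ ((tendsto_Iic P).comp ?_)
      exact tendsto_atBot_add_const_right atBot (-v) tendsto_id
  have e : ∀ (P : Measure ℝ) [IsProbabilityMeasure P] a, a ≤ x → ∫ v, fk v * P.real (Ioc (a - v) (x - v))
      = (∫ v, fk v * P.real (Iic (x - v))) - ∫ v, fk v * P.real (Iic (a - v)) := by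
    intro P _ a hax
    rw [← integral_sub (hi P x) (hi P a)]
    refine integral_congr_ae (Eventually.of_forall fun v => ?_)
    simp only
    rw [Ioc_real P (by linarith)]; ring
  have lim : Tendsto (fun a => |(∫ v, fk v * P.real (Ioc (a - v) (x - v)))
      - ∫ v, fk v * Q.real (Ioc (a - v) (x - v))|) atBot
      (𝓝 |(∫ v, fk v * P.real (Iic (x - v))) - ∫ v, fk v * Q.real (Iic (x - v))|) := by
    have h1 := ((hz P).const_sub (∫ v, fk v * P.real (Iic (x - v)))).sub
      ((hz Q).const_sub (∫ v, fk v * Q.real (Iic (x - v))))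
    simp only [sub_zero] at h1
    refine h1.abs.congr' ?_
    filter_upwards [eventually_le_atBot x] with a ha
    rw [e P a ha, e Q a ha]
  have h3 := le_of_tendsto lim (b := 2 * ∫ u, B u) (by
    filter_upwards [eventually_le_atBot x] with a ha
    exact smooth_bound P Q B hB hB0 h a x ha)
  simp_rw [mul_sub]
  rwa [integral_sub (hi P x) (hi Q x)]

lemma fk_tail : ∃ A : ℝ, 0 < A ∧ ∫ v in (Icc (-A) A)ᶜ, fk v ≤ (∫ v, fk v) / 4 := by
  have h1 : Tendsto (fun A : ℝ => ∫ v in Icc (-A) A, fk v) atTop (𝓝 (∫ v, fk v)) := by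
    exact (aecover_Icc tendsto_neg_atTop_atBot tendsto_id).integral_tendsto_of_countably_generated fk_int
  have h2 := h1.eventually (eventually_gt_nhds (show (∫ v, fk v) * (3/4) < ∫ v, fk v by
    have := fk_pos; linarith))
  obtain ⟨A, hA, hA0⟩ := (h2.and (eventually_gt_atTop 0)).exists
  refine ⟨A, hA0, ?_⟩
  have := integral_add_compl (μ := volume) (f := fk) (s := Icc (-A) A) measurableSet_Icc fk_int
  linarith

/-- Esseen at scale 1. -/
lemma esseen_one : ∃ C0 : ℝ, 0 < C0 ∧ ∀ (P Q : Measure ℝ) [IsProbabilityMeasure P] [IsProbabilityMeasure Q]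
    (B : ℝ → ℝ), Integrable B → (∀ u, 0 ≤ B u) →
    (∀ u, |u| ≤ 1 → ‖charFun P u - charFun Q u‖ ≤ |u| * B u) → ∀ L : ℝ,
    (∀ x y, x ≤ y → Q.real (Iic y) - Q.real (Iic x) ≤ L * (y - x)) →
    ∀ x, |P.real (Iic x) - Q.real (Iic x)| ≤ C0 * ((∫ u, B u) + L) := by
  obtain ⟨A, hA, htail⟩ := fk_tail
  set k0 := ∫ v, fk v with hk0
  have hk : 0 < k0 := fk_pos
  refine ⟨4 / k0 + 4 * A, by positivity, ?_⟩
  intro P Q _ _ B hB hB0 h L hL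
  have hL0 : 0 ≤ L := by
    have := hL 0 1 zero_le_one
    have h2 : Q.real (Iic 0) ≤ Q.real (Iic 1) := measureReal_mono (Iic_subset_Iic.2 zero_le_one)
    linarith
  set Δ : ℝ → ℝ := fun x => P.real (Iic x) - Q.real (Iic x) with hΔ
  have hI0 : 0 ≤ ∫ u, B u := integral_nonneg hB0
  have hb : ∀ x, |Δ x| ≤ 1 := by
    intro x
    have h1 : 0 ≤ P.real (Iic x) := measureReal_nonneg
    have h2 : P.real (Iic x) ≤ 1 := measureReal_le_one
    have h3 : 0 ≤ Q.real (Iic x) := measureReal_nonneg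
    have h4 : Q.real (Iic x) ≤ 1 := measureReal_le_one
    rw [abs_le]; constructor <;> simp only [hΔ] <;> linarith
  have hbdd : BddAbove (range fun x => |Δ x|) := ⟨1, by rintro _ ⟨x, rfl⟩; exact hb x⟩
  set S := ⨆ x, |Δ x| with hS
  have hle : ∀ x, |Δ x| ≤ S := fun x => le_ciSup hbdd x
  have hS0 : 0 ≤ S := (abs_nonneg _).trans (hle 0)
  have hPm : Monotone fun x => P.real (Iic x) := fun a b hab => measureReal_mono (Iic_subset_Iic.2 hab)
  have hmeas : ∀ x, Measurable fun v => Δ (x - v) := fun x => (meas_F P x).sub (meas_F Q x)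
  have hsm := smooth_bound' P Q B hB hB0 h
  -- key inequality
  have key : ∀ x0, |Δ x0| ≤ 2 * (∫ u, B u) / k0 + 2 * A * L + S / 2 := by
    have core : ∀ (x c : ℝ) (ε : ℝ), (ε = 1 ∨ ε = -1) →
        (∀ v ∈ Icc (-A) A, c ≤ ε * Δ (x - v)) → c ≤ S → c ≤ 2 * (∫ u, B u) / k0 + S / 2 := by
      intro x c ε hε hc hcS
      have h1 : ε * ∫ v, fk v * Δ (x - v) ≤ 2 * ∫ u, B u := by
        refine le_trans ?_ (hsm x)
        rcases hε with rfl | rfl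
        · simpa using le_abs_self _
        · simpa using neg_le_abs _
      have hi : Integrable fun v => fk v * (ε * Δ (x - v)) := by
        refine fk_mul_int _ ((hmeas x).const_mul ε) 1 fun v => ?_
        rcases hε with rfl | rfl
        · simpa using hb _
        · simpa using hb _
      have h2 : ε * ∫ v, fk v * Δ (x - v) = (∫ v in Icc (-A) A, fk v * (ε * Δ (x - v)))
         + ∫ v in (Icc (-A) A)ᶜ, fk v * (ε * Δ (x - v)) := by
        rw [integral_add_compl measurableSet_Icc hi, ← integral_const_mul]
        congr 1; ext v; ring
      have h3 : (∫ v in Icc (-A) A, fk v) * c ≤ ∫ v in Icc (-A) A, fk v * (ε * Δ (x - v)) := by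
        rw [← integral_mul_const]
        refine setIntegral_mono_on (fk_int.integrableOn.mul_const c) hi.integrableOn measurableSet_Icc ?_
        intro v hv
        exact mul_le_mul_of_nonneg_left (hc v hv) (fk_nonneg v)
      have h4 : (∫ v in (Icc (-A) A)ᶜ, fk v) * (-S) ≤ ∫ v in (Icc (-A) A)ᶜ, fk v * (ε * Δ (x - v)) := by
        rw [← integral_mul_const]
        refine setIntegral_mono_on (fk_int.integrableOn.mul_const _) hi.integrableOn measurableSet_Icc.compl ?_
        intro v hv
        refine mul_le_mul_of_nonneg_left ?_ (fk_nonneg v)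
        have := hle (x - v)
        rw [abs_le] at this
        rcases hε with rfl | rfl <;> linarith
      have h5 := integral_add_compl (μ := volume) (f := fk) (s := Icc (-A) A) measurableSet_Icc fk_int
      set t1 := ∫ v in (Icc (-A) A)ᶜ, fk v
      have h6 : (∫ v in Icc (-A) A, fk v) = k0 - t1 := by rw [hk0]; linarith
      rw [h6] at h3
      have h7 : k0 * c ≤ 2 * (∫ u, B u) + t1 * (c + S) := by nlinarith
      have h8 : t1 * (c + S) ≤ k0 / 4 * (2 * S) := by
        have ht1 : 0 ≤ t1 := setIntegral_nonneg measurableSet_Icc.compl fun v _ => fk_nonneg v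
        calc t1 * (c + S) ≤ t1 * (2 * S) := mul_le_mul_of_nonneg_left (by linarith) ht1
          _ ≤ _ := mul_le_mul_of_nonneg_right htail (by linarith)
      have h9 : k0 * c ≤ k0 * (2 * (∫ u, B u) / k0 + S / 2) := by
        rw [mul_add, mul_div_cancel₀ _ hk.ne']
        linarith
      exact le_of_mul_le_mul_left h9 hk
    intro x0
    rcases le_total 0 (Δ x0) with h0 | h0
    · rw [abs_of_nonneg h0]
      have := core (x0 + A) (Δ x0 - 2 * A * L) 1 (Or.inl rfl) ?_ ?_
      · linarith
      · intro v hv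
        have h1 : x0 ≤ x0 + A - v := by linarith [hv.2]
        have h2 := hPm h1
        have h3 := hL _ _ h1
        simp only [hΔ] at *
        nlinarith [hv.1]
      · have := le_abs_self (Δ x0); have := hle x0
        have : 0 ≤ 2 * A * L := by positivity
        linarith
    · rw [abs_of_nonpos h0]
      have := core (x0 - A) (-Δ x0 - 2 * A * L) (-1) (Or.inr rfl) ?_ ?_
      · linarith
      · intro v hv
        have h1 : x0 - A - v ≤ x0 := by linarith [hv.1]
        have h2 := hPm h1
        have h3 := hL _ _ h1
        simp only [hΔ] at *
        nlinarith [hv.2]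
      · have := neg_le_abs (Δ x0); have := hle x0
        have : 0 ≤ 2 * A * L := by positivity
        linarith
  have hfin : S ≤ 2 * (∫ u, B u) / k0 + 2 * A * L + S / 2 := ciSup_le key
  intro x
  refine (hle x).trans ?_
  have e1 : (4 / k0 + 4 * A) * ((∫ u, B u) + L) = 2 * (2 * (∫ u, B u) / k0 + 2 * A * L)
     + 4 / k0 * L + 4 * A * ∫ u, B u := by ring
  rw [e1]
  have : 0 ≤ 4 / k0 * L := by positivity
  have : 0 ≤ 4 * A * ∫ u, B u := by positivity
  linarith

/-- Esseen at scale `T`. -/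
lemma esseen_T : ∃ C0 : ℝ, 0 < C0 ∧ ∀ (P Q : Measure ℝ) [IsProbabilityMeasure P] [IsProbabilityMeasure Q]
    (B : ℝ → ℝ) (T : ℝ), 0 < T → Integrable B → (∀ u, 0 ≤ B u) →
    (∀ u, |u| ≤ T → ‖charFun P u - charFun Q u‖ ≤ |u| * B u) →
    (∀ x y, x ≤ y → Q.real (Iic y) - Q.real (Iic x) ≤ y - x) →
    ∀ x, |P.real (Iic x) - Q.real (Iic x)| ≤ C0 * ((∫ u, B u) + 1 / T) := by
  obtain ⟨C0, h0, h⟩ := esseen_one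
  refine ⟨C0, h0, ?_⟩
  intro P Q _ _ B T hT hB hB0 hc hL x
  have hm : Measurable fun x : ℝ => T * x := measurable_const_mul T
  have : IsProbabilityMeasure (P.map (fun x => T * x)) := Measure.isProbabilityMeasure_map hm.aemeasurable
  have : IsProbabilityMeasure (Q.map (fun x => T * x)) := Measure.isProbabilityMeasure_map hm.aemeasurable
  have hpre : ∀ y, (fun x : ℝ => T * x) ⁻¹' (Iic y) = Iic (y / T) := by
    intro y; ext z; simp [le_div_iff₀ hT, mul_comm]
  have hreal : ∀ (P : Measure ℝ) y, (P.map (fun x => T * x)).real (Iic y) = P.real (Iic (y / T)) := by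
    intro P y
    rw [map_measureReal_apply hm measurableSet_Iic, hpre]
  have hch : ∀ (P : Measure ℝ) u, charFun (P.map (fun x => T * x)) u = charFun P (T * u) := by
    intro P u
    exact charFun_map_mul T u
  have := h (P.map (fun x => T * x)) (Q.map (fun x => T * x)) (fun u => T * B (T * u))
    ((hB.comp_mul_left' hT.ne').const_mul T) (fun u => mul_nonneg hT.le (hB0 _)) ?_ (1 / T) ?_ (T * x)
  · rw [hreal, hreal, mul_div_cancel_left₀ _ hT.ne', integral_const_mul, Measure.integral_comp_mul_left,
      abs_of_pos (inv_pos.2 hT), smul_eq_mul, mul_inv_cancel_left₀ hT.ne'] at this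
    exact this
  · intro u hu
    rw [hch, hch]
    refine (hc (T * u) ?_).trans (le_of_eq ?_)
    · rw [abs_mul, abs_of_pos hT]; nlinarith
    · rw [abs_mul, abs_of_pos hT]; ring
  · intro x y hxy
    rw [hreal, hreal]
    refine (hL _ _ (div_le_div_of_nonneg_right hxy hT.le)).trans (le_of_eq ?_)
    ring

end WBE
end
end

section
open MeasureTheory ProbabilityTheory Filter
open scoped ENNReal NNReal
noncomputable section
namespace WBE
open Set Topology

lemma fub (P : Measure ℝ) [IsProbabilityMeasure P] (R : Set ℝ) (g : ℝ → ℝ)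
    (hg : IntegrableOn g R) (A : Set (ℝ × ℝ)) (hA : MeasurableSet A) :
    (∫ x, (∫ y in R, A.indicator (fun _ => (1:ℝ)) (x, y) * g y) ∂P)
      = ∫ y in R, g y * P.real {x | (x, y) ∈ A} := by
  rw [integral_integral_swap]
  · refine integral_congr_ae (Eventually.of_forall fun y => ?_)
    simp only
    rw [integral_mul_const, mul_comm]
    congr 1
    have hm : MeasurableSet {x : ℝ | (x, y) ∈ A} := (measurable_id.prodMk measurable_const) hA
    rw [← integral_indicator_one hm]
    rfl
  · have h1 : Integrable (fun p : ℝ × ℝ => g p.2) (P.prod (volume.restrict R)) := by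
      simpa using Integrable.comp_snd (μ := P) (ν := volume.restrict R) hg
    refine (h1.bdd_mul (c := 1) (f := fun p => A.indicator (fun _ => (1:ℝ)) p) ?_ ?_)
    · exact (measurable_const.indicator hA).aestronglyMeasurable
    · refine Eventually.of_forall fun p => ?_
      by_cases h : p ∈ A <;> simp [h]

lemma untilt_aux (P1 P2 : Measure ℝ) [IsProbabilityMeasure P1] [IsProbabilityMeasure P2] (D : ℝ)
    (hD : ∀ x, |P1.real (Iic x) - P2.real (Iic x)| ≤ D) (a b : ℝ) (h : a ≤ b) :
    |P1.real (Ioc a b) - P2.real (Ioc a b)| ≤ 2 * D := by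
  rw [Ioc_real _ h, Ioc_real _ h]
  have h1 := hD a
  have h2 := hD b
  rw [abs_le] at *
  constructor <;> linarith

lemma meas_Ioc_l (P : Measure ℝ) [IsProbabilityMeasure P] (t : ℝ) : Measurable fun y => P.real (Ioc t y) := by
  have : Monotone fun y => P.real (Ioc t y) := fun a b hab => measureReal_mono (Ioc_subset_Ioc_right hab)
  exact this.measurable
lemma meas_Ioc_r (P : Measure ℝ) [IsProbabilityMeasure P] (t : ℝ) : Measurable fun y => P.real (Ioc y t) := by
  have : Antitone fun y => P.real (Ioc y t) := fun a b hab => measureReal_mono (Ioc_subset_Ioc_left hab)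
  exact this.measurable

lemma untiltR_eq (P : Measure ℝ) [IsProbabilityMeasure P] (t : ℝ) :
    ∫ x in Ioi t, Real.exp (-x) ∂P = ∫ y in Ioi t, Real.exp (-y) * P.real (Ioc t y) := by
  have hA : MeasurableSet {p : ℝ × ℝ | t < p.1 ∧ p.1 ≤ p.2} :=
    (measurableSet_lt measurable_const measurable_fst).inter (measurableSet_le measurable_fst measurable_snd)
  have := fub P (Ioi t) (fun y => Real.exp (-y)) (integrableOn_exp_neg_Ioi t) _ hA
  refine Eq.trans ?_ (this.trans ?_)
  · rw [← integral_indicator measurableSet_Ioi]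
    refine integral_congr_ae (Eventually.of_forall fun x => ?_)
    simp only
    by_cases hx : t < x
    · rw [indicator_of_mem (by exact hx)]
      rw [← integral_indicator measurableSet_Ioi]
      rw [← integral_exp_neg_Ioi x, ← integral_Ici_eq_integral_Ioi, ← integral_indicator measurableSet_Ici]
      congr 1; ext y
      simp only [indicator, mem_Ioi, mem_Ici, mem_setOf_eq, hx, true_and]
      by_cases h1 : x ≤ y
      · simp [h1, hx.trans_le h1]
      · simp [h1]
    · rw [indicator_of_notMem (by exact hx)]
      simp [hx]
  · rfl

lemma untiltL_eq (P : Measure ℝ) [IsProbabilityMeasure P] (t : ℝ) :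
    ∫ x in Iic t, Real.exp x ∂P = ∫ y in Iic t, Real.exp y * P.real (Ioc y t) := by
  have hA : MeasurableSet {p : ℝ × ℝ | p.2 < p.1 ∧ p.1 ≤ t} :=
    (measurableSet_lt measurable_snd measurable_fst).inter (measurableSet_le measurable_fst measurable_const)
  have := fub P (Iic t) (fun y => Real.exp y) (integrableOn_exp_Iic t) _ hA
  refine Eq.trans ?_ (this.trans ?_)
  · rw [← integral_indicator measurableSet_Iic]
    refine integral_congr_ae (Eventually.of_forall fun x => ?_)
    simp only
    by_cases hx : x ≤ t
    · rw [indicator_of_mem (by exact hx)]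
      rw [← integral_indicator measurableSet_Iic]
      rw [← integral_exp_Iic x, integral_Iic_eq_integral_Iio, ← integral_indicator measurableSet_Iio]
      congr 1; ext y
      simp only [indicator, mem_Iio, mem_Iic, mem_setOf_eq, hx, and_true]
      by_cases h1 : y < x
      · simp [h1, h1.le.trans hx]
      · simp [h1]
    · rw [indicator_of_notMem (by exact hx)]
      simp [hx]
  · rfl

lemma untiltR (P1 P2 : Measure ℝ) [IsProbabilityMeasure P1] [IsProbabilityMeasure P2] (D : ℝ)
    (hD : ∀ x, |P1.real (Iic x) - P2.real (Iic x)| ≤ D) (t : ℝ) :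
    |(∫ x in Ioi t, Real.exp (-x) ∂P1) - ∫ x in Ioi t, Real.exp (-x) ∂P2| ≤ 2 * D * Real.exp (-t) := by
  have hi : ∀ (P : Measure ℝ) [IsProbabilityMeasure P],
      IntegrableOn (fun y => Real.exp (-y) * P.real (Ioc t y)) (Ioi t) := by
    intro P _
    refine Integrable.mul_bdd (c := 1) (integrableOn_exp_neg_Ioi t) (meas_Ioc_l P t).aestronglyMeasurable ?_
    refine Eventually.of_forall fun y => ?_
    rw [Real.norm_of_nonneg measureReal_nonneg]; exact measureReal_le_one
  rw [untiltR_eq, untiltR_eq, ← integral_sub (hi P1) (hi P2), ← Real.norm_eq_abs]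
  refine (norm_integral_le_of_norm_le (g := fun y => 2 * D * Real.exp (-y))
    ((integrableOn_exp_neg_Ioi t).const_mul _) ?_).trans ?_
  · filter_upwards [ae_restrict_mem measurableSet_Ioi] with y hy
    rw [← mul_sub, norm_mul, Real.norm_of_nonneg (Real.exp_pos _).le, mul_comm]
    exact mul_le_mul_of_nonneg_right (untilt_aux P1 P2 D hD t y (le_of_lt hy)) (Real.exp_pos _).le
  · rw [integral_const_mul, integral_exp_neg_Ioi]

lemma untiltL (P1 P2 : Measure ℝ) [IsProbabilityMeasure P1] [IsProbabilityMeasure P2] (D : ℝ)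
    (hD : ∀ x, |P1.real (Iic x) - P2.real (Iic x)| ≤ D) (t : ℝ) :
    |(∫ x in Iic t, Real.exp x ∂P1) - ∫ x in Iic t, Real.exp x ∂P2| ≤ 2 * D * Real.exp t := by
  have hi : ∀ (P : Measure ℝ) [IsProbabilityMeasure P],
      IntegrableOn (fun y => Real.exp y * P.real (Ioc y t)) (Iic t) := by
    intro P _
    refine Integrable.mul_bdd (c := 1) (integrableOn_exp_Iic t) (meas_Ioc_r P t).aestronglyMeasurable ?_
    refine Eventually.of_forall fun y => ?_
    rw [Real.norm_of_nonneg measureReal_nonneg]; exact measureReal_le_one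
  rw [untiltL_eq, untiltL_eq, ← integral_sub (hi P1) (hi P2), ← Real.norm_eq_abs]
  refine (norm_integral_le_of_norm_le (g := fun y => 2 * D * Real.exp y)
    ((integrableOn_exp_Iic t).const_mul _) ?_).trans ?_
  · filter_upwards [ae_restrict_mem measurableSet_Iic] with y hy
    rw [← mul_sub, norm_mul, Real.norm_of_nonneg (Real.exp_pos _).le, mul_comm]
    exact mul_le_mul_of_nonneg_right (untilt_aux P1 P2 D hD y t hy) (Real.exp_pos _).le
  · rw [integral_const_mul, integral_exp_Iic]

end WBE
end
end

section
open MeasureTheory ProbabilityTheory Filter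
open scoped ENNReal NNReal
noncomputable section
namespace WBE
open Set Topology

lemma exp_sub_one_le (x : ℂ) : ‖Complex.exp x - 1‖ ≤ ‖x‖ * Real.exp ‖x‖ := by
  have := Complex.norm_exp_sub_sum_le_norm_mul_exp x 1
  simpa using this

lemma charFun_tilt (P : Measure ℝ) (θ u : ℝ) :
    charFun (P.tilted (fun x => θ * x)) u
      = complexMGF id P (θ + u * Complex.I) / complexMGF id P θ := by
  rw [charFun_apply_real, integral_tilted, complexMGF_ofReal, mgf, complexMGF, ← integral_div]
  refine integral_congr_ae (Eventually.of_forall fun x => ?_)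
  simp only [id]
  rw [Complex.real_smul, Complex.ofReal_div, Complex.ofReal_exp, div_mul_eq_mul_div, ← Complex.exp_add]
  congr 2
  push_cast
  ring

lemma gauss_tilt (θ : ℝ) : (gaussianReal 0 1).tilted (fun x => θ * x) = gaussianReal θ 1 := by
  have : IsProbabilityMeasure ((gaussianReal 0 1).tilted (fun x => θ * x)) :=
    isProbabilityMeasure_tilted (integrable_exp_mul_gaussianReal θ)
  apply Measure.ext_of_charFun
  ext u
  rw [charFun_tilt, complexMGF_id_gaussianReal, complexMGF_id_gaussianReal, charFun_gaussianReal,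
    ← Complex.exp_sub]
  congr 1
  push_cast
  linear_combination (u^2/2 : ℂ) * Complex.I_sq

lemma gauss_lip (θ : ℝ) (x y : ℝ) (h : x ≤ y) :
    (gaussianReal θ 1).real (Iic y) - (gaussianReal θ 1).real (Iic x) ≤ y - x := by
  rw [← Ioc_real _ h, measureReal_def, gaussianReal_apply_eq_integral _ one_ne_zero, ENNReal.toReal_ofReal]
  · have : ∫ z in Ioc x y, gaussianPDFReal θ 1 z ≤ ∫ z in Ioc x y, (1:ℝ) := by
      refine setIntegral_mono_on (integrable_gaussianPDFReal θ 1).integrableOn (by simp) measurableSet_Ioc ?_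
      intro z _
      rw [gaussianPDFReal_def]
      have h1 : (√(2 * Real.pi * ((1:ℝ≥0):ℝ)))⁻¹ ≤ 1 := by
        apply inv_le_one_of_one_le₀
        rw [Real.one_le_sqrt]
        simp; linarith [Real.pi_gt_three]
      have h2 : Real.exp (-(z - θ) ^ 2 / (2 * ((1:ℝ≥0):ℝ))) ≤ 1 := by
        apply Real.exp_le_one_iff.2
        simp only [NNReal.coe_one]
        nlinarith [sq_nonneg (z - θ)]
      calc _ ≤ (1:ℝ) * 1 := mul_le_mul h1 h2 (Real.exp_pos _).le (by norm_num)
        _ = 1 := by norm_num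
    simpa [h] using this
  · exact setIntegral_nonneg measurableSet_Ioc fun z _ => gaussianPDFReal_nonneg _ _ _

lemma norm_w_le (θ u : ℝ) (hθ : |θ| = 1) : ‖(θ + u * Complex.I : ℂ)‖ ≤ |u| + 1 := by
  refine (norm_add_le _ _).trans ?_
  simp [hθ, add_comm]

lemma delta_bound (M R σ : ℝ) (hσ : 1 ≤ σ) (hM : 0 ≤ M) (E : ℂ → ℂ) (hE : DifferentiableOn ℂ E (Metric.ball 0 R))
    (hb : ∀ w ∈ Metric.ball (0:ℂ) R, ‖E w‖ ≤ M * ‖w‖ ^ 3 / σ) (θ u : ℝ) (hθ : |θ| = 1)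
    (hu : |u| + 2 < R) :
    ‖E (θ + u * Complex.I) - E θ‖ ≤ |u| * (M * (|u| + 2) ^ 3 / σ) := by
  have hσ0 : 0 < σ := by linarith
  have h := Convex.norm_image_sub_le_of_norm_deriv_le (f := E) (s := Metric.closedBall (0:ℂ) (|u| + 1))
    (x := (θ:ℂ)) (y := θ + u * Complex.I) (C := M * (|u| + 2) ^ 3 / σ) ?_ ?_ (convex_closedBall _ _) ?_ ?_
  · refine h.trans (le_of_eq ?_)
    simp [mul_comm]
  · intro w hw
    rw [mem_closedBall_zero_iff] at hw
    refine hE.differentiableAt (Metric.isOpen_ball.mem_nhds ?_)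
    rw [mem_ball_zero_iff]; linarith
  · intro w hw
    rw [mem_closedBall_zero_iff] at hw
    have h1 := Complex.norm_deriv_le_of_forall_mem_sphere_norm_le (c := w) (R := 1)
      (C := M * (|u| + 2) ^ 3 / σ) (f := E) one_pos ?_ ?_
    · simpa using h1
    · refine DifferentiableOn.diffContOnCl (hE.mono ?_)
      rw [closure_ball _ one_ne_zero]
      intro v hv
      rw [mem_ball_zero_iff]
      rw [mem_closedBall_iff_norm] at hv
      have := norm_le_norm_add_norm_sub w v
      rw [norm_sub_rev] at this
      linarith
    · intro v hv
      rw [mem_sphere_iff_norm] at hv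
      have := norm_le_norm_add_norm_sub w v
      rw [norm_sub_rev] at this
      refine (hb v ?_).trans ?_
      · rw [mem_ball_zero_iff]; linarith
      · gcongr; linarith
  · rw [mem_closedBall_zero_iff]; simp [hθ]
  · rw [mem_closedBall_zero_iff]; exact norm_w_le θ u hθ

lemma poly_exp (u : ℝ) : (|u| + 2) ^ 3 * Real.exp (-u^2/4) ≤ 6 * Real.exp 4 * Real.exp (-(1/8) * u ^ 2) := by
  have h := Real.pow_div_factorial_le_exp (|u| + 2) (by positivity) 3
  have h3 : ((3:ℕ).factorial : ℝ) = 6 := by norm_num [Nat.factorial]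
  rw [h3, div_le_iff₀ (by norm_num)] at h
  calc _ ≤ (Real.exp (|u| + 2) * 6) * Real.exp (-u^2/4) := by gcongr
    _ = 6 * Real.exp (|u| + 2 + (-u^2/4)) := by rw [Real.exp_add _ (-u^2/4)]; ring
    _ ≤ 6 * Real.exp (4 + (-(1/8) * u ^ 2)) := by
        gcongr 6 * Real.exp ?_
        nlinarith [sq_nonneg (|u| - 4), sq_abs u]
    _ = _ := by rw [Real.exp_add]; ring

lemma tilt_bound (M r : ℝ) (hM : 0 ≤ M) (hr : 0 < r) : ∃ D σ0 : ℝ, 0 ≤ D ∧ 1 ≤ σ0 ∧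
    ∀ (P : Measure ℝ) [IsProbabilityMeasure P] (σ : ℝ) (E : ℂ → ℂ), σ0 ≤ σ →
    (∀ θ : ℝ, Integrable (fun x => Real.exp (θ * x)) P) →
    DifferentiableOn ℂ E (Metric.ball 0 (r * σ)) →
    (∀ w ∈ Metric.ball (0:ℂ) (r * σ), ‖E w‖ ≤ M * ‖w‖ ^ 3 / σ) →
    (∀ w ∈ Metric.ball (0:ℂ) (r * σ), complexMGF id P w = Complex.exp (w ^ 2 / 2 + E w)) →
    ∀ θ : ℝ, |θ| = 1 → (∀ x, |(P.tilted (fun x => θ * x)).real (Iic x)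
        - ((gaussianReal 0 1).tilted (fun x => θ * x)).real (Iic x)| ≤ D / σ) ∧
      |mgf id P θ - mgf id (gaussianReal 0 1) θ| ≤ D / σ := by
  obtain ⟨C0, hC0, hess⟩ := esseen_T
  set r' := min (r / 2) (1 / (16 * (M + 1))) with hr'
  have hr'0 : 0 < r' := by positivity
  have hr'1 : r' ≤ r / 2 := min_le_left _ _
  have hr'2 : 16 * (M * r') ≤ 1 := by
    have : r' ≤ 1 / (16 * (M + 1)) := min_le_right _ _
    rw [le_div_iff₀ (by positivity)] at this
    nlinarith
  set I0 := ∫ u : ℝ, Real.exp (-(1/8) * u ^ 2) with hI0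
  have hI0' : 0 ≤ I0 := integral_nonneg fun u => (Real.exp_pos _).le
  set K := M * Real.exp (5 * M) * (6 * Real.exp 4) with hK
  have hK0 : 0 ≤ K := by positivity
  set Z := Real.exp (1/2) * (M * Real.exp M) with hZ
  have hZ0 : 0 ≤ Z := by positivity
  refine ⟨C0 * (K * I0 + 1 / r') + Z, max 1 (4 / r + 1), by positivity, le_max_left _ _, ?_⟩
  intro P _ σ E hσ0 hint hE hEb hmgf θ hθ
  have hσ1 : 1 ≤ σ := (le_max_left _ _).trans hσ0
  have hσp : 0 < σ := by linarith
  have hσ2 : 4 < r * σ := by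
    have h : 4 / r < σ := lt_of_lt_of_le (by linarith) ((le_max_right 1 (4 / r + 1)).trans hσ0)
    rw [div_lt_iff₀ hr] at h
    linarith
  have hθb : (θ : ℂ) ∈ Metric.ball (0:ℂ) (r * σ) := by
    rw [mem_ball_zero_iff]; simp [hθ]; linarith
  have hEθ : ‖E θ‖ ≤ M / σ := by
    have := hEb θ hθb
    simpa [hθ] using this
  have hMσ : M / σ ≤ M := div_le_self hM hσ1
  have hZb : |mgf id P θ - mgf id (gaussianReal 0 1) θ| ≤ Z / σ := by
    have h1 : ((mgf id P θ - mgf id (gaussianReal 0 1) θ : ℝ) : ℂ)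
        = Complex.exp (θ ^ 2 / 2) * (Complex.exp (E θ) - 1) := by
      push_cast
      rw [← complexMGF_ofReal, ← complexMGF_ofReal, hmgf θ hθb, complexMGF_id_gaussianReal, Complex.exp_add]
      simp; ring
    have h2 : (θ : ℂ) ^ 2 / 2 = ((1/2 : ℝ) : ℂ) := by
      have : θ ^ 2 = 1 := by rw [← sq_abs, hθ]; norm_num
      have : (θ : ℂ) ^ 2 = 1 := by exact_mod_cast this
      rw [this]; simp
    rw [← Real.norm_eq_abs, ← Complex.norm_real, h1, h2, norm_mul, ← Complex.ofReal_exp, Complex.norm_real,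
      Real.norm_of_nonneg (Real.exp_pos _).le, hZ, mul_div_assoc]
    refine mul_le_mul_of_nonneg_left ((exp_sub_one_le _).trans ?_) (Real.exp_pos _).le
    calc _ ≤ (M / σ) * Real.exp M := by
          refine mul_le_mul hEθ (Real.exp_le_exp.2 (hEθ.trans hMσ)) (Real.exp_pos _).le (by positivity)
      _ = _ := by ring
  refine ⟨?_, hZb.trans ?_⟩
  swap
  · gcongr
    have : 0 ≤ C0 * (K * I0 + 1 / r') := by positivity
    linarith
  have : IsProbabilityMeasure (P.tilted (fun x => θ * x)) := isProbabilityMeasure_tilted (hint θ)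
  have : IsProbabilityMeasure ((gaussianReal 0 1).tilted (fun x => θ * x)) := by
    rw [gauss_tilt]; infer_instance
  have hfin := hess (P.tilted (fun x => θ * x)) ((gaussianReal 0 1).tilted (fun x => θ * x))
    (fun u => K / σ * Real.exp (-(1/8) * u ^ 2)) (r' * σ) (by positivity)
    ((integrable_exp_neg_mul_sq (by norm_num)).const_mul _) (fun u => by positivity) ?_ ?_
  · intro x
    refine (hfin x).trans ?_
    rw [integral_const_mul, ← hI0]
    have e1 : C0 * (K / σ * I0 + 1 / (r' * σ)) = C0 * (K * I0 + 1 / r') / σ := by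
      field_simp
    rw [e1]
    gcongr
    linarith
  · intro u hu
    have hu2 : |u| + 2 < r * σ := by nlinarith
    have hwb : (θ + u * Complex.I : ℂ) ∈ Metric.ball (0:ℂ) (r * σ) := by
      rw [mem_ball_zero_iff]; linarith [norm_w_le θ u hθ]
    have hd := delta_bound M (r * σ) σ hσ1 hM E hE hEb θ u hθ hu2
    set δ := E (θ + u * Complex.I) - E θ with hδ
    have hd2 : ‖δ‖ ≤ u ^ 2 / 4 + 5 * M := by
      have h1 : ‖E (θ + u * Complex.I)‖ ≤ M * (|u| + 1) ^ 3 / σ := by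
        refine (hEb _ hwb).trans ?_
        gcongr
        exact norm_w_le θ u hθ
      have h2 : M * (|u| + 1) ^ 3 / σ ≤ u ^ 2 / 4 + 4 * M := by
        rw [div_le_iff₀ hσp]
        have hx := abs_nonneg u
        have h3 : (|u| + 1) ^ 3 ≤ 4 * (|u| ^ 3 + 1) := by nlinarith [mul_nonneg (add_nonneg hx zero_le_one) (sq_nonneg (|u| - 1))]
        have h4 : |u| ^ 3 ≤ r' * σ * u ^ 2 := by
          rw [pow_succ, sq_abs, mul_comm]
          exact mul_le_mul_of_nonneg_right hu (sq_nonneg _)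
        calc M * (|u| + 1) ^ 3 ≤ M * (4 * (r' * σ * u ^ 2 + 1)) := by gcongr; linarith
          _ = (16 * (M * r')) * (σ * u ^ 2 / 4) + 4 * M * 1 := by ring
          _ ≤ 1 * (σ * u ^ 2 / 4) + 4 * M * σ := by gcongr
          _ = _ := by ring
      calc ‖δ‖ ≤ ‖E (θ + u * Complex.I)‖ + ‖E θ‖ := norm_sub_le _ _
        _ ≤ _ := by linarith
    have hcf : charFun (P.tilted (fun x => θ * x)) u - charFun ((gaussianReal 0 1).tilted (fun x => θ * x)) u
        = Complex.exp (u * θ * Complex.I - u ^ 2 / 2) * (Complex.exp δ - 1) := by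
      rw [gauss_tilt, charFun_gaussianReal, charFun_tilt, hmgf _ hwb, hmgf _ hθb, ← Complex.exp_sub,
        mul_sub, ← Complex.exp_add, mul_one]
      congr 2
      · linear_combination (u^2/2 : ℂ) * Complex.I_sq
      · simp
    rw [hcf, norm_mul, Complex.norm_exp]
    have hre : (u * θ * Complex.I - u ^ 2 / 2 : ℂ).re = - u ^ 2 / 2 := by
      rw [show (u * θ * Complex.I - u ^ 2 / 2 : ℂ) = ((u * θ : ℝ) : ℂ) * Complex.I - ((u ^ 2 / 2 : ℝ) : ℂ) by push_cast; ring]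
      rw [Complex.sub_re, Complex.re_ofReal_mul, Complex.I_re, Complex.ofReal_re]; ring
    rw [hre]
    calc _ ≤ Real.exp (-u^2/2) * ((|u| * (M * (|u| + 2) ^ 3 / σ)) * Real.exp (u ^ 2 / 4 + 5 * M)) := by
          gcongr
          exact (exp_sub_one_le δ).trans (by gcongr)
      _ = |u| * (M * Real.exp (5 * M) / σ) * ((|u| + 2) ^ 3 * Real.exp (-u^2/4)) := by
          rw [show -u^2/4 = -u^2/2 + u^2/4 by ring, Real.exp_add, Real.exp_add]; ring
      _ ≤ |u| * (M * Real.exp (5 * M) / σ) * (6 * Real.exp 4 * Real.exp (-(1/8) * u ^ 2)) := by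
          exact mul_le_mul_of_nonneg_left (poly_exp u) (by positivity)
      _ = _ := by rw [hK]; ring
  · intro x y hxy
    rw [gauss_tilt]
    exact gauss_lip θ x y hxy

lemma tilt_set (P : Measure ℝ) [IsProbabilityMeasure P] (θ : ℝ) (hθ : Integrable (fun x => Real.exp (θ * x)) P)
    (A : Set ℝ) (hA : MeasurableSet A) :
    P.real A = mgf id P θ * ∫ x in A, Real.exp (-(θ * x)) ∂(P.tilted (fun x => θ * x)) := by
  have hpos : 0 < mgf id P θ := mgf_pos hθ
  rw [setIntegral_tilted' _ _ hA, ← integral_const_mul]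
  have : ∀ x : ℝ, mgf id P θ * ((Real.exp (θ * x) / ∫ y, Real.exp (θ * y) ∂P) • Real.exp (-(θ * x))) = 1 := by
    intro x
    rw [smul_eq_mul, Real.exp_neg]
    change mgf id P θ * ((Real.exp (θ * x) / mgf id P θ) * _) = 1
    field_simp
  simp_rw [this]
  simp

lemma exp_set_le (P : Measure ℝ) [IsProbabilityMeasure P] (g : ℝ → ℝ) (hg : Measurable g) (A : Set ℝ) (hA : MeasurableSet A) (c : ℝ)
    (h0 : ∀ x, 0 ≤ g x) (hc : 0 ≤ c)
    (h : ∀ x ∈ A, g x ≤ c) : 0 ≤ ∫ x in A, g x ∂P ∧ ∫ x in A, g x ∂P ≤ c := by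
  refine ⟨setIntegral_nonneg hA fun x _ => h0 x, ?_⟩
  have h1 : ∫ x in A, g x ∂P ≤ ∫ x in A, c ∂P := by
    refine setIntegral_mono_on ?_ (by simp) hA h
    refine Measure.integrableOn_of_bounded (M := c) (by simp) hg.aestronglyMeasurable ?_
    filter_upwards [ae_restrict_mem hA] with x hx
    rw [Real.norm_of_nonneg (h0 x)]; exact h x hx
  refine h1.trans ?_
  simp only [integral_const, smul_eq_mul]
  exact mul_le_of_le_one_left hc (by simp [measureReal_le_one])

lemma comb (Z1 Z2 a b d e D : ℝ) (hZ2 : 0 ≤ Z2) (hZ : |Z1 - Z2| ≤ D) (ha : 0 ≤ a) (hae : a ≤ e)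
    (hab : |a - b| ≤ d) : |Z1 * a - Z2 * b| ≤ D * e + Z2 * d := by
  have : Z1 * a - Z2 * b = (Z1 - Z2) * a + Z2 * (a - b) := by ring
  rw [this]
  refine (abs_add_le _ _).trans ?_
  rw [abs_mul, abs_mul, abs_of_nonneg ha, abs_of_nonneg hZ2]
  have : 0 ≤ D := (abs_nonneg _).trans hZ
  gcongr

lemma berry (M r : ℝ) (hM : 0 ≤ M) (hr : 0 < r) : ∃ C σ0 : ℝ, 0 ≤ C ∧ 1 ≤ σ0 ∧
    ∀ (P : Measure ℝ) [IsProbabilityMeasure P] (σ : ℝ) (E : ℂ → ℂ), σ0 ≤ σ →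
    (∀ θ : ℝ, Integrable (fun x => Real.exp (θ * x)) P) →
    DifferentiableOn ℂ E (Metric.ball 0 (r * σ)) →
    (∀ w ∈ Metric.ball (0:ℂ) (r * σ), ‖E w‖ ≤ M * ‖w‖ ^ 3 / σ) →
    (∀ w ∈ Metric.ball (0:ℂ) (r * σ), complexMGF id P w = Complex.exp (w ^ 2 / 2 + E w)) →
    ∀ t, |P.real (Iic t) - (gaussianReal 0 1).real (Iic t)| ≤ C * Real.exp (-|t|) / σ := by
  obtain ⟨D, σ0, hD, hσ0, h⟩ := tilt_bound M r hM hr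
  set Z2 := Real.exp (1/2)
  refine ⟨D + Z2 * (2 * D), σ0, by positivity, hσ0, ?_⟩
  intro P _ σ E hσ hint hE hEb hmgf t
  have hσp : 0 < σ := by linarith
  have hgi : ∀ θ : ℝ, Integrable (fun x => Real.exp (θ * x)) (gaussianReal 0 1) := fun θ =>
    integrable_exp_mul_gaussianReal θ
  have hpr : ∀ (P : Measure ℝ) [IsProbabilityMeasure P] (θ : ℝ), Integrable (fun x => Real.exp (θ * x)) P →
    IsProbabilityMeasure (P.tilted (fun x => θ * x)) := fun P _ θ h => isProbabilityMeasure_tilted h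
  have hZ2 : ∀ θ : ℝ, |θ| = 1 → mgf id (gaussianReal 0 1) θ = Z2 := by
    intro θ hθ
    rw [mgf_id_gaussianReal]
    have : θ ^ 2 = 1 := by rw [← sq_abs, hθ]; norm_num
    simp [this, Z2]
  rcases le_total 0 t with ht | ht
  · have i1 := hpr P 1 (hint 1)
    have i2 := hpr (gaussianReal 0 1) 1 (hgi 1)
    obtain ⟨h1, h2⟩ := h P σ E hσ hint hE hEb hmgf 1 (by simp)
    have hc : ∀ (P : Measure ℝ) [IsProbabilityMeasure P], P.real (Iic t) = 1 - P.real (Ioi t) := by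
      intro P _
      rw [← compl_Iic, probReal_compl_eq_one_sub measurableSet_Iic]; ring
    rw [hc, hc, sub_sub_sub_cancel_left, abs_sub_comm, tilt_set P 1 (hint 1) _ measurableSet_Ioi,
      tilt_set _ 1 (hgi 1) _ measurableSet_Ioi]
    simp only [one_mul] at *
    rw [hZ2 1 (by simp)] at h2 ⊢
    have h3 := untiltR _ _ _ h1 t
    have h4 := exp_set_le (P.tilted fun x => x) (fun x => Real.exp (-x)) (by fun_prop) (Ioi t) measurableSet_Ioi
      (Real.exp (-t)) (fun x => (Real.exp_pos _).le) (Real.exp_pos _).le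
      (fun x hx => Real.exp_le_exp.2 (neg_le_neg (le_of_lt hx)))
    refine (comb _ _ _ _ _ _ _ (Real.exp_pos _).le h2 h4.1 h4.2 h3).trans (le_of_eq ?_)
    rw [abs_of_nonneg ht]; ring
  · have i1 := hpr P (-1) (hint (-1))
    have i2 := hpr (gaussianReal 0 1) (-1) (hgi (-1))
    obtain ⟨h1, h2⟩ := h P σ E hσ hint hE hEb hmgf (-1) (by simp)
    rw [tilt_set P (-1) (hint (-1)) _ measurableSet_Iic,
      tilt_set _ (-1) (hgi (-1)) _ measurableSet_Iic]
    simp only [neg_mul, one_mul, neg_neg] at *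
    rw [hZ2 (-1) (by simp)] at h2 ⊢
    have h3 := untiltL _ _ _ h1 t
    have h4 := exp_set_le (P.tilted fun x => -x) (fun x => Real.exp x) (by fun_prop) (Iic t) measurableSet_Iic
      (Real.exp t) (fun x => (Real.exp_pos _).le) (Real.exp_pos _).le
      (fun x hx => Real.exp_le_exp.2 hx)
    refine (comb _ _ _ _ _ _ _ (Real.exp_pos _).le h2 h4.1 h4.2 h3).trans (le_of_eq ?_)
    rw [abs_of_nonpos ht, neg_neg]; ring

end WBE
end
end

section
open MeasureTheory ProbabilityTheory Filter
open scoped ENNReal NNReal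
noncomputable section
namespace WBE
open Set Topology Asymptotics

def IsQ (g : ℂ → ℂ) (v : ℝ) : Prop := (fun z : ℂ => g z - v * z ^ 2 / 2) =o[𝓝 0] fun z : ℂ => z ^ 2

lemma IsQ.add {g h : ℂ → ℂ} {v w : ℝ} (hg : IsQ g v) (hh : IsQ h w) : IsQ (fun z => g z + h z) (v + w) := by
  refine (IsLittleO.add hg hh).congr_left fun z => ?_
  push_cast; ring

lemma IsQ.neg {g : ℂ → ℂ} {v : ℝ} (hg : IsQ g v) : IsQ (fun z => - g z) (-v) := by
  refine (IsLittleO.neg_left hg).congr_left fun z => ?_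
  push_cast; ring

lemma IsQ.congr {g h : ℂ → ℂ} {v : ℝ} (hg : IsQ g v) (e : (fun z => h z - g z) =o[𝓝 0] fun z : ℂ => z ^ 2) : IsQ h v := by
  refine (IsLittleO.add hg e).congr_left fun z => ?_
  ring

lemma IsQ.bigO {g : ℂ → ℂ} {v : ℝ} (hg : IsQ g v) : g =O[𝓝 0] fun z : ℂ => z ^ 2 := by
  have h1 : (fun z : ℂ => (v * z ^ 2 / 2 : ℂ)) =O[𝓝 0] fun z : ℂ => z ^ 2 := by
    refine ((isBigO_refl (fun z : ℂ => z ^ 2) (𝓝 0)).const_mul_left (v / 2 : ℂ)).congr_left fun z => ?_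
    ring
  refine (hg.isBigO.add h1).congr_left fun z => ?_
  ring

lemma o4 : (fun z : ℂ => z ^ 2 * z ^ 2) =o[𝓝 0] fun z : ℂ => z ^ 2 := by
  have : (fun z : ℂ => z ^ 4) =o[𝓝 0] fun z : ℂ => z ^ 2 := isLittleO_pow_pow (by norm_num)
  refine this.congr_left fun z => ?_
  ring

lemma IsQ.zero {g : ℂ → ℂ} {v : ℝ} (hg : IsQ g v) : g 0 = 0 := by
  have h1 := hg.bigO
  have h2 := h1.eq_zero_imp.self_of_nhds
  simpa using h2

lemma IsQ.tendsto {g : ℂ → ℂ} {v : ℝ} (hg : IsQ g v) : Tendsto g (𝓝 0) (𝓝 0) := by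
  refine hg.bigO.trans_tendsto ?_
  have : Tendsto (fun z : ℂ => z ^ 2) (𝓝 0) (𝓝 (0 ^ 2)) := (continuous_pow 2).tendsto 0
  simpa using this

lemma IsQ.mul {f g : ℂ → ℂ} {v w : ℝ} (hf : IsQ (fun z => f z - 1) v) (hg : IsQ (fun z => g z - 1) w) :
    IsQ (fun z => f z * g z - 1) (v + w) := by
  refine (hf.add hg).congr ?_
  refine ((hf.bigO.mul hg.bigO).trans_isLittleO o4).congr_left fun z => ?_
  ring

lemma IsQ.inv {f : ℂ → ℂ} {v : ℝ} (hf : IsQ (fun z => f z - 1) v) :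
    IsQ (fun z => (f z)⁻¹ - 1) (-v) := by
  have ht : Tendsto f (𝓝 0) (𝓝 1) := by simpa using hf.tendsto.add_const 1
  have hi : Tendsto (fun z => (f z)⁻¹) (𝓝 0) (𝓝 1) := by simpa using ht.inv₀ one_ne_zero
  refine hf.neg.congr ?_
  have h1 : (fun z => (f z)⁻¹) =O[𝓝 0] fun _ => (1:ℂ) := hi.isBigO_one ℂ
  have h2 := ((hf.bigO.mul hf.bigO).trans_isLittleO o4)
  have h3 := h2.mul_isBigO h1
  refine h3.congr' ?_ ?_
  · filter_upwards [ht.eventually_ne one_ne_zero] with z hz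
    field_simp
    ring
  · filter_upwards with z; ring

lemma IsQ.log {f : ℂ → ℂ} {v : ℝ} (hf : IsQ (fun z => f z - 1) v) :
    IsQ (fun z => Complex.log (f z)) v := by
  refine hf.congr (IsBigO.trans_isLittleO ?_ o4)
  refine IsBigO.trans ?_ (hf.bigO.mul hf.bigO)
  refine IsBigO.of_bound 1 ?_
  have h1 := hf.tendsto.norm.eventually (eventually_lt_nhds (show ‖(0:ℂ)‖ < 1/2 by simp))
  filter_upwards [h1] with z hz
  have := Complex.norm_log_one_add_sub_self_le (z := f z - 1) (by linarith)
  rw [add_sub_cancel] at this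
  refine this.trans ?_
  rw [one_mul, norm_mul, ← sq]
  have h3 : (1 - ‖f z - 1‖)⁻¹ ≤ 2 := by
    rw [inv_le_comm₀ (by linarith) (by norm_num)]; linarith
  have := sq_nonneg ‖f z - 1‖
  nlinarith

lemma IsQ.schwarz {g : ℂ → ℂ} {v r M : ℝ} (hr : 0 < r) (hg : IsQ g v)
    (hd : DifferentiableOn ℂ g (Metric.ball 0 r)) (hb : ∀ z ∈ Metric.ball (0:ℂ) r, ‖g z‖ ≤ M) :
    |v| / 2 ≤ M / r ^ 2 ∧ ∀ z ∈ Metric.ball (0:ℂ) r, ‖g z - v * z ^ 2 / 2‖ ≤ 2 * M * (‖z‖ / r) ^ 3 := by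
  have hg0 := hg.zero
  have h1 : ∀ z ∈ Metric.ball (0:ℂ) r, ‖g z‖ ≤ M * (‖z‖ / r) ^ 2 := by
    intro z hz
    have := Complex.dist_le_mul_div_pow_of_mapsTo_ball_of_isLittleO (n := 1) (R₂ := M) hd
      (fun w hw => by simpa [hg0] using hb w hw) ?_ hz
    · simpa [hg0] using this
    · simp only [hg0, sub_zero]
      refine hg.bigO.trans_isLittleO ?_
      have := (isLittleO_pow_pow (𝕜 := ℂ) (show 1 < 2 by norm_num)).norm_right
      simpa using this
  have h2 : |v| / 2 ≤ M / r ^ 2 := by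
    refine le_of_forall_pos_le_add fun ε hε => ?_
    have e1 := (hg.bound hε).filter_mono (nhdsWithin_le_nhds (s := {0}ᶜ))
    have e2 : ∀ᶠ z in 𝓝[≠] (0:ℂ), z ∈ Metric.ball (0:ℂ) r :=
      mem_nhdsWithin_of_mem_nhds (Metric.ball_mem_nhds 0 hr)
    obtain ⟨z, ⟨hz1, hz2⟩, hz3⟩ := ((e1.and e2).and self_mem_nhdsWithin).exists
    have hz0 : 0 < ‖z‖ := norm_pos_iff.2 hz3
    have h3 := h1 z hz2
    have h4 : ‖(v * z ^ 2 / 2 : ℂ)‖ ≤ ‖g z‖ + ‖g z - v * z ^ 2 / 2‖ := by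
      have := norm_sub_le (g z) (g z - v * z ^ 2 / 2)
      simpa using this
    have h5 : ‖(v * z ^ 2 / 2 : ℂ)‖ = |v| / 2 * ‖z‖ ^ 2 := by
      simp; ring
    rw [norm_pow] at hz1
    rw [h5] at h4
    have h6 : |v| / 2 * ‖z‖ ^ 2 ≤ (M / r ^ 2 + ε) * ‖z‖ ^ 2 := by
      have : M * (‖z‖ / r) ^ 2 = M / r ^ 2 * ‖z‖ ^ 2 := by ring
      linarith
    exact le_of_mul_le_mul_right h6 (by positivity)
  refine ⟨h2, fun z hz => ?_⟩
  have := Complex.dist_le_mul_div_pow_of_mapsTo_ball_of_isLittleO (n := 2) (R₂ := 2 * M) (c := 0)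
      (f := fun z => g z - v * z ^ 2 / 2)
      (hd.sub (Differentiable.differentiableOn (by fun_prop)))
      (fun w hw => ?_) ?_ hz
  · simpa [hg0] using this
  · have hw1 := hb w hw
    rw [mem_ball_zero_iff] at hw
    have h5 : ‖(v * w ^ 2 / 2 : ℂ)‖ = |v| / 2 * ‖w‖ ^ 2 := by
      simp; ring
    have h7 : |v| / 2 * ‖w‖ ^ 2 ≤ M := by
      calc |v| / 2 * ‖w‖ ^ 2 ≤ |v| / 2 * r ^ 2 := by gcongr
        _ ≤ M / r ^ 2 * r ^ 2 := by gcongr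
        _ = M := by field_simp
    simp only [hg0, mem_closedBall_iff_norm]
    have := norm_sub_le (g w) (v * w ^ 2 / 2)
    simp
    linarith
  · simp only [hg0]
    refine IsLittleO.trans_isBigO (IsLittleO.congr_left hg ?_) ?_
    · intro z; simp
    · simp only [sub_zero, ← norm_pow]
      exact (isBigO_refl _ _).norm_right

lemma log_props {h : ℂ → ℂ} {r : ℝ} (hd : DifferentiableOn ℂ h (Metric.ball 0 r))
    (hb : ∀ z ∈ Metric.ball (0:ℂ) r, ‖h z - 1‖ ≤ 1 / 2) :
    DifferentiableOn ℂ (fun z => Complex.log (h z)) (Metric.ball 0 r) ∧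
    (∀ z ∈ Metric.ball (0:ℂ) r, ‖Complex.log (h z)‖ ≤ 1) ∧
    (∀ z ∈ Metric.ball (0:ℂ) r, Complex.exp (Complex.log (h z)) = h z) := by
  have h0 : ∀ z ∈ Metric.ball (0:ℂ) r, h z ∈ Complex.slitPlane := by
    intro z hz
    left
    have h1 := (Complex.abs_re_le_norm _).trans (hb z hz)
    rw [abs_le, Complex.sub_re, Complex.one_re] at h1
    linarith
  refine ⟨hd.clog h0, ?_, ?_⟩
  · intro z hz
    have := Complex.norm_log_one_add_half_le_self (z := h z - 1) (hb z hz)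
    rw [add_sub_cancel] at this
    linarith [hb z hz]
  · intro z hz
    exact Complex.exp_log (Complex.slitPlane_ne_zero (h0 z hz))

variable {Ω : Type*} [MeasurableSpace Ω]

lemma int_exp_bdd (μ : Measure Ω) [IsProbabilityMeasure μ] (S : Ω → ℝ) (hS : AEMeasurable S μ) (K : ℝ)
    (hK : ∀ᵐ ω ∂μ, |S ω| ≤ K) (z : ℂ) : Integrable (fun ω => Complex.exp (z * S ω)) μ := by
  refine Integrable.of_bound (C := Real.exp (‖z‖ * K)) ?_ ?_
  · exact (by fun_prop : Continuous fun x : ℝ => Complex.exp (z * x)).measurable.comp_aemeasurable hS |>.aestronglyMeasurable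
  · filter_upwards [hK] with ω h
    rw [Complex.norm_exp]
    refine Real.exp_le_exp.2 ((Complex.re_le_norm _).trans ?_)
    rw [norm_mul, Complex.norm_real, Real.norm_eq_abs]
    gcongr

lemma mgf_Q (μ : Measure Ω) [IsProbabilityMeasure μ] (S : Ω → ℝ) (hS : AEMeasurable S μ) (K : ℝ)
    (hK : ∀ᵐ ω ∂μ, |S ω| ≤ K) (h0 : ∫ ω, S ω ∂μ = 0) :
    IsQ (fun z => complexMGF S μ z - 1) (∫ ω, S ω ^ 2 ∂μ) := by
  have hK0 : 0 ≤ K := by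
    obtain ⟨ω, h⟩ := hK.exists
    exact (abs_nonneg _).trans h
  have hi1 : Integrable S μ := Integrable.of_bound (C := K) hS.aestronglyMeasurable hK
  have hi2 : Integrable (fun ω => S ω ^ 2) μ := by
    refine Integrable.of_bound (C := K ^ 2) (hS.pow_const 2).aestronglyMeasurable ?_
    filter_upwards [hK] with ω h
    rw [norm_pow]
    gcongr
    exact h
  have hi1' : ∫ ω, (S ω : ℂ) ∂μ = 0 := by rw [integral_complex_ofReal, h0]; simp
  have hi2' : ∫ ω, ((S ω) ^ 2 : ℂ) ∂μ = ((∫ ω, S ω ^ 2 ∂μ : ℝ) : ℂ) := by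
    rw [← integral_complex_ofReal]; simp
  have key : ∀ z : ℂ, ‖z‖ ≤ 1 → ‖complexMGF S μ z - 1 - ((∫ ω, S ω ^ 2 ∂μ : ℝ) : ℂ) * z ^ 2 / 2‖
      ≤ (K ^ 3 * Real.exp K) * ‖z ^ 3‖ := by
    intro z hz
    have e : complexMGF S μ z - 1 - ((∫ ω, S ω ^ 2 ∂μ : ℝ) : ℂ) * z ^ 2 / 2
        = ∫ ω, (Complex.exp (z * S ω) - (1 + z * S ω + (z ^ 2 / 2) * (S ω) ^ 2)) ∂μ := by
      have hi1c : Integrable (fun ω => z * (S ω : ℂ)) μ := hi1.ofReal.const_mul z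
      have hi2c : Integrable (fun ω => z ^ 2 / 2 * ((S ω : ℂ)) ^ 2) μ := by
        have := (hi2.ofReal (𝕜 := ℂ)).const_mul (z ^ 2 / 2)
        simpa using this
      have hi0 : Integrable (fun ω : Ω => (1:ℂ)) μ := integrable_const _
      have hs3 : Integrable (fun ω => 1 + z * (S ω : ℂ) + z ^ 2 / 2 * ((S ω : ℂ)) ^ 2) μ := (hi0.add hi1c).add hi2c
      rw [integral_sub (int_exp_bdd μ S hS K hK z) hs3,
        integral_add (f := fun ω => (1:ℂ) + z * S ω) (hi0.add hi1c) hi2c, integral_add hi0 hi1c, integral_const_mul, integral_const_mul, hi1', hi2', complexMGF]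
      simp
      ring
    rw [e]
    have hb := norm_integral_le_of_norm_le_const (μ := μ) (C := (‖z‖ * K) ^ 3 * Real.exp K) (f := fun ω => (Complex.exp (z * S ω) - (1 + z * S ω + (z ^ 2 / 2) * (S ω) ^ 2))) ?_
    · refine hb.trans (le_of_eq ?_)
      simp; ring
    · filter_upwards [hK] with ω h
      have := Complex.norm_exp_sub_sum_le_norm_mul_exp (z * S ω) 3
      simp only [Finset.sum_range_succ, Finset.range_zero, Finset.sum_empty] at this
      have h2 : ‖z * (S ω : ℂ)‖ ≤ ‖z‖ * K := by
        rw [norm_mul, Complex.norm_real, Real.norm_eq_abs]; gcongr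
      have e2 : (1 + z * S ω + (z ^ 2 / 2) * (S ω) ^ 2 : ℂ) = (0 + (z * S ω) ^ 0 / (Nat.factorial 0) + (z * S ω) ^ 1 / (Nat.factorial 1)
        + (z * S ω) ^ 2 / (Nat.factorial 2)) := by
        simp [Nat.factorial]; ring
      rw [e2]
      refine this.trans ?_
      gcongr
      exact h2.trans (mul_le_of_le_one_left hK0 hz)
  refine IsBigO.trans_isLittleO (IsBigO.of_bound (K ^ 3 * Real.exp K) ?_) (isLittleO_pow_pow (show 2 < 3 by norm_num))
  filter_upwards [Metric.closedBall_mem_nhds (0:ℂ) one_pos] with z hz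
  exact key z (by simpa using hz)

lemma mgf_diff (μ : Measure Ω) [IsProbabilityMeasure μ] (S : Ω → ℝ) (hS : AEMeasurable S μ) (K : ℝ)
    (hK : ∀ᵐ ω ∂μ, |S ω| ≤ K) : Differentiable ℂ (complexMGF S μ) := by
  have : integrableExpSet S μ = univ := by
    ext t
    simp only [integrableExpSet, mem_univ, iff_true]
    have := (int_exp_bdd μ S hS K hK t).re
    refine this.congr (Eventually.of_forall fun ω => ?_)
    simp only
    rw [← Complex.ofReal_mul, ← Complex.ofReal_exp]; exact Complex.ofReal_re _
  intro z
  have h := hasDerivAt_complexMGF (X := S) (μ := μ) (z := z) (by rw [this]; simp)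
  exact h.differentiableAt

end WBE
end
end

section
open MeasureTheory ProbabilityTheory Filter
open scoped ENNReal NNReal
noncomputable section
namespace WBE
open Set Topology

set_option linter.unusedSectionVars false

variable {Ω : Type*} [mΩ : MeasurableSpace Ω] {𝒳 : ℕ → Type*} [∀ j, MeasurableSpace (𝒳 j)]

lemma past_le (X : ∀ j, Ω → 𝒳 j) (hX : ∀ j, Measurable (X j)) (j : ℕ) : pastSigma X j ≤ mΩ := by
  unfold pastSigma
  exact iSup₂_le fun i _ => (hX i).comap_le

lemma past_mono (X : ∀ j, Ω → 𝒳 j) (j : ℕ) : pastSigma X j ≤ pastSigma X (j + 1) := by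
  unfold pastSigma
  refine iSup₂_le fun i hi => ?_
  refine le_iSup₂_of_le (f := fun i (_ : i ∈ Finset.range (j + 1 + 1)) => MeasurableSpace.comap (X i) inferInstance) i ?_ le_rfl
  simp at hi ⊢; omega

lemma X_past (X : ∀ j, Ω → 𝒳 j) (j : ℕ) : Measurable[pastSigma X j] (X j) := by
  rw [measurable_iff_comap_le]
  unfold pastSigma
  exact le_iSup₂_of_le (f := fun i (_ : i ∈ Finset.range (j + 1)) => MeasurableSpace.comap (X i) inferInstance) j (by simp) le_rfl

variable {μ : Measure Ω} [IsProbabilityMeasure μ] {X : ∀ j, Ω → 𝒳 j} {κ : ∀ j n, Kernel (𝒳 j) (𝒳 (j + n))}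

lemma map_restrict (hM : IsInhomMarkov μ X κ) (j n : ℕ) {s : Set Ω} (hs : MeasurableSet[pastSigma X j] s) :
    (μ.restrict s).map (X (j + n)) = κ j n ∘ₘ ((μ.restrict s).map (X j)) := by
  have hX := hM.meas
  have := hM.isMarkovKernel j n
  have hs' := past_le X hX j s hs
  ext Γ hΓ
  rw [Measure.map_apply (hX _) hΓ, Measure.bind_apply hΓ (κ j n).aemeasurable,
    lintegral_map ((κ j n).measurable_coe hΓ) (hX j)]
  rw [Measure.restrict_apply (hX _ hΓ)]
  have h1 := setIntegral_condExp (μ := μ) (past_le X hX j)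
    (f := fun ω => Γ.indicator (fun _ => (1 : ℝ)) (X (j + n) ω)) (s := s) ?_ hs
  · have h2 : ∫ ω in s, (κ j n (X j ω) Γ).toReal ∂μ = ∫ ω in s, Γ.indicator (fun _ => (1 : ℝ)) (X (j + n) ω) ∂μ := by
      rw [← h1]
      exact integral_congr_ae (ae_restrict_of_ae (hM.cond j n Γ hΓ).symm)
    have h3 : ∫ ω in s, Γ.indicator (fun _ => (1 : ℝ)) (X (j + n) ω) ∂μ = (μ (X (j+n) ⁻¹' Γ ∩ s)).toReal := by
      have : (fun ω => Γ.indicator (fun _ => (1 : ℝ)) (X (j + n) ω)) = (X (j+n) ⁻¹' Γ).indicator (fun _ => (1:ℝ)) := by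
        ext ω; by_cases h : X (j+n) ω ∈ Γ <;> simp [h]
      rw [this, integral_indicator (hX _ hΓ), setIntegral_const]
      simp [Measure.real, Measure.restrict_apply (hX _ hΓ)]
    rw [integral_toReal, h3] at h2
    · rw [← ENNReal.toReal_eq_toReal_iff']
      · exact h2.symm
      · exact measure_ne_top _ _
      · refine ne_top_of_le_ne_top (b := ∫⁻ _ in s, 1 ∂μ) (by simp) (lintegral_mono fun ω => prob_le_one)
    · exact (((κ j n).measurable_coe hΓ).comp (hX j)).aemeasurable
    · exact ae_of_all _ fun ω => measure_lt_top _ _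
  · refine Integrable.of_bound (C := 1) ?_ (ae_of_all _ fun ω => ?_)
    · exact ((measurable_const.indicator hΓ).comp (hX _)).aestronglyMeasurable
    · by_cases h : X (j+n) ω ∈ Γ <;> simp [h]

lemma map_comp (hM : IsInhomMarkov μ X κ) (j n : ℕ) : μ.map (X (j + n)) = κ j n ∘ₘ (μ.map (X j)) := by
  simpa using map_restrict hM j n (s := univ) MeasurableSet.univ

variable {𝕜 : Type*} [RCLike 𝕜]

lemma int_ker_bound {j n : ℕ} (hM : IsInhomMarkov μ X κ) {g : 𝒳 (j + n) → 𝕜} {B : ℝ} (hB : ∀ x, ‖g x‖ ≤ B) (x : 𝒳 j) :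
    ‖∫ y, g y ∂κ j n x‖ ≤ B := by
  have := hM.isMarkovKernel j n
  simpa using norm_integral_le_of_norm_le_const (μ := κ j n x) (ae_of_all _ hB)

lemma int_bdd {α : Type*} [MeasurableSpace α] (ν : Measure α) [IsFiniteMeasure ν] {g : α → 𝕜} (hg : Measurable g) {B : ℝ} (hB : ∀ x, ‖g x‖ ≤ B) :
    Integrable g ν := Integrable.of_bound hg.aestronglyMeasurable B (ae_of_all _ hB)

lemma meas_ker (hM : IsInhomMarkov μ X κ) {j n : ℕ} {g : 𝒳 (j + n) → 𝕜} (hg : Measurable g) :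
    Measurable fun x => ∫ y, g y ∂κ j n x := by
  have := hM.isMarkovKernel j n
  exact (StronglyMeasurable.integral_kernel (κ := κ j n) hg.stronglyMeasurable).measurable

lemma integral_compM {α β : Type*} [MeasurableSpace α] [MeasurableSpace β] (ν : Measure α) [IsFiniteMeasure ν] (η : Kernel α β) [IsMarkovKernel η]
    {g : β → 𝕜} (hg : Measurable g) {B : ℝ} (hB : ∀ x, ‖g x‖ ≤ B) :
    ∫ y, g y ∂(η ∘ₘ ν) = ∫ x, ∫ y, g y ∂η x ∂ν := by
  rw [← Measure.snd_compProd, Measure.snd, integral_map measurable_snd.aemeasurable hg.aestronglyMeasurable,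
    Measure.integral_compProd (f := fun p : α × β => g p.2) (int_bdd _ (hg.comp measurable_snd) fun x => hB _)]

lemma set_int (hM : IsInhomMarkov μ X κ) (j n : ℕ) {s : Set Ω} (hs : MeasurableSet[pastSigma X j] s)
    {g : 𝒳 (j + n) → 𝕜} (hg : Measurable g) {B : ℝ} (hB : ∀ x, ‖g x‖ ≤ B) :
    ∫ ω in s, g (X (j + n) ω) ∂μ = ∫ ω in s, (∫ y, g y ∂κ j n (X j ω)) ∂μ := by
  have := hM.isMarkovKernel j n
  rw [← integral_map (hM.meas _).aemeasurable hg.aestronglyMeasurable,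
    map_restrict hM j n hs, integral_compM _ _ hg hB,
    integral_map (hM.meas _).aemeasurable (meas_ker hM hg).aestronglyMeasurable]

lemma condExp_ker (hM : IsInhomMarkov μ X κ) (j n : ℕ) 
    {g : 𝒳 (j + n) → 𝕜} (hg : Measurable g) {B : ℝ} (hB : ∀ x, ‖g x‖ ≤ B) :
    (fun ω => ∫ y, g y ∂κ j n (X j ω)) =ᵐ[μ] μ[fun ω => g (X (j + n) ω) | pastSigma X j] := by
  have hX := hM.meas
  have h1 : Integrable (fun ω => ∫ y, g y ∂κ j n (X j ω)) μ :=
    int_bdd _ ((meas_ker hM hg).comp (hX j)) fun ω => int_ker_bound hM hB _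
  refine ae_eq_condExp_of_forall_setIntegral_eq (past_le X hX j) (int_bdd _ (hg.comp (hX _)) fun ω => hB _) ?_ ?_ ?_
  · exact fun s _ _ => h1.integrableOn
  · exact fun s hs _ => (set_int hM j n hs hg hB).symm
  · exact ((meas_ker hM hg).comp (X_past X j)).stronglyMeasurable.aestronglyMeasurable

lemma L0 (hM : IsInhomMarkov μ X κ) (j n : ℕ) {ξ : Ω → 𝕜} (hξ : Measurable[pastSigma X j] ξ) {A : ℝ} (hA : ∀ ω, ‖ξ ω‖ ≤ A)
    {g : 𝒳 (j + n) → 𝕜} (hg : Measurable g) {B : ℝ} (hB : ∀ x, ‖g x‖ ≤ B) :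
    ∫ ω, ξ ω * g (X (j + n) ω) ∂μ = ∫ ω, ξ ω * (∫ y, g y ∂κ j n (X j ω)) ∂μ := by
  have hX := hM.meas
  have hgi : Integrable (fun ω => g (X (j + n) ω)) μ := int_bdd _ (hg.comp (hX _)) fun ω => hB _
  have h := condExp_stronglyMeasurable_bilin_of_bound (ContinuousLinearMap.mul ℝ 𝕜) (past_le X hX j) hξ.stronglyMeasurable
    hgi A (ae_of_all _ hA)
  rw [← integral_condExp (past_le X hX j)]
  refine integral_congr_ae ?_
  filter_upwards [h, condExp_ker hM j n hg hB] with ω h1 h2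
  rw [h2]; exact h1

end WBE
end
end

section
open MeasureTheory ProbabilityTheory Filter
open scoped ENNReal NNReal
noncomputable section
namespace WBE
open Set Topology
set_option linter.unusedSectionVars false

variable {Ω : Type*} [mΩ : MeasurableSpace Ω] {𝒳 : ℕ → Type*} [∀ j, MeasurableSpace (𝒳 j)]
variable {μ : Measure Ω} [IsProbabilityMeasure μ] {X : ∀ j, Ω → 𝒳 j} {κ : ∀ j n, Kernel (𝒳 j) (𝒳 (j + n))}
variable {𝕜 : Type*} [RCLike 𝕜]

def U (κ : ∀ j n, Kernel (𝒳 j) (𝒳 (j + n))) (w v : ∀ j, 𝒳 j → 𝕜) : ℕ → ∀ j, 𝒳 j → 𝕜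
  | 0, j, x => v j x
  | len + 1, j, x => w j x * ∫ y, U κ w v len (j + 1) y ∂κ j 1 x

/-- measurable and bounded family -/
def MB (v : ∀ j, 𝒳 j → 𝕜) : Prop := (∀ j, Measurable (v j)) ∧ ∃ B : ℝ, 0 ≤ B ∧ ∀ j x, ‖v j x‖ ≤ B

lemma MB.one : MB (fun (j : ℕ) (_ : 𝒳 j) => (1 : 𝕜)) := ⟨fun _ => measurable_const, 1, by simp, by simp⟩

lemma U_MB (hM : IsInhomMarkov μ X κ) {w v : ∀ j, 𝒳 j → 𝕜} (hw : MB w) (hv : MB v) (l : ℕ) : MB (U κ w v l) := by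
  induction l with
  | zero => exact hv
  | succ l ih =>
    obtain ⟨hw1, A, hA, hw2⟩ := hw
    obtain ⟨h1, B, hB, h2⟩ := ih
    refine ⟨fun j => (hw1 j).mul (meas_ker hM (h1 (j+1))), A * B, by positivity, fun j x => ?_⟩
    rw [U, norm_mul]
    exact mul_le_mul (hw2 j x) (int_ker_bound hM (h2 (j+1)) x) (norm_nonneg _) hA

lemma U_semi (w v : ∀ j, 𝒳 j → 𝕜) (a b : ℕ) : ∀ j, U κ w v (a + b) j = U κ w (U κ w v b) a j := by
  induction a with
  | zero => intro j; simp; rfl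
  | succ a ih =>
    intro j; ext x
    rw [show a + 1 + b = (a + b) + 1 by ring, U, U, ih]

lemma MB.int {v : ∀ j, 𝒳 j → 𝕜} (hv : MB v) (j : ℕ) (ν : Measure (𝒳 j)) [IsFiniteMeasure ν] : Integrable (v j) ν := by
  obtain ⟨h1, B, hB, h2⟩ := hv
  exact int_bdd _ (h1 j) (h2 j)

lemma MB.comb {v u : ∀ j, 𝒳 j → 𝕜} (hv : MB v) (hu : MB u) (s t : 𝕜) : MB fun j x => s * v j x + t * u j x := by
  obtain ⟨h1, B, hB, h2⟩ := hv
  obtain ⟨g1, A, hA, g2⟩ := hu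
  refine ⟨fun j => ((h1 j).const_mul s).add ((g1 j).const_mul t), ‖s‖ * B + ‖t‖ * A, by positivity, fun j x => ?_⟩
  refine (norm_add_le _ _).trans ?_
  rw [norm_mul, norm_mul]
  gcongr
  · exact h2 j x
  · exact g2 j x

lemma U_comb (hM : IsInhomMarkov μ X κ) {w v u : ∀ j, 𝒳 j → 𝕜} (hw : MB w) (hv : MB v) (hu : MB u) (s t : 𝕜) (l : ℕ) :
    ∀ j x, U κ w (fun j x => s * v j x + t * u j x) l j x = s * U κ w v l j x + t * U κ w u l j x := by
  induction l with
  | zero => intro j x; rfl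
  | succ l ih =>
    intro j x
    have := hM.isMarkovKernel j 1
    rw [U, U, U]
    simp_rw [ih]
    rw [integral_add (((U_MB hM hw hv l).int _ _).const_mul _) (((U_MB hM hw hu l).int _ _).const_mul _),
      integral_const_mul, integral_const_mul]
    ring

lemma L1 (hM : IsInhomMarkov μ X κ) {w v : ∀ j, 𝒳 j → 𝕜} (hw : MB w) (hv : MB v) (l : ℕ) :
    ∀ (j : ℕ) (ξ : Ω → 𝕜), Measurable[pastSigma X j] ξ → (∃ A : ℝ, ∀ ω, ‖ξ ω‖ ≤ A) →
    ∫ ω, ξ ω * ((∏ i ∈ Finset.range l, w (j + i) (X (j + i) ω)) * v (j + l) (X (j + l) ω)) ∂μ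
      = ∫ ω, ξ ω * U κ w v l j (X j ω) ∂μ := by
  induction l with
  | zero => intro j ξ hξ _; simp [U]
  | succ l ih =>
    intro j ξ hξ ⟨A, hA⟩
    obtain ⟨hw1, B, hB, hw2⟩ := id hw
    obtain ⟨hu1, D, hD, hu2⟩ := U_MB hM hw hv l
    have e : ∀ a b, a = b → ∀ ω, v a (X a ω) = v b (X b ω) := by rintro a b rfl ω; rfl
    have e' : ∀ a b, a = b → ∀ ω, w a (X a ω) = w b (X b ω) := by rintro a b rfl ω; rfl
    have hξ' : Measurable[pastSigma X j] fun ω => ξ ω * w j (X j ω) := hξ.mul ((hw1 j).comp (X_past X j))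
    have hb : ∀ ω, ‖ξ ω * w j (X j ω)‖ ≤ A * B := fun ω => by
      rw [norm_mul]; exact mul_le_mul (hA ω) (hw2 _ _) (norm_nonneg _) ((norm_nonneg _).trans (hA ω))
    have h1 := ih (j + 1) (fun ω => ξ ω * w j (X j ω)) (hξ'.mono (past_mono X j) le_rfl) ⟨_, hb⟩
    have h2 := L0 hM j 1 hξ' hb (hu1 (j+1)) (hu2 (j+1))
    calc _ = ∫ ω, (ξ ω * w j (X j ω)) * ((∏ i ∈ Finset.range l, w (j + 1 + i) (X (j + 1 + i) ω)) * v (j + 1 + l) (X (j + 1 + l) ω)) ∂μ := by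
          refine integral_congr_ae (ae_of_all _ fun ω => ?_)
          simp only
          rw [Finset.prod_range_succ', e (j + (l+1)) (j+1+l) (by ring)]
          rw [Finset.prod_congr rfl fun i _ => e' (j + (i+1)) (j+1+i) (by ring) ω]
          rw [e' (j+0) j (by ring)]
          ring
      _ = _ := h1
      _ = _ := h2
      _ = _ := by
          refine integral_congr_ae (ae_of_all _ fun ω => ?_)
          simp only [U]
          ring

/-- a.e. transfer -/
lemma ae_ker (hM : IsInhomMarkov μ X κ) {j n : ℕ} {p : 𝒳 (j + n) → Prop} (h : ∀ᵐ y ∂μ.map (X (j + n)), p y) :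
    ∀ᵐ x ∂μ.map (X j), ∀ᵐ y ∂κ j n x, p y := by
  rw [map_comp hM j n] at h
  exact Measure.ae_ae_of_ae_comp h

lemma CK (hM : IsInhomMarkov μ X κ) {v : ∀ j, 𝒳 j → 𝕜} (hv : MB v) (j n : ℕ) :
    ∀ᵐ x ∂μ.map (X j), U κ (fun _ _ => 1) v n j x = ∫ y, v (j + n) y ∂κ j n x := by
  have hX := hM.meas
  have hU := U_MB hM (MB.one (𝒳 := 𝒳) (𝕜 := 𝕜)) hv n
  obtain ⟨hu1, D, hD, hu2⟩ := hU
  obtain ⟨hv1, B, hB, hv2⟩ := id hv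
  set g : 𝒳 j → 𝕜 := fun x => U κ (fun _ _ => 1) v n j x - ∫ y, v (j + n) y ∂κ j n x with hg
  have hgm : Measurable g := (hu1 j).sub (meas_ker hM (hv1 (j+n)))
  have hgb : ∀ x, ‖g x‖ ≤ D + B := fun x => (norm_sub_le _ _).trans (add_le_add (hu2 _ _) (int_ker_bound hM (hv2 _) _))
  set ξ : Ω → 𝕜 := fun ω => (starRingEnd 𝕜) (g (X j ω)) with hξ
  have hξm : Measurable[pastSigma X j] ξ := by
    exact (RCLike.continuous_conj.measurable.comp hgm).comp (X_past X j)
  have hξb : ∀ ω, ‖ξ ω‖ ≤ D + B := fun ω => by rw [hξ]; simp only [RCLike.norm_conj]; exact hgb _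
  have h1 := L1 hM (MB.one (𝒳 := 𝒳) (𝕜 := 𝕜)) hv n j ξ hξm ⟨_, hξb⟩
  have h2 := L0 hM j n hξm hξb (hv1 (j+n)) (hv2 (j+n))
  simp only [Finset.prod_const_one, one_mul] at h1
  rw [h2] at h1
  have i1 : Integrable (fun ω => ξ ω * U κ (fun _ _ => 1) v n j (X j ω)) μ := by
    refine int_bdd (B := (D + B) * D) _ (Measurable.mul (hξm.mono (past_le X hX j) le_rfl) ((hu1 j).comp (hX j))) fun ω => ?_
    rw [norm_mul]; exact mul_le_mul (hξb ω) (hu2 _ _) (norm_nonneg _) (by positivity)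
  have i2 : Integrable (fun ω => ξ ω * ∫ y, v (j + n) y ∂κ j n (X j ω)) μ := by
    refine int_bdd (B := (D + B) * B) _ (Measurable.mul (hξm.mono (past_le X hX j) le_rfl) ((meas_ker hM (hv1 (j+n))).comp (hX j))) fun ω => ?_
    rw [norm_mul]; exact mul_le_mul (hξb ω) (int_ker_bound hM (hv2 _) _) (norm_nonneg _) (by positivity)
  have h3 : ∫ ω, ξ ω * g (X j ω) ∂μ = 0 := by
    simp only [hg, mul_sub]
    rw [integral_sub i1 i2, h1, sub_self]
  have h4 : ∫ ω, ‖g (X j ω)‖ ^ 2 ∂μ = 0 := by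
    have : (fun ω => ξ ω * g (X j ω)) = fun ω => ((‖g (X j ω)‖ ^ 2 : ℝ) : 𝕜) := by
      ext ω; simp only [hξ]; rw [RCLike.conj_mul]; push_cast; rfl
    rw [this, integral_ofReal] at h3
    exact_mod_cast h3
  rw [integral_eq_zero_iff_of_nonneg (fun ω => by positivity)] at h4
  · have h5 : ∀ᵐ ω ∂μ, g (X j ω) = 0 := by
      filter_upwards [h4] with ω h
      simpa using h
    have : ∀ᵐ x ∂μ.map (X j), g x = 0 := by
      rw [ae_map_iff (p := fun x => g x = 0) (hX j).aemeasurable (hgm (measurableSet_singleton 0))]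
      exact h5
    filter_upwards [this] with x hx
    exact sub_eq_zero.1 hx
  · refine int_bdd (B := (D + B) ^ 2) _ (((hgm.comp (hX j)).norm).pow_const 2) fun ω => ?_
    simp only [norm_pow, norm_norm]
    gcongr
    exact hgb _

end WBE
end
end

section
open MeasureTheory ProbabilityTheory Filter
open scoped ENNReal NNReal
noncomputable section
namespace WBE
open Set Topology
set_option linter.unusedSectionVars false

variable {Ω : Type*} [mΩ : MeasurableSpace Ω] {𝒳 : ℕ → Type*} [∀ j, MeasurableSpace (𝒳 j)]
variable {μ : Measure Ω} [IsProbabilityMeasure μ] {X : ∀ j, Ω → 𝒳 j} {κ : ∀ j n, Kernel (𝒳 j) (𝒳 (j + n))}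
variable {𝕜 : Type*} [RCLike 𝕜]

lemma doeb_meas {α : Type*} [MeasurableSpace α] (k m : Measure α) [IsProbabilityMeasure k] [IsProbabilityMeasure m]
    {γ : ℝ} (hγ : γ ∈ Ioo (0:ℝ) 1) (hle : ENNReal.ofReal γ • m ≤ k) {g : α → 𝕜} (hg : Measurable g) {B : ℝ} (hB : ∀ x, ‖g x‖ ≤ B)
    {c : 𝕜} {ρ : ℝ} (h : ∀ᵐ x ∂k, ‖g x - c‖ ≤ ρ) :
    ‖(∫ x, g x ∂k) - (γ * (∫ x, g x ∂m) + (1 - γ) * c)‖ ≤ (1 - γ) * ρ ∧ ‖(γ * (∫ x, g x ∂m) + (1 - γ) * c) - c‖ ≤ ρ := by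
  have hgi := int_bdd k hg hB
  have hgi' := int_bdd m hg hB
  have := Measure.smul_finite m (ENNReal.ofReal_ne_top (r := γ))
  have e : k - ENNReal.ofReal γ • m + ENNReal.ofReal γ • m = k := Measure.sub_add_cancel_of_le hle
  set q := k - ENNReal.ofReal γ • m with hq
  have hqk : q ≤ k := Measure.sub_le
  have hqi : Integrable g q := hgi.mono_measure hqk
  have hqfin : IsFiniteMeasure q := isFiniteMeasure_of_le k hqk
  have hm : ∀ᵐ x ∂m, ‖g x - c‖ ≤ ρ := by
    have : m ≪ k := by
      have h1 : m ≪ ENNReal.ofReal γ • m := Measure.absolutelyContinuous_smul (by simp [hγ.1])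
      exact h1.trans hle.absolutelyContinuous
    exact this h
  have hqu : q.real univ = 1 - γ := by
    have h1 : k.real univ = q.real univ + γ := by
      rw [← e, measureReal_add_apply]
      simp [measureReal_ennreal_smul_apply, hγ.1.le]
    simp at h1; linarith
  have e1 : ∫ x, g x ∂k = (∫ x, g x ∂q) + γ * ∫ x, g x ∂m := by
    conv_lhs => rw [← e]
    rw [integral_add_measure hqi (hgi'.smul_measure (by simp)), integral_smul_measure, ENNReal.toReal_ofReal hγ.1.le]
    congr 1
    rw [RCLike.real_smul_eq_coe_mul]
  have e2 : (∫ x, g x ∂q) - (1 - γ) * c = ∫ x, (g x - c) ∂q := by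
    rw [integral_sub hqi (integrable_const _), integral_const, hqu, RCLike.real_smul_eq_coe_mul]
    push_cast; ring
  have e3 : (∫ x, g x ∂m) - c = ∫ x, (g x - c) ∂m := by
    rw [integral_sub hgi' (integrable_const _)]; simp
  constructor
  · rw [e1, show (∫ x, g x ∂q) + γ * (∫ x, g x ∂m) - (γ * (∫ x, g x ∂m) + (1 - γ) * c) = (∫ x, g x ∂q) - (1 - γ) * c by ring, e2]
    have := norm_integral_le_of_norm_le_const (μ := q) (hqk.absolutelyContinuous h)
    rw [hqu] at this; linarith
  · rw [show (γ * (∫ x, g x ∂m) + (1 - γ) * c) - c = γ * ((∫ x, g x ∂m) - c) by ring, e3, norm_mul, RCLike.norm_ofReal, abs_of_pos hγ.1]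
    have h5 := norm_integral_le_of_norm_le_const (μ := m) hm
    simp only [probReal_univ, mul_one] at h5
    nlinarith [hγ.1, hγ.2, norm_nonneg (∫ x, (g x - c) ∂m)]

/-- Doeblin hypothesis -/
def Doeb (κ : ∀ j n, Kernel (𝒳 j) (𝒳 (j + n))) (n₀ : ℕ) (γ : ℝ) : Prop :=
  0 < n₀ ∧ γ ∈ Ioo (0:ℝ) 1 ∧ ∃ m : ∀ j, Measure (𝒳 j), (∀ j, IsProbabilityMeasure (m j)) ∧
    ∀ j (x : 𝒳 j), ENNReal.ofReal γ • m (j + n₀) ≤ κ j n₀ x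

lemma doeb_step (hM : IsInhomMarkov μ X κ) {n₀ : ℕ} {γ : ℝ} (hD : Doeb κ n₀ γ) {v : ∀ j, 𝒳 j → 𝕜} (hv : MB v)
    (j : ℕ) {c : 𝕜} {ρ : ℝ} (h : ∀ᵐ x ∂μ.map (X (j + n₀)), ‖v (j + n₀) x - c‖ ≤ ρ) :
    ∃ c' : 𝕜, ‖c' - c‖ ≤ ρ ∧ ∀ᵐ x ∂μ.map (X j), ‖U κ (fun _ _ => 1) v n₀ j x - c'‖ ≤ (1 - γ) * ρ := by
  obtain ⟨hn, hγ, m, hm, hD⟩ := hD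
  obtain ⟨hv1, B, hB, hv2⟩ := id hv
  have := hM.isMarkovKernel j n₀
  have := hm (j + n₀)
  have hae : ∀ᵐ x ∂μ.map (X j), ‖U κ (fun _ _ => 1) v n₀ j x - (γ * (∫ x, v (j + n₀) x ∂m (j + n₀)) + (1 - γ) * c)‖ ≤ (1 - γ) * ρ
      ∧ ‖(γ * (∫ x, v (j + n₀) x ∂m (j + n₀)) + (1 - γ) * c) - c‖ ≤ ρ := by
    filter_upwards [CK hM hv j n₀, ae_ker hM h] with x h1 h2
    rw [h1]
    exact doeb_meas _ _ hγ (hD j x) (hv1 _) (hv2 _) h2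
  have : IsProbabilityMeasure (μ.map (X j)) := Measure.isProbabilityMeasure_map (hM.meas j).aemeasurable
  obtain ⟨x, hx⟩ := hae.exists
  exact ⟨_, hx.2, hae.mono fun x h => h.1⟩

lemma U_bound (hM : IsInhomMarkov μ X κ) {w v : ∀ j, 𝒳 j → 𝕜} (hw : MB w) (hv : MB v) {B : ℝ} (hB : 1 ≤ B)
    (hwB : ∀ j x, ‖w j x‖ ≤ B) (hw1 : ∀ j x, ‖w j x - 1‖ ≤ B - 1) {V : ℝ} (l : ℕ) : ∀ j k, k = j + l →
    (∀ᵐ x ∂μ.map (X k), ‖v k x‖ ≤ V) →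
    ∀ᵐ x ∂μ.map (X j), ‖U κ w v l j x‖ ≤ B ^ l * V ∧ ‖U κ w v l j x - U κ (fun _ _ => 1) v l j x‖ ≤ (B ^ l - 1) * V := by
  induction l with
  | zero => 
    rintro j k rfl h
    filter_upwards [h] with x hx
    simpa [U] using hx
  | succ l ih =>
    rintro j k hk h
    have h1 := ih (j + 1) k (by omega) h
    have := hM.isMarkovKernel j 1
    filter_upwards [ae_ker hM h1] with x hx
    have i1 := (U_MB hM hw hv l).int (j+1) (κ j 1 x)
    have i2 := (U_MB hM (MB.one (𝒳 := 𝒳) (𝕜 := 𝕜)) hv l).int (j+1) (κ j 1 x)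
    have b1 := norm_integral_le_of_norm_le_const (μ := κ j 1 x) (hx.mono fun y h => h.1)
    have b2 := norm_integral_le_of_norm_le_const (μ := κ j 1 x) (hx.mono fun y h => h.2)
    rw [integral_sub i1 i2] at b2
    simp only [probReal_univ, mul_one] at b1 b2
    rw [U, U]
    constructor
    · rw [norm_mul, pow_succ', mul_assoc]
      exact mul_le_mul (hwB _ _) b1 (norm_nonneg _) (by linarith)
    · set I := ∫ y, U κ w v l (j + 1) y ∂κ j 1 x
      set J := ∫ y, U κ (fun _ _ => 1) v l (j + 1) y ∂κ j 1 x
      rw [show w j x * I - 1 * J = (w j x - 1) * I + (I - J) by ring]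
      refine (norm_add_le _ _).trans ?_
      rw [norm_mul]
      have := mul_le_mul (hw1 j x) b1 (norm_nonneg _) (by linarith)
      rw [pow_succ]
      nlinarith

end WBE
end
end

section
open MeasureTheory ProbabilityTheory Filter
open scoped ENNReal NNReal
noncomputable section
namespace WBE
open Set Topology
set_option linter.unusedSectionVars false

variable {Ω : Type*} [mΩ : MeasurableSpace Ω] {𝒳 : ℕ → Type*} [∀ j, MeasurableSpace (𝒳 j)]
variable {μ : Measure Ω} [IsProbabilityMeasure μ] {X : ∀ j, Ω → 𝒳 j} {κ : ∀ j n, Kernel (𝒳 j) (𝒳 (j + n))}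

lemma cone (hM : IsInhomMarkov μ X κ) {n₀ : ℕ} {γ : ℝ} (hD : Doeb κ n₀ γ) {w v : ∀ j, 𝒳 j → ℂ} (hw : MB w) (hv : MB v) 
    {B ε η : ℝ} (hB : 1 ≤ B) (hwB : ∀ j x, ‖w j x‖ ≤ B) (hw1 : ∀ j x, ‖w j x - 1‖ ≤ B - 1)
    (hε0 : 0 < ε) (hε : ε ≤ γ / 4) (hη : B ^ n₀ = 1 + η) (hη2 : 2 * η ≤ 3 / 4 * ε * γ) (l : ℕ) : ∀ j k, k = j + l →
    (∀ᵐ x ∂μ.map (X k), ‖v k x‖ ≤ 1) →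
    ∃ (c d : ℂ) (ρ : ℝ), c ≠ 0 ∧ 0 ≤ ρ ∧ ‖d‖ + 8 / γ * ρ ≤ 16 / γ ∧ 
      ∀ᵐ x ∂μ.map (X j), ‖U κ w (fun _ _ => 1) l j x - c‖ ≤ ε * ‖c‖ ∧ 
        ‖U κ w v l j x - d * U κ w (fun _ _ => 1) l j x‖ ≤ ρ * ‖c‖ := by
  have hγ := hD.2.1
  have hη0 : 0 ≤ η := by
    have := one_le_pow₀ hB (n := n₀); linarith
  have hγ1 := hγ.1
  have hγ2 := hγ.2
  have hηε : η ≤ ε := by nlinarith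
  have hηγ : η ≤ γ / 8 := by nlinarith
  induction l using Nat.strong_induction_on with
  | _ l ih =>
  intro j k hk h
  by_cases hl : l < n₀
  · have hBl : B ^ l ≤ 1 + η := by rw [← hη]; exact pow_le_pow_right₀ hB hl.le
    refine ⟨1, 0, 2, one_ne_zero, by norm_num, ?_, ?_⟩
    · apply le_of_eq; rw [norm_zero]; ring
    have h1 := U_bound hM hw hv hB hwB hw1 (V := 1) l j k hk h
    have h2 := U_bound hM hw (MB.one (𝒳 := 𝒳) (𝕜 := ℂ)) hB hwB hw1 (V := 1) l j k hk (by simp)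
    have h3 : ∀ l : ℕ, ∀ j x, U κ (fun _ _ => 1) (fun _ _ => (1 : ℂ)) l j x = 1 := by
      intro l
      induction l with
      | zero => intro j x; rfl
      | succ l ih => 
        intro j x
        have := hM.isMarkovKernel j 1
        rw [U]; simp [ih]
    filter_upwards [h1, h2] with x h1 h2
    rw [h3] at h2
    simp only [norm_one, mul_one, zero_mul, sub_zero] at *
    exact ⟨by linarith [h2.2], by linarith [h1.1]⟩
  · push Not at hl
    obtain ⟨l', rfl⟩ := Nat.exists_eq_add_of_le hl
    obtain ⟨c, d, ρ, hc, hρ, hdρ, hae⟩ := ih l' (by have := hD.1; omega) (j + n₀) k (by omega) h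
    set u := U κ w (fun _ _ => (1:ℂ)) l' with hu
    set p := U κ w v l' with hp
    have huM : MB u := U_MB hM hw MB.one l'
    have hpM : MB p := U_MB hM hw hv l'
    have heM : MB (fun j x => 1 * p j x + (-d) * u j x) := hpM.comb huM 1 (-d)
    have hcpos : 0 < ‖c‖ := norm_pos_iff.2 hc
    obtain ⟨c', hc', h1⟩ := doeb_step hM hD huM j (c := c) (ρ := ε * ‖c‖) (hae.mono fun x h => h.1)
    have hb2 : ∀ᵐ x ∂μ.map (X (j + n₀)), ‖1 * p (j+n₀) x + (-d) * u (j+n₀) x‖ ≤ ρ * ‖c‖ := by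
      filter_upwards [hae] with x hx
      rw [show 1 * p (j+n₀) x + (-d) * u (j+n₀) x = p (j+n₀) x - d * u (j+n₀) x by ring]
      exact hx.2
    obtain ⟨δ, hδ, h2⟩ := doeb_step hM hD heM j (c := 0) (ρ := ρ * ‖c‖) (by simpa using hb2)
    rw [sub_zero] at hδ
    have h3 := U_bound hM hw huM hB hwB hw1 (V := 2 * ‖c‖) n₀ j _ rfl (by
      filter_upwards [hae] with x hx
      have := norm_sub_norm_le (u (j + n₀) x) c
      nlinarith [hx.1])
    have h4 := U_bound hM hw heM hB hwB hw1 (V := ρ * ‖c‖) n₀ j _ rfl hb2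
    rw [hη] at h3 h4
    have hcc : (1 - ε) * ‖c‖ ≤ ‖c'‖ := by
      have := norm_sub_norm_le c c'
      rw [norm_sub_rev] at this
      linarith
    have hcpos' : 0 < ‖c'‖ := by
      have : 0 < (1 - ε) * ‖c‖ := mul_pos (by linarith) hcpos
      linarith
    have hc0' : c' ≠ 0 := norm_pos_iff.1 hcpos'
    have hcc2 : ‖c‖ ≤ 2 * ‖c'‖ := by nlinarith
    refine ⟨c', d + δ / c', (1 - γ / 4) * ρ, hc0', by apply mul_nonneg _ hρ; linarith, ?_, ?_⟩
    · have e1 : ‖δ / c'‖ ≤ 2 * ρ := by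
        rw [norm_div, div_le_iff₀ hcpos']; nlinarith
      have e2 : 8 / γ * ((1 - γ / 4) * ρ) = 8 / γ * ρ - 2 * ρ := by field_simp; ring
      rw [e2]
      linarith [norm_add_le d (δ / c')]
    · filter_upwards [h1, h2, h3, h4] with x h1 h2 h3 h4
      have eu : U κ w (fun _ _ => 1) (n₀ + l') j x = U κ w u n₀ j x := by rw [U_semi]
      have ep : U κ w v (n₀ + l') j x = U κ w p n₀ j x := by rw [U_semi]
      rw [eu, ep]
      have ee := U_comb hM hw hpM huM 1 (-d) n₀ j x
      rw [ee] at h4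
      set u' := U κ w u n₀ j x
      set p' := U κ w p n₀ j x
      set u0 := U κ (fun _ _ => 1) u n₀ j x
      set e0 := U κ (fun _ _ => 1) (fun j x => 1 * p j x + -d * u j x) n₀ j x
      have a1 : ‖u' - c'‖ ≤ ε * ‖c'‖ := by
        have : ‖u' - c'‖ ≤ ‖u' - u0‖ + ‖u0 - c'‖ := norm_sub_le_norm_sub_add_norm_sub _ _ _
        have b1 : ε * ((1 - ε) * ‖c‖) ≤ ε * ‖c'‖ := by gcongr
        have b2 := h3.2
        have b3 : (1 + η - 1) * (2 * ‖c‖) + (1 - γ) * (ε * ‖c‖) ≤ ε * ((1 - ε) * ‖c‖) := by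
          have : 2 * η + (1 - γ) * ε ≤ ε * (1 - ε) := by nlinarith
          nlinarith
        linarith
      refine ⟨a1, ?_⟩
      rw [show p' - (d + δ / c') * u' = ((1 * p' + -d * u' - e0) + (e0 - δ)) - δ * ((u' - c') / c') by field_simp; ring]
      have a2 : ‖δ * ((u' - c') / c')‖ ≤ ρ * ‖c‖ * ε := by
        rw [norm_mul, norm_div]
        apply mul_le_mul hδ _ (by positivity) (by positivity)
        rw [div_le_iff₀ hcpos']; exact a1
      have a3 := norm_sub_le ((1 * p' + -d * u' - e0) + (e0 - δ)) (δ * ((u' - c') / c'))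
      have a4 := norm_add_le (1 * p' + -d * u' - e0) (e0 - δ)
      have a5 := h4.2
      have a6 : (1 + η - 1) * (ρ * ‖c‖) + (1 - γ) * (ρ * ‖c‖) + ρ * ‖c‖ * ε ≤ (1 - γ / 4) * ρ * ((1 - ε) * ‖c‖) := by
        have : η + (1 - γ) + ε ≤ (1 - γ / 4) * (1 - ε) := by nlinarith
        have := mul_le_mul_of_nonneg_right this (show 0 ≤ ρ * ‖c‖ by positivity)
        linarith
      have a7 : (1 - γ / 4) * ρ * ((1 - ε) * ‖c‖) ≤ (1 - γ / 4) * ρ * ‖c'‖ := by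
        apply mul_le_mul_of_nonneg_left hcc
        apply mul_nonneg _ hρ; linarith
      linarith

lemma norm_int_near {α : Type*} [MeasurableSpace α] (ν : Measure α) [IsProbabilityMeasure ν] {g h : α → ℂ} (hg : Integrable g ν)
    (hh : Integrable h ν) {ρ : ℝ} (hb : ∀ᵐ x ∂ν, ‖g x - h x‖ ≤ ρ) : ‖(∫ x, g x ∂ν) - ∫ x, h x ∂ν‖ ≤ ρ := by
  rw [← integral_sub hg hh]
  simpa using norm_integral_le_of_norm_le_const hb

/-- almost multiplicativity -/
lemma almost_mul (hM : IsInhomMarkov μ X κ) {n₀ : ℕ} {γ : ℝ} (hD : Doeb κ n₀ γ) {w : ∀ j, 𝒳 j → ℂ} (hw : MB w)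
    {B η : ℝ} (hB : 1 ≤ B) (hwB : ∀ j x, ‖w j x‖ ≤ B) (hw1 : ∀ j x, ‖w j x - 1‖ ≤ B - 1)
    (hη : B ^ n₀ = 1 + η) (hη2 : 2 * η ≤ 3 / 4 * (γ / 68) * γ) (Z : ℕ → ℕ → ℂ)
    (hZ : ∀ a l, Z a l = ∫ ω, ∏ i ∈ Finset.range l, w (a + i) (X (a + i) ω) ∂μ) (a l₁ l₂ : ℕ) :
    Z a l₁ ≠ 0 ∧ ‖Z a (l₁ + l₂) - Z a l₁ * Z (a + l₁) l₂‖ ≤ 1 / 2 * ‖Z a l₁ * Z (a + l₁) l₂‖ := by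
  have hγ := hD.2.1
  have hγ1 := hγ.1
  have hγ2 := hγ.2
  have hZU : ∀ a l, Z a l = ∫ x, U κ w (fun _ _ => 1) l a x ∂μ.map (X a) := by
    intro a l
    rw [hZ, integral_map (hM.meas a).aemeasurable ((U_MB hM hw MB.one l).1 a).aestronglyMeasurable]
    have := L1 hM hw (MB.one (𝒳 := 𝒳) (𝕜 := ℂ)) l a (fun _ => 1) measurable_const ⟨1, by simp⟩
    simpa using this
  have hp : ∀ a, IsProbabilityMeasure (μ.map (X a)) := fun a => Measure.isProbabilityMeasure_map (hM.meas a).aemeasurable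
  set ε := γ / 68 with hε
  have hε0 : 0 < ε := by positivity
  have hε4 : ε ≤ γ / 4 := by rw [hε]; linarith
  set b := a + l₁ with hb
  set g := U κ w (fun _ _ => (1 : ℂ)) l₂ with hg
  have hgM : MB g := U_MB hM hw MB.one l₂
  obtain ⟨c, d₀, ρ₀, hc, _, _, hae⟩ := cone hM hD hw MB.one hB hwB hw1 hε0 hε4 hη hη2 l₂ b _ rfl (by simp)
  have hcpos : 0 < ‖c‖ := norm_pos_iff.2 hc
  set t : ℂ := ((ε * ‖c‖ : ℝ) : ℂ) with ht
  have ht0 : t ≠ 0 := by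
    rw [ht]; exact_mod_cast (by positivity : ε * ‖c‖ ≠ 0)
  have htn : ‖t‖ = ε * ‖c‖ := by rw [ht, Complex.norm_real, Real.norm_of_nonneg (by positivity)]
  set v : ∀ j, 𝒳 j → ℂ := fun j x => (1 / t) * g j x + (- (c / t)) * 1 with hv
  have hvM : MB v := hgM.comb MB.one _ _
  obtain ⟨c₁, d, ρ, hc₁, hρ, hdρ, hae1⟩ := cone hM hD hw hvM hB hwB hw1 hε0 hε4 hη hη2 l₁ a b rfl (by
    filter_upwards [hae] with x hx
    rw [hv]
    simp only
    rw [show 1 / t * g b x + -(c / t) * 1 = (g b x - c) / t by field_simp; ring, norm_div, htn, div_le_one (by positivity)]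
    exact hx.1)
  set u := U κ w (fun _ _ => (1 : ℂ)) l₁ with hu
  set p := U κ w v l₁ with hp'
  have huM : MB u := U_MB hM hw MB.one l₁
  have hpM : MB p := U_MB hM hw hvM l₁
  have iu := huM.int a (μ.map (X a))
  have ip := hpM.int a (μ.map (X a))
  have ig := hgM.int b (μ.map (X b))
  have hc1pos : 0 < ‖c₁‖ := norm_pos_iff.2 hc₁
  -- Z a l₁
  have k1 : ‖Z a l₁ - c₁‖ ≤ ε * ‖c₁‖ := by
    have := norm_int_near (μ.map (X a)) iu (integrable_const c₁) (hae1.mono fun x h => h.1)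
    rw [hZU]; simpa using this
  have k2 : (1 - ε) * ‖c₁‖ ≤ ‖Z a l₁‖ := by
    have := norm_sub_norm_le c₁ (Z a l₁)
    rw [norm_sub_rev] at this; linarith
  have k2' : ‖c₁‖ ≤ 2 * ‖Z a l₁‖ := by nlinarith
  have kpos : 0 < ‖Z a l₁‖ := by linarith
  refine ⟨norm_pos_iff.1 kpos, ?_⟩
  have k3 : ‖Z b l₂ - c‖ ≤ ε * ‖c‖ := by
    have := norm_int_near (μ.map (X b)) ig (integrable_const c) (hae.mono fun x h => h.1)
    rw [hZU]; simpa using this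
  have k4 : (1 - ε) * ‖c‖ ≤ ‖Z b l₂‖ := by
    have := norm_sub_norm_le c (Z b l₂)
    rw [norm_sub_rev] at this; linarith
  set P := ∫ x, p a x ∂μ.map (X a) with hP
  have k5 : ‖P‖ ≤ 16 / γ * ‖Z a l₁‖ := by
    have := norm_int_near (μ.map (X a)) ip (iu.const_mul d) (hae1.mono fun x h => h.2)
    rw [integral_const_mul, ← hZU, ← hP] at this
    have h2 := norm_sub_norm_le P (d * Z a l₁)
    rw [norm_mul] at h2
    have h3 : ρ * ‖c₁‖ ≤ ρ * (2 * ‖Z a l₁‖) := by gcongr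
    have h4 : 8 ≤ 8 / γ := by rw [le_div_iff₀ hγ1]; nlinarith
    have h5 : 2 * ρ ≤ 8 / γ * ρ := by gcongr; linarith
    have h6 : (‖d‖ + 2 * ρ) * ‖Z a l₁‖ ≤ 16 / γ * ‖Z a l₁‖ := by gcongr; linarith
    linarith
  have k6 : Z a (l₁ + l₂) = c * Z a l₁ + t * P := by
    rw [hZU, U_semi, hZU, hP, ← integral_const_mul, ← integral_const_mul, ← integral_add (iu.const_mul c) (ip.const_mul t)]
    congr 1
    ext x
    rw [hp', hv, U_comb hM hw hgM MB.one]
    simp only [← hu]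
    field_simp; ring
  rw [k6, show c * Z a l₁ + t * P - Z a l₁ * Z b l₂ = t * P - Z a l₁ * (Z b l₂ - c) by ring]
  refine (norm_sub_le _ _).trans ?_
  rw [norm_mul, norm_mul, norm_mul, htn]
  have q1 : ε * ‖c‖ * ‖P‖ ≤ ε * ‖c‖ * (16 / γ * ‖Z a l₁‖) := by gcongr
  have q2 : ‖Z a l₁‖ * ‖Z b l₂ - c‖ ≤ ‖Z a l₁‖ * (ε * ‖c‖) := by gcongr
  have q3 : ε * (16 / γ) = 16 / 68 := by rw [hε]; field_simp
  have q4 : ε * ‖c‖ * (16 / γ * ‖Z a l₁‖) = 16 / 68 * (‖c‖ * ‖Z a l₁‖) := by rw [← q3]; ring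
  have q5 : ‖Z a l₁‖ * (ε * ‖c‖) ≤ 1 / 68 * (‖c‖ * ‖Z a l₁‖) := by
    have : ε ≤ 1 / 68 := by rw [hε]; linarith
    have := mul_le_mul_of_nonneg_right this (show 0 ≤ ‖c‖ * ‖Z a l₁‖ by positivity)
    linarith
  have q6 : ‖Z a l₁‖ * ((1 - ε) * ‖c‖) ≤ ‖Z a l₁‖ * ‖Z b l₂‖ := by gcongr
  have q7 : ‖Z a l₁‖ * (1 / 2 * ‖c‖) ≤ ‖Z a l₁‖ * ((1 - ε) * ‖c‖) := by
    gcongr; linarith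
  linarith [mul_nonneg (norm_nonneg (Z a l₁)) (norm_nonneg c)]

end WBE
end
end

section
open MeasureTheory ProbabilityTheory Filter
open scoped ENNReal NNReal
noncomputable section
namespace WBE
open Set Topology
set_option linter.unusedSectionVars false

variable {Ω : Type*} [mΩ : MeasurableSpace Ω] {𝒳 : ℕ → Type*} [∀ j, MeasurableSpace (𝒳 j)]
variable {μ : Measure Ω} [IsProbabilityMeasure μ] {X : ∀ j, Ω → 𝒳 j} {κ : ∀ j n, Kernel (𝒳 j) (𝒳 (j + n))}

lemma int3 {α : Type*} [MeasurableSpace α] {ν : Measure α} {a b d : α → ℝ} (ha : Integrable a ν) (hb : Integrable b ν) (hd : Integrable d ν) (c : ℝ) :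
    ∫ x, (a x + c * b x + d x) ∂ν = (∫ x, a x ∂ν) + c * (∫ x, b x ∂ν) + ∫ x, d x ∂ν := by
  have h1 : Integrable (fun x => a x + c * b x) ν := ha.add (hb.const_mul c)
  rw [integral_add h1 hd, integral_add ha (hb.const_mul c), integral_const_mul]

def Lin (κ : ∀ j n, Kernel (𝒳 j) (𝒳 (j + n))) (s : ℕ → ∀ j, 𝒳 j → ℝ) : ℕ → ∀ j, 𝒳 j → ℝ
  | 0, _, _ => 0
  | l + 1, j, x => s l j x + ∫ y, Lin κ s l (j + 1) y ∂κ j 1 x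

lemma MB.ker (hM : IsInhomMarkov μ X κ) {v : ∀ j, 𝒳 j → ℝ} (hv : MB v) : MB fun j x => ∫ y, v (j+1) y ∂κ j 1 x := by
  obtain ⟨h1, B, hB, h2⟩ := hv
  exact ⟨fun j => meas_ker hM (h1 (j+1)), B, hB, fun j x => int_ker_bound hM (h2 (j+1)) x⟩

lemma MB.add {v u : ∀ j, 𝒳 j → ℝ} (hv : MB v) (hu : MB u) : MB fun j x => v j x + u j x := by
  simpa using hv.comb hu 1 1

lemma MB.mul {v u : ∀ j, 𝒳 j → ℝ} (hv : MB v) (hu : MB u) : MB fun j x => v j x * u j x := by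
  obtain ⟨h1, B, hB, h2⟩ := hv
  obtain ⟨g1, A, hA, g2⟩ := hu
  refine ⟨fun j => (h1 j).mul (g1 j), B * A, by positivity, fun j x => ?_⟩
  rw [norm_mul]
  exact mul_le_mul (h2 j x) (g2 j x) (norm_nonneg _) hB

lemma MB.sq {v : ∀ j, 𝒳 j → ℝ} (hv : MB v) : MB fun j x => v j x ^ 2 := by
  simp_rw [pow_two]; exact hv.mul hv

lemma MB.exp {v : ∀ j, 𝒳 j → ℝ} (hv : MB v) : MB fun j x => Real.exp (v j x) := by
  obtain ⟨h1, B, hB, h2⟩ := hv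
  refine ⟨fun j => Real.measurable_exp.comp (h1 j), Real.exp B, by positivity, fun j x => ?_⟩
  rw [Real.norm_of_nonneg (by positivity)]
  exact Real.exp_le_exp.2 ((le_abs_self _).trans (h2 j x))

lemma Lin_MB (hM : IsInhomMarkov μ X κ) {s : ℕ → ∀ j, 𝒳 j → ℝ} (hs : ∀ l, MB (s l)) (l : ℕ) : MB (Lin κ s l) := by
  induction l with
  | zero => exact ⟨fun j => measurable_const, 0, le_rfl, fun j x => by simp [Lin]⟩
  | succ l ih => exact (hs l).add (ih.ker hM)

lemma Lin_diff (hM : IsInhomMarkov μ X κ) {s : ℕ → ∀ j, 𝒳 j → ℝ} (hs : ∀ l, MB (s l)) {M : ℝ}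
    (hsM : ∀ l j, ∀ᵐ x ∂μ.map (X j), |s l j x| ≤ M) (l a : ℕ) : ∀ j, ∀ᵐ x ∂μ.map (X j), 
    |Lin κ s (a + l) j x - U κ (fun _ _ => 1) (Lin κ s l) a j x| ≤ a * M := by
  induction a with
  | zero => intro j; simp [U]
  | succ a ih =>
    intro j
    filter_upwards [ae_ker hM (ih (j+1)), hsM (a + l) j] with x h1 h2
    have := hM.isMarkovKernel j 1
    have b := norm_integral_le_of_norm_le_const (μ := κ j 1 x) (f := fun y => Lin κ s (a + l) (j + 1) y - U κ (fun _ _ => 1) (Lin κ s l) a (j + 1) y) h1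
    rw [integral_sub ((Lin_MB hM hs _).int _ _) ((U_MB hM MB.one (Lin_MB hM hs l) a).int _ _)] at b
    simp only [probReal_univ, mul_one, Real.norm_eq_abs] at b
    rw [show a + 1 + l = (a + l) + 1 by ring, Lin, U, one_mul, add_sub_assoc]
    refine (abs_add_le _ _).trans ?_
    push_cast; linarith

lemma Lin_near (hM : IsInhomMarkov μ X κ) {n₀ : ℕ} {γ : ℝ} (hD : Doeb κ n₀ γ) {s : ℕ → ∀ j, 𝒳 j → ℝ} (hs : ∀ l, MB (s l)) {M : ℝ}
    (hM0 : 0 ≤ M) (hsM : ∀ l j, ∀ᵐ x ∂μ.map (X j), |s l j x| ≤ M) (l : ℕ) : ∀ j, ∃ c : ℝ, ∀ᵐ x ∂μ.map (X j), 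
    |Lin κ s l j x - c| ≤ n₀ * M / γ := by
  have hγ := hD.2.1
  have hγ1 := hγ.1
  have hγ2 := hγ.2
  induction l using Nat.strong_induction_on with
  | _ l ih =>
  intro j
  have hle : n₀ * M ≤ n₀ * M / γ := by
    rw [le_div_iff₀ hγ1]
    nlinarith [mul_nonneg (Nat.cast_nonneg (α := ℝ) n₀) hM0]
  by_cases hl : l < n₀
  · refine ⟨0, ?_⟩
    have e : ∀ a j x, U κ (fun _ _ => 1) (Lin κ s 0) a j x = 0 := by
      intro a
      induction a with
      | zero => intro j x; simp [U, Lin]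
      | succ a ih => intro j x; simp [U, ih]
    filter_upwards [Lin_diff hM hs hsM 0 l j] with x hx
    rw [e, add_zero] at hx
    have : (l : ℝ) * M ≤ n₀ * M := by gcongr
    linarith
  · push Not at hl
    obtain ⟨l', rfl⟩ := Nat.exists_eq_add_of_le hl
    obtain ⟨c, hc⟩ := ih l' (by have := hD.1; omega) (j + n₀)
    obtain ⟨c', -, h1⟩ := doeb_step hM hD (Lin_MB hM hs l') j hc
    refine ⟨c', ?_⟩
    filter_upwards [h1, Lin_diff hM hs hsM l' n₀ j] with x h1 h2
    rw [Real.norm_eq_abs] at h1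
    have h3 := abs_sub_le (Lin κ s (n₀ + l') j x) (U κ (fun _ _ => 1) (Lin κ s l') n₀ j x) c'
    have h4 : n₀ * M + (1 - γ) * (n₀ * M / γ) = n₀ * M / γ := by field_simp; ring
    linarith

def Sab (f : ∀ j, 𝒳 j → ℝ) (X : ∀ j, Ω → 𝒳 j) (a l : ℕ) (ω : Ω) : ℝ := ∑ i ∈ Finset.range l, f (a + i) (X (a + i) ω)

lemma Sab_succ (f : ∀ j, 𝒳 j → ℝ) (X : ∀ j, Ω → 𝒳 j) (a l : ℕ) (ω : Ω) : Sab f X a (l + 1) ω = f a (X a ω) + Sab f X (a + 1) l ω := by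
  unfold Sab
  rw [Finset.sum_range_succ', add_comm]
  have e' : ∀ a b, a = b → ∀ ω, f a (X a ω) = f b (X b ω) := by rintro a b rfl ω; rfl
  rw [Finset.sum_congr rfl fun i _ => e' (a + (i+1)) (a+1+i) (by ring) ω]
  simp

lemma Sab_add (f : ∀ j, 𝒳 j → ℝ) (X : ∀ j, Ω → 𝒳 j) (a l l' : ℕ) (ω : Ω) : Sab f X a (l + l') ω = Sab f X a l ω + Sab f X (a + l) l' ω := by
  unfold Sab
  have e' : ∀ a b, a = b → ∀ ω, f a (X a ω) = f b (X b ω) := by rintro a b rfl ω; rfl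
  rw [Finset.sum_range_add, Finset.sum_congr rfl fun i _ => e' (a + (l+i)) (a+l+i) (by ring) ω]

lemma Sab_meas (hM : IsInhomMarkov μ X κ) {f : ∀ j, 𝒳 j → ℝ} (hf : MB f) (a l : ℕ) : Measurable (Sab f X a l) := by
  unfold Sab
  exact Finset.measurable_sum _ fun i _ => (hf.1 _).comp (hM.meas _)

lemma Sab_bdd {f : ∀ j, 𝒳 j → ℝ} (hf : MB f) : ∃ C : ℝ, 0 ≤ C ∧ ∀ a l ω, |Sab f X a l ω| ≤ l * C := by
  obtain ⟨_, C, hC, h⟩ := hf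
  refine ⟨C, hC, fun a l ω => ?_⟩
  unfold Sab
  refine (Finset.abs_sum_le_sum_abs _ _).trans ?_
  refine (Finset.sum_le_sum fun i _ => h _ _).trans ?_
  simp

/-- conditional mean and variance -/
def hh (κ : ∀ j n, Kernel (𝒳 j) (𝒳 (j + n))) (f : ∀ j, 𝒳 j → ℝ) := Lin κ (fun _ => f)

def qq (κ : ∀ j n, Kernel (𝒳 j) (𝒳 (j + n))) (f : ∀ j, 𝒳 j → ℝ) (l : ℕ) (j : ℕ) (x : 𝒳 j) : ℝ :=
  (∫ y, hh κ f l (j + 1) y ^ 2 ∂κ j 1 x) + (-1) * (∫ y, hh κ f l (j + 1) y ∂κ j 1 x) ^ 2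

def GG (κ : ∀ j n, Kernel (𝒳 j) (𝒳 (j + n))) (f : ∀ j, 𝒳 j → ℝ) := Lin κ (qq κ f)

lemma hh_MB (hM : IsInhomMarkov μ X κ) {f : ∀ j, 𝒳 j → ℝ} (hf : MB f) (l : ℕ) : MB (hh κ f l) := Lin_MB hM (fun _ => hf) l

lemma qq_MB (hM : IsInhomMarkov μ X κ) {f : ∀ j, 𝒳 j → ℝ} (hf : MB f) (l : ℕ) : MB (qq κ f l) := by
  have := ((hh_MB hM hf l).sq.ker hM).comb ((hh_MB hM hf l).ker hM).sq 1 (-1)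
  simp only [one_mul] at this
  exact this

lemma GG_MB (hM : IsInhomMarkov μ X κ) {f : ∀ j, 𝒳 j → ℝ} (hf : MB f) (l : ℕ) : MB (GG κ f l) := Lin_MB hM (qq_MB hM hf) l

lemma qq_nonneg (hM : IsInhomMarkov μ X κ) {f : ∀ j, 𝒳 j → ℝ} (hf : MB f) (l j : ℕ) (x : 𝒳 j) : 0 ≤ qq κ f l j x := by
  have := hM.isMarkovKernel j 1
  set m := ∫ y, hh κ f l (j + 1) y ∂κ j 1 x with hm
  have h1 : 0 ≤ ∫ y, (hh κ f l (j + 1) y - m) ^ 2 ∂κ j 1 x := integral_nonneg fun y => by positivity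
  have i1 := (hh_MB hM hf l).int (j+1) (κ j 1 x)
  have i2 := (hh_MB hM hf l).sq.int (j+1) (κ j 1 x)
  have e : ∫ y, (hh κ f l (j + 1) y - m) ^ 2 ∂κ j 1 x = qq κ f l j x := by
    have : (fun y => (hh κ f l (j + 1) y - m) ^ 2) = fun y => hh κ f l (j + 1) y ^ 2 + (-(2 * m)) * hh κ f l (j + 1) y + m ^ 2 := by
      ext y; ring
    rw [this, int3 i2 i1 (integrable_const _), ← hm, qq, ← hm]
    simp; ring
  rwa [e] at h1

lemma GG_nonneg (hM : IsInhomMarkov μ X κ) {f : ∀ j, 𝒳 j → ℝ} (hf : MB f) (l : ℕ) : ∀ j x, 0 ≤ GG κ f l j x := by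
  induction l with
  | zero => intro j x; exact le_rfl
  | succ l ih => intro j x; exact add_nonneg (qq_nonneg hM hf l j x) (integral_nonneg fun y => ih _ y)

lemma int_ker_eq (hM : IsInhomMarkov μ X κ) {g : ∀ j, 𝒳 j → ℝ} (hg : MB g) (j : ℕ) {ξ : Ω → ℝ} (hξ : Measurable[pastSigma X j] ξ) 
    (hA : ∃ A, ∀ ω, ‖ξ ω‖ ≤ A) :
    ∫ ω, ξ ω * g (j + 1) (X (j + 1) ω) ∂μ = ∫ ω, ξ ω * (∫ y, g (j+1) y ∂κ j 1 (X j ω)) ∂μ := by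
  obtain ⟨h1, B, hB, h2⟩ := hg
  obtain ⟨A, hA⟩ := hA
  exact L0 hM j 1 hξ hA (h1 _) (h2 _)

lemma MB.intX (hM : IsInhomMarkov μ X κ) {g : ∀ j, 𝒳 j → ℝ} (hg : MB g) (j : ℕ) {ξ : Ω → ℝ} (hξ : Measurable ξ) 
    (hA : ∃ A, ∀ ω, ‖ξ ω‖ ≤ A) : Integrable (fun ω => ξ ω * g j (X j ω)) μ := by
  obtain ⟨h1, B, hB, h2⟩ := hg
  obtain ⟨A, hA⟩ := hA
  refine int_bdd (B := A * B) _ (hξ.mul ((h1 j).comp (hM.meas j))) fun ω => ?_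
  rw [norm_mul]
  exact mul_le_mul (hA ω) (h2 _ _) (norm_nonneg _) ((norm_nonneg _).trans (hA ω))

lemma hh_mean (hM : IsInhomMarkov μ X κ) {f : ∀ j, 𝒳 j → ℝ} (hf : MB f) (h0 : ∀ j, ∫ ω, f j (X j ω) ∂μ = 0) (l : ℕ) :
    ∀ j, ∫ ω, hh κ f l j (X j ω) ∂μ = 0 := by
  induction l with
  | zero => intro j; simp [hh, Lin]
  | succ l ih =>
    intro j
    have h1 := int_ker_eq hM (hh_MB hM hf l) j (ξ := fun _ => 1) measurable_const ⟨1, by simp⟩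
    have i1 := MB.intX hM hf j (ξ := fun _ => 1) measurable_const ⟨1, by simp⟩
    have i2 := MB.intX hM ((hh_MB hM hf l).ker hM) j (ξ := fun _ => 1) measurable_const ⟨1, by simp⟩
    simp only [one_mul] at h1 i1 i2
    have : ∫ ω, hh κ f (l+1) j (X j ω) ∂μ = ∫ ω, (f j (X j ω) + ∫ y, hh κ f l (j+1) y ∂κ j 1 (X j ω)) ∂μ := rfl
    rw [this, integral_add i1 i2, h0, ← h1, ih]; simp

lemma decomp (hM : IsInhomMarkov μ X κ) {f : ∀ j, 𝒳 j → ℝ} (hf : MB f) (l : ℕ) :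
    ∀ j (ξ : Ω → ℝ), Measurable[pastSigma X j] ξ → (∃ A, ∀ ω, ‖ξ ω‖ ≤ A) → 
    ∫ ω, (ξ ω + Sab f X j l ω) ^ 2 ∂μ = (∫ ω, (ξ ω + hh κ f l j (X j ω)) ^ 2 ∂μ) + ∫ ω, GG κ f l j (X j ω) ∂μ := by
  induction l with
  | zero => intro j ξ hξ _; simp [hh, GG, Lin, Sab]
  | succ l ih =>
    intro j ξ hξ ⟨A, hA⟩
    obtain ⟨hf1, B, hB, hf2⟩ := id hf
    set ξ' : Ω → ℝ := fun ω => ξ ω + f j (X j ω) with hξ'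
    have hξ'm : Measurable[pastSigma X j] ξ' := hξ.add ((hf1 j).comp (X_past X j))
    have hb : ∃ A, ∀ ω, ‖ξ' ω‖ ≤ A := ⟨A + B, fun ω => (norm_add_le _ _).trans (add_le_add (hA ω) (hf2 _ _))⟩
    have hξ'm' := hξ'm.mono (past_le X hM.meas j) le_rfl
    have h1 := ih (j+1) ξ' (hξ'm.mono (past_mono X j) le_rfl) hb
    have hhM := hh_MB hM hf l
    have e0 := int_ker_eq hM (GG_MB hM hf l) j (ξ := fun _ => 1) measurable_const ⟨1, by simp⟩
    have e1 := int_ker_eq hM hhM j hξ'm hb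
    have e2 := int_ker_eq hM hhM.sq j (ξ := fun _ => 1) measurable_const ⟨1, by simp⟩
    have iξ : Integrable (fun ω => ξ' ω ^ 2) μ := by
      obtain ⟨A', hA'⟩ := hb
      refine int_bdd (B := A' ^ 2) _ (hξ'm'.pow_const 2) fun ω => ?_
      rw [norm_pow]; gcongr; exact hA' ω
    have j1 := MB.intX hM hhM (j+1) hξ'm' hb
    have j2 := MB.intX hM hhM.sq (j+1) (ξ := fun _ => 1) measurable_const ⟨1, by simp⟩
    have j3 := MB.intX hM (hhM.ker hM) j hξ'm' hb
    have j4 := MB.intX hM (hhM.sq.ker hM) j (ξ := fun _ => 1) measurable_const ⟨1, by simp⟩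
    have j5 := MB.intX hM (hhM.ker hM).sq j (ξ := fun _ => 1) measurable_const ⟨1, by simp⟩
    have j6 := MB.intX hM ((GG_MB hM hf l).ker hM) j (ξ := fun _ => 1) measurable_const ⟨1, by simp⟩
    have j7 := MB.intX hM (qq_MB hM hf l) j (ξ := fun _ => 1) measurable_const ⟨1, by simp⟩
    simp only [one_mul] at e0 e2 j2 j4 j5 j6 j7
    have l1 : ∫ ω, (ξ ω + Sab f X j (l+1) ω) ^ 2 ∂μ = ∫ ω, (ξ' ω + Sab f X (j+1) l ω) ^ 2 ∂μ := by
      congr 1; ext ω; rw [Sab_succ, hξ']; ring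
    have l2 : ∫ ω, (ξ' ω + hh κ f l (j+1) (X (j+1) ω)) ^ 2 ∂μ = (∫ ω, ξ' ω ^ 2 ∂μ) + 2 * (∫ ω, ξ' ω * hh κ f l (j+1) (X (j+1) ω) ∂μ)
        + ∫ ω, hh κ f l (j+1) (X (j+1) ω) ^ 2 ∂μ := by
      rw [← int3 iξ j1 j2]
      congr 1; ext ω; ring
    have l3 : ∫ ω, (ξ ω + hh κ f (l+1) j (X j ω)) ^ 2 ∂μ = (∫ ω, ξ' ω ^ 2 ∂μ) + 2 * (∫ ω, ξ' ω * (∫ y, hh κ f l (j+1) y ∂κ j 1 (X j ω)) ∂μ)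
        + ∫ ω, (∫ y, hh κ f l (j+1) y ∂κ j 1 (X j ω)) ^ 2 ∂μ := by
      rw [← int3 iξ j3 j5]
      congr 1; ext ω; simp only [hξ', hh, Lin]; ring
    have l4 : ∫ ω, GG κ f (l+1) j (X j ω) ∂μ = (∫ ω, qq κ f l j (X j ω) ∂μ) + ∫ ω, (∫ y, GG κ f l (j+1) y ∂κ j 1 (X j ω)) ∂μ := by
      rw [← integral_add j7 j6]; rfl
    have l5 : ∫ ω, qq κ f l j (X j ω) ∂μ = (∫ ω, (∫ y, hh κ f l (j + 1) y ^ 2 ∂κ j 1 (X j ω)) ∂μ) 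
        + (-1) * ∫ ω, (∫ y, hh κ f l (j+1) y ∂κ j 1 (X j ω)) ^ 2 ∂μ := by
      rw [← integral_const_mul, ← integral_add j4 (j5.const_mul _)]; rfl
    rw [l1, h1, l2, l3, l4, l5, e0, e1, e2]
    ring

end WBE
end
end

section
open MeasureTheory ProbabilityTheory Filter
open scoped ENNReal NNReal
noncomputable section
namespace WBE
open Set Topology
set_option linter.unusedSectionVars false

variable {Ω : Type*} [mΩ : MeasurableSpace Ω] {𝒳 : ℕ → Type*} [∀ j, MeasurableSpace (𝒳 j)]
variable {μ : Measure Ω} [IsProbabilityMeasure μ] {X : ∀ j, Ω → 𝒳 j} {κ : ∀ j n, Kernel (𝒳 j) (𝒳 (j + n))}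

lemma near_mean {α : Type*} [MeasurableSpace α] (ν : Measure α) [IsProbabilityMeasure ν] {g : α → ℝ} (hg : Integrable g ν)
    {c ρ : ℝ} (h : ∀ᵐ x ∂ν, |g x - c| ≤ ρ) : |(∫ x, g x ∂ν) - c| ≤ ρ := by
  have := norm_integral_le_of_norm_le_const (μ := ν) (f := fun x => g x - c) h
  rw [integral_sub hg (integrable_const _)] at this
  simpa using this

lemma hh_bdd (hM : IsInhomMarkov μ X κ) {n₀ : ℕ} {γ : ℝ} (hD : Doeb κ n₀ γ) {f : ∀ j, 𝒳 j → ℝ} (hf : MB f) {C : ℝ} (hC : 0 ≤ C)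
    (hfC : ∀ j x, |f j x| ≤ C) (h0 : ∀ j, ∫ ω, f j (X j ω) ∂μ = 0) (l j : ℕ) :
    ∀ᵐ x ∂μ.map (X j), |hh κ f l j x| ≤ 2 * (n₀ * C / γ) := by
  have hp : IsProbabilityMeasure (μ.map (X j)) := Measure.isProbabilityMeasure_map (hM.meas j).aemeasurable
  obtain ⟨c, hc⟩ := Lin_near hM hD (fun _ => hf) hC (fun _ j => ae_of_all _ (hfC j)) l j
  have hm := near_mean (μ.map (X j)) ((hh_MB hM hf l).int j _) hc
  rw [integral_map (hM.meas j).aemeasurable ((hh_MB hM hf l).1 j).aestronglyMeasurable, hh_mean hM hf h0 l j] at hm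
  filter_upwards [hc] with x hx
  have e : hh κ f l j x = Lin κ (fun _ => f) l j x := rfl
  rw [e]
  rw [abs_le] at *
  constructor <;> linarith [hx.1, hx.2, hm.1, hm.2]

lemma qq_bdd (hM : IsInhomMarkov μ X κ) {f : ∀ j, 𝒳 j → ℝ} (hf : MB f) {H : ℝ} 
    (hH : ∀ l j, ∀ᵐ x ∂μ.map (X j), |hh κ f l j x| ≤ H) (l j : ℕ) :
    ∀ᵐ x ∂μ.map (X j), |qq κ f l j x| ≤ H ^ 2 := by
  filter_upwards [ae_ker hM (hH l (j+1))] with x hx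
  have := hM.isMarkovKernel j 1
  rw [abs_of_nonneg (qq_nonneg hM hf l j x), qq]
  have h1 : ∫ y, hh κ f l (j + 1) y ^ 2 ∂κ j 1 x ≤ ∫ y, H ^ 2 ∂κ j 1 x := by
    refine integral_mono_ae ((hh_MB hM hf l).sq.int _ _) (integrable_const _) ?_
    filter_upwards [hx] with y hy
    exact sq_le_sq' (by linarith [(abs_le.1 hy).1]) (abs_le.1 hy).2
  simp at h1
  nlinarith [sq_nonneg (∫ y, hh κ f l (j + 1) y ∂κ j 1 x)]

lemma GG_bdd (hM : IsInhomMarkov μ X κ) {n₀ : ℕ} {γ : ℝ} (hD : Doeb κ n₀ γ) {f : ∀ j, 𝒳 j → ℝ} (hf : MB f) {H : ℝ} 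
    (hH : ∀ l j, ∀ᵐ x ∂μ.map (X j), |hh κ f l j x| ≤ H) (l j : ℕ) {A : ℝ} (hA : ∫ ω, GG κ f l j (X j ω) ∂μ ≤ A) :
    ∀ᵐ x ∂μ.map (X j), GG κ f l j x ≤ A + 2 * (n₀ * H ^ 2 / γ) := by
  have hp : IsProbabilityMeasure (μ.map (X j)) := Measure.isProbabilityMeasure_map (hM.meas j).aemeasurable
  obtain ⟨c, hc⟩ := Lin_near hM hD (qq_MB hM hf) (sq_nonneg H) (qq_bdd hM hf hH) l j
  have hm := near_mean (μ.map (X j)) ((GG_MB hM hf l).int j _) hc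
  rw [integral_map (hM.meas j).aemeasurable ((GG_MB hM hf l).1 j).aestronglyMeasurable] at hm
  filter_upwards [hc] with x hx
  have e : GG κ f l j x = Lin κ (qq κ f) l j x := rfl
  rw [e]
  rw [abs_le] at *
  linarith [hx.1, hx.2, hm.1, hm.2]

lemma CS {α : Type*} [MeasurableSpace α] (ν : Measure α) [IsProbabilityMeasure ν] {v p q : α → ℝ} (hv : Integrable v ν)
    (hp : Integrable p ν) (hq : Integrable q ν) (hv0 : ∀ x, 0 ≤ v x) (hp0 : ∀ x, 0 < p x) (hq0 : ∀ x, 0 < q x)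
    (h : ∀ᵐ x ∂ν, v x ^ 2 ≤ p x * q x) : (∫ x, v x ∂ν) ^ 2 ≤ (∫ x, p x ∂ν) * ∫ x, q x ∂ν := by
  have hV : 0 ≤ ∫ x, v x ∂ν := integral_nonneg hv0
  have hP : 0 < ∫ x, p x ∂ν := by
    rw [integral_pos_iff_support_of_nonneg (fun x => (hp0 x).le) hp]
    have : Function.support p = univ := by ext x; simp [(hp0 x).ne']
    rw [this]; simp
  have hQ : 0 ≤ ∫ x, q x ∂ν := integral_nonneg fun x => (hq0 x).le
  have key : ∀ t : ℝ, 0 < t → 2 * ∫ x, v x ∂ν ≤ t * (∫ x, p x ∂ν) + t⁻¹ * ∫ x, q x ∂ν := by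
    intro t ht
    rw [← integral_const_mul, ← integral_const_mul, ← integral_const_mul, ← integral_add (hp.const_mul _) (hq.const_mul _)]
    refine integral_mono_ae (hv.const_mul _) ((hp.const_mul _).add (hq.const_mul _)) ?_
    filter_upwards [h] with x hx
    have hpx := hp0 x
    have hqx := hq0 x
    apply le_of_sq_le_sq _ (by positivity)
    have : (t * p x + t⁻¹ * q x) ^ 2 = (t * p x - t⁻¹ * q x) ^ 2 + 4 * (p x * q x) := by
      field_simp; ring
    rw [this]
    nlinarith [sq_nonneg (t * p x - t⁻¹ * q x)]
  rcases hV.eq_or_lt with h0 | h0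
  · rw [← h0]; simp; positivity
  · have := key ((∫ x, v x ∂ν) / ∫ x, p x ∂ν) (by positivity)
    set V := ∫ x, v x ∂ν
    set P := ∫ x, p x ∂ν
    set Q := ∫ x, q x ∂ν
    rw [div_mul_cancel₀ _ hP.ne', inv_div] at this
    have h2 : V ≤ P / V * Q := by linarith
    rw [div_mul_eq_mul_div, le_div_iff₀ h0] at h2
    nlinarith

lemma exp_quad {y : ℝ} (hy : |y| ≤ 1) : Real.exp y ≤ 1 + y + y ^ 2 := by
  have := Real.abs_exp_sub_one_sub_id_le hy
  linarith [le_abs_self (Real.exp y - 1 - y)]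

lemma exp_step (hM : IsInhomMarkov μ X κ) {n₀ : ℕ} {γ : ℝ} (hD : Doeb κ n₀ γ) {f : ∀ j, 𝒳 j → ℝ} (hf : MB f) {H : ℝ} (hH0 : 0 ≤ H)
    (hH : ∀ l j, ∀ᵐ x ∂μ.map (X j), |hh κ f l j x| ≤ H) {A r : ℝ} (hr1 : 4 * |r| * H ≤ 1) 
    (hr2 : 2 * (4 * r ^ 2) * (A + 2 * (n₀ * H ^ 2 / γ)) ≤ 1) (l : ℕ) :
    ∀ j, ∫ ω, GG κ f l j (X j ω) ∂μ ≤ A → ∀ᵐ x ∂μ.map (X j), 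
      U κ (fun j x => Real.exp (r * f j x)) (fun _ _ => 1) l j x ^ 2 ≤ Real.exp (2 * r * hh κ f l j x) * (1 + 2 * (4 * r ^ 2) * GG κ f l j x) := by
  have hwM : MB (fun j x => Real.exp (r * f j x)) := by
    have := (hf.comb MB.one r 0).exp
    simpa using this
  induction l with
  | zero => intro j _; simp [U, hh, GG, Lin]
  | succ l ih =>
    intro j hA
    set lam := 4 * r ^ 2 with hlam
    have hlam0 : 0 ≤ lam := by positivity
    have hhM := hh_MB hM hf l
    have hGM := GG_MB hM hf l
    have hVM := U_MB hM hwM MB.one l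
    have e0 := int_ker_eq hM hGM j (ξ := fun _ => 1) measurable_const ⟨1, by simp⟩
    have j6 := MB.intX hM (hGM.ker hM) j (ξ := fun _ => 1) measurable_const ⟨1, by simp⟩
    have j7 := MB.intX hM (qq_MB hM hf l) j (ξ := fun _ => 1) measurable_const ⟨1, by simp⟩
    simp only [one_mul] at e0 j6 j7
    have l4 : ∫ ω, GG κ f (l+1) j (X j ω) ∂μ = (∫ ω, qq κ f l j (X j ω) ∂μ) + ∫ ω, (∫ y, GG κ f l (j+1) y ∂κ j 1 (X j ω)) ∂μ := by
      rw [← integral_add j7 j6]; rfl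
    have hA' : ∫ ω, GG κ f l (j+1) (X (j+1) ω) ∂μ ≤ A := by
      have : 0 ≤ ∫ ω, qq κ f l j (X j ω) ∂μ := integral_nonneg fun ω => qq_nonneg hM hf l j _
      rw [e0]; linarith
    have Vnn : ∀ l j x, 0 ≤ U κ (fun j x => Real.exp (r * f j x)) (fun _ _ => 1) l j x := by
      intro l
      induction l with
      | zero => intro j x; simp [U]
      | succ l ih => intro j x; rw [U]; exact mul_nonneg (Real.exp_pos _).le (integral_nonneg fun y => ih _ y)
    filter_upwards [ae_ker hM (ih (j+1) hA'), ae_ker hM (hH l (j+1)), ae_ker hM (GG_bdd hM hD hf hH l (j+1) hA')] with x h1 h2 h3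
    have := hM.isMarkovKernel j 1
    set k := κ j 1 x
    have iV := hVM.int (j+1) k
    have ih1 := hhM.int (j+1) k
    have ih2 := hhM.sq.int (j+1) k
    have iG := hGM.int (j+1) k
    have iE : Integrable (fun y => Real.exp (2 * r * hh κ f l (j+1) y)) k := by
      have := (hhM.comb MB.one (2*r) 0).exp.int (j+1) k
      simpa using this
    have iW : Integrable (fun y => 1 + 2 * lam * GG κ f l (j+1) y) k := (integrable_const _).add (iG.const_mul _)
    have cs := CS k iV iE iW (Vnn l (j+1)) (fun y => Real.exp_pos _) (fun y => by have := GG_nonneg hM hf l (j+1) y; positivity) h1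
    set m := ∫ y, hh κ f l (j + 1) y ∂k with hm
    set g := ∫ y, GG κ f l (j + 1) y ∂k with hg
    have hg0 : 0 ≤ g := integral_nonneg fun y => GG_nonneg hM hf l (j+1) y
    have hgle : g ≤ A + 2 * (n₀ * H ^ 2 / γ) := by
      have := integral_mono_ae iG (integrable_const _) h3
      simpa using this
    have hmH : |m| ≤ H := by
      have := norm_integral_le_of_norm_le_const (μ := k) (f := fun y => hh κ f l (j + 1) y) h2
      simpa using this
    have eW : ∫ y, (1 + 2 * lam * GG κ f l (j+1) y) ∂k = 1 + 2 * lam * g := by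
      rw [integral_add (integrable_const _) (iG.const_mul _), integral_const_mul]; simp [hg]
    have eq : qq κ f l j x = (∫ y, hh κ f l (j + 1) y ^ 2 ∂k) + (-1) * m ^ 2 := rfl
    set q := qq κ f l j x with hq
    have hq0 : 0 ≤ q := qq_nonneg hM hf l j x
    have bE : ∫ y, Real.exp (2 * r * hh κ f l (j+1) y) ∂k ≤ Real.exp (2 * r * m) * (1 + lam * q) := by
      have b1 : ∫ y, Real.exp (2 * r * hh κ f l (j+1) y) ∂k ≤ 
          ∫ y, (Real.exp (2 * r * m) * (4 * r ^ 2)) * (hh κ f l (j+1) y ^ 2) + (Real.exp (2 * r * m) * (2 * r - 8 * r ^ 2 * m)) * hh κ f l (j+1) y 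
            + Real.exp (2 * r * m) * (1 - 2 * r * m + 4 * r ^ 2 * m ^ 2) ∂k := by
        refine integral_mono_ae iE (((ih2.const_mul _).add (ih1.const_mul _)).add (integrable_const _)) ?_
        filter_upwards [h2] with y hy
        have c1 : |2 * r * (hh κ f l (j+1) y - m)| ≤ 1 := by
          rw [abs_mul, abs_mul, abs_two]
          have := abs_sub (hh κ f l (j+1) y) m
          have : |hh κ f l (j+1) y - m| ≤ 2 * H := by linarith
          have := mul_le_mul_of_nonneg_left this (show 0 ≤ 2 * |r| by positivity)
          linarith
        have c2 := exp_quad c1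
        rw [show 2 * r * hh κ f l (j+1) y = 2 * r * m + 2 * r * (hh κ f l (j+1) y - m) by ring, Real.exp_add]
        have c3 := mul_le_mul_of_nonneg_left c2 (Real.exp_pos (2 * r * m)).le
        refine c3.trans (le_of_eq ?_)
        ring
      refine b1.trans (le_of_eq ?_)
      rw [int3 (ih2.const_mul _) ih1 (integrable_const _), integral_const_mul, ← hm, eq, hlam]
      simp
      ring
    have eV : U κ (fun j x => Real.exp (r * f j x)) (fun _ _ => 1) (l+1) j x = 
      Real.exp (r * f j x) * ∫ y, U κ (fun j x => Real.exp (r * f j x)) (fun _ _ => 1) l (j+1) y ∂k := rfl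
    have eh : hh κ f (l+1) j x = f j x + m := rfl
    have eG : GG κ f (l+1) j x = q + g := rfl
    rw [eV, eh, eG, mul_pow, show 2 * r * (f j x + m) = (r * f j x + r * f j x) + 2 * r * m by ring, Real.exp_add, Real.exp_add, ← pow_two, mul_assoc]
    refine mul_le_mul_of_nonneg_left (cs.trans ?_) (by positivity)
    rw [eW]
    have hw0 : 0 ≤ 1 + 2 * lam * g := by positivity
    refine (mul_le_mul_of_nonneg_right bE hw0).trans ?_
    rw [mul_assoc]
    refine mul_le_mul_of_nonneg_left ?_ (Real.exp_pos _).le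
    have : 2 * lam * g ≤ 1 := by
      have := mul_le_mul_of_nonneg_left hgle (show 0 ≤ 2 * lam by positivity)
      linarith
    have := mul_le_mul_of_nonneg_left this (show 0 ≤ lam * q by positivity)
    nlinarith

end WBE
end
end

section
open MeasureTheory ProbabilityTheory Filter
open scoped ENNReal NNReal
noncomputable section
namespace WBE
open Set Topology
set_option linter.unusedSectionVars false

variable {Ω : Type*} [mΩ : MeasurableSpace Ω] {𝒳 : ℕ → Type*} [∀ j, MeasurableSpace (𝒳 j)]
variable {μ : Measure Ω} [IsProbabilityMeasure μ] {X : ∀ j, Ω → 𝒳 j} {κ : ∀ j n, Kernel (𝒳 j) (𝒳 (j + n))}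

lemma exp_le_two (hM : IsInhomMarkov μ X κ) {n₀ : ℕ} {γ : ℝ} (hD : Doeb κ n₀ γ) {f : ∀ j, 𝒳 j → ℝ} (hf : MB f) {H : ℝ} (hH0 : 0 ≤ H)
    (hH : ∀ l j, ∀ᵐ x ∂μ.map (X j), |hh κ f l j x| ≤ H) {A r : ℝ} (hr1 : 4 * |r| * H ≤ 1) 
    (hr2 : 2 * (4 * r ^ 2) * (A + 2 * (n₀ * H ^ 2 / γ)) ≤ 1) (a l : ℕ) (hA : ∫ ω, Sab f X a l ω ^ 2 ∂μ ≤ A) :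
    ∫ ω, Real.exp (r * Sab f X a l ω) ∂μ ≤ 2 := by
  have hp : IsProbabilityMeasure (μ.map (X a)) := Measure.isProbabilityMeasure_map (hM.meas a).aemeasurable
  have hwM : MB (fun j x => Real.exp (r * f j x)) := by
    have := (hf.comb MB.one r 0).exp
    simpa using this
  have hG : ∫ ω, GG κ f l a (X a ω) ∂μ ≤ A := by
    have := decomp hM hf l a (fun _ => 0) measurable_const ⟨0, by simp⟩
    simp only [zero_add] at this
    have h2 : 0 ≤ ∫ ω, hh κ f l a (X a ω) ^ 2 ∂μ := integral_nonneg fun ω => by positivity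
    linarith
  have h1 := exp_step hM hD hf hH0 hH hr1 hr2 l a hG
  have h2 := L1 hM hwM (MB.one (𝒳 := 𝒳) (𝕜 := ℝ)) l a (fun _ => 1) measurable_const ⟨1, by simp⟩
  simp only [one_mul, mul_one] at h2
  have h3 : ∫ ω, Real.exp (r * Sab f X a l ω) ∂μ = ∫ x, U κ (fun j x => Real.exp (r * f j x)) (fun _ _ => 1) l a x ∂μ.map (X a) := by
    rw [integral_map (hM.meas a).aemeasurable ((U_MB hM hwM MB.one l).1 a).aestronglyMeasurable, ← h2]
    congr 1; ext ω
    rw [Sab, Finset.mul_sum, Real.exp_sum]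
  rw [h3]
  have : ∫ x, U κ (fun j x => Real.exp (r * f j x)) (fun _ _ => 1) l a x ∂μ.map (X a) ≤ ∫ x, 2 ∂μ.map (X a) := by
    refine integral_mono_ae ((U_MB hM hwM MB.one l).int _ _) (integrable_const _) ?_
    filter_upwards [h1, hH l a, GG_bdd hM hD hf hH l a hG] with x h1 h2 h3
    have b1 : Real.exp (2 * r * hh κ f l a x) ≤ 2 := by
      have : 2 * r * hh κ f l a x ≤ 1 / 2 := by
        have := le_abs_self (2 * r * hh κ f l a x)
        rw [abs_mul, abs_mul, abs_two] at this
        have := mul_le_mul_of_nonneg_left h2 (show 0 ≤ 2 * |r| by positivity)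
        linarith
      refine (Real.exp_le_exp.2 this).trans ?_
      have := exp_quad (y := 1/2) (by rw [abs_of_pos] <;> norm_num)
      linarith
    have b2 : 1 + 2 * (4 * r ^ 2) * GG κ f l a x ≤ 2 := by
      have := mul_le_mul_of_nonneg_left h3 (show 0 ≤ 2 * (4 * r ^ 2) by positivity)
      linarith
    have b3 : 0 ≤ 1 + 2 * (4 * r ^ 2) * GG κ f l a x := by
      have := GG_nonneg hM hf l a x; positivity
    have : U κ (fun j x => Real.exp (r * f j x)) (fun _ _ => 1) l a x ^ 2 ≤ 2 ^ 2 := by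
      refine h1.trans ?_
      have := mul_le_mul b1 b2 b3 (by norm_num)
      linarith
    exact le_of_sq_le_sq this (by norm_num)
  simpa using this

lemma exp_sub_bd {z : ℂ} {s r : ℝ} (hr : 0 < r) (hz : ‖z‖ ≤ r / 2) :
    ‖Complex.exp (z * s) - 1‖ ≤ 2 * ‖z‖ / r * (Real.exp (r * s) + Real.exp (-r * s)) := by
  have h1 : ‖Complex.exp (z * s) - 1‖ ≤ ‖z * s‖ * Real.exp ‖z * s‖ := exp_sub_one_le (z * s)
  have h2 : ‖z * s‖ = ‖z‖ * |s| := by rw [norm_mul, Complex.norm_real, Real.norm_eq_abs]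
  rw [h2] at h1
  have h3 : Real.exp (‖z‖ * |s|) ≤ Real.exp (r / 2 * |s|) := Real.exp_le_exp.2 (by gcongr)
  have h4 : r / 2 * |s| ≤ Real.exp (r / 2 * |s|) := by linarith [Real.add_one_le_exp (r / 2 * |s|)]
  have h5 : Real.exp (r / 2 * |s|) * Real.exp (r / 2 * |s|) = Real.exp (r * |s|) := by rw [← Real.exp_add]; ring_nf
  have h6 : Real.exp (r * |s|) ≤ Real.exp (r * s) + Real.exp (-r * s) := by
    rcases abs_cases s with ⟨h, _⟩ | ⟨h, _⟩ <;> rw [h]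
    · linarith [Real.exp_pos (-r * s)]
    · rw [show r * -s = -r * s by ring]; linarith [Real.exp_pos (r * s)]
  calc _ ≤ ‖z‖ * |s| * Real.exp (‖z‖ * |s|) := h1
    _ = 2 * ‖z‖ / r * (r / 2 * |s| * Real.exp (‖z‖ * |s|)) := by field_simp
    _ ≤ 2 * ‖z‖ / r * (Real.exp (r / 2 * |s|) * Real.exp (r / 2 * |s|)) := by gcongr
    _ = 2 * ‖z‖ / r * Real.exp (r * |s|) := by rw [h5]
    _ ≤ _ := by gcongr

lemma exp_mom (hM : IsInhomMarkov μ X κ) {n₀ : ℕ} {γ : ℝ} (hD : Doeb κ n₀ γ) {f : ∀ j, 𝒳 j → ℝ} (hf : MB f) 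
    (h0 : ∀ j, ∫ ω, f j (X j ω) ∂μ = 0) (A : ℝ) (hA0 : 0 ≤ A) : ∃ r : ℝ, 0 < r ∧ ∀ a l, ∫ ω, Sab f X a l ω ^ 2 ∂μ ≤ A → 
      ∀ z : ℂ, ‖z‖ < r → ‖complexMGF (Sab f X a l) μ z - 1‖ ≤ 1 / 2 := by
  obtain ⟨_, C, hC, hfC⟩ := id hf
  have hγ1 := hD.2.1.1
  set H : ℝ := 2 * (n₀ * C / γ) with hHd
  have hH0 : 0 ≤ H := by positivity
  have hH := hh_bdd hM hD hf hC hfC h0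
  rw [← hHd] at hH
  set G : ℝ := A + 2 * (n₀ * H ^ 2 / γ) with hG
  have hG0 : 0 ≤ G := by positivity
  set r : ℝ := 1 / (4 * (1 + H + G)) with hr
  have hr0 : 0 < r := by positivity
  have e1 : r * (4 * (1 + H + G)) = 1 := by rw [hr]; field_simp
  have hr1 : 4 * r * H ≤ 1 := by nlinarith
  have hr14 : r ≤ 1 / 4 := by nlinarith
  have hr2 : 2 * (4 * r ^ 2) * G ≤ 1 := by
    have : r * G ≤ 1 / 4 := by nlinarith
    nlinarith [mul_nonneg hr0.le hG0]
  refine ⟨r / 16, by positivity, fun a l hS z hz => ?_⟩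
  have k1 := exp_le_two hM hD hf hH0 hH (A := A) (r := r) (by rwa [abs_of_pos hr0]) hr2 a l hS
  have k2 := exp_le_two hM hD hf hH0 hH (A := A) (r := -r) (by rwa [abs_neg, abs_of_pos hr0]) (by rw [neg_sq]; exact hr2) a l hS
  obtain ⟨C', hC', hb⟩ := Sab_bdd (X := X) hf
  have hm := Sab_meas hM hf (X := X) a l
  have iE : ∀ t : ℝ, Integrable (fun ω => Real.exp (t * Sab f X a l ω)) μ := by
    intro t
    refine int_bdd (B := Real.exp (|t| * (l * C'))) _ (Real.measurable_exp.comp (hm.const_mul t)) fun ω => ?_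
    rw [Real.norm_of_nonneg (Real.exp_pos _).le]
    refine Real.exp_le_exp.2 ?_
    refine (le_abs_self _).trans ?_
    rw [abs_mul]; gcongr; exact hb a l ω
  have iZ : Integrable (fun ω => Complex.exp (z * Sab f X a l ω)) μ := by
    refine int_bdd (B := Real.exp (‖z‖ * (l * C'))) _ (Complex.measurable_exp.comp ((Complex.measurable_ofReal.comp hm).const_mul z)) fun ω => ?_
    refine (Complex.norm_exp_le_exp_norm _).trans (Real.exp_le_exp.2 ?_)
    rw [norm_mul, Complex.norm_real]; gcongr; exact hb a l ω
  have e : complexMGF (Sab f X a l) μ z - 1 = ∫ ω, (Complex.exp (z * Sab f X a l ω) - 1) ∂μ := by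
    rw [integral_sub iZ (integrable_const _)]; simp [complexMGF]
  rw [e]
  calc _ ≤ ∫ ω, 2 * ‖z‖ / r * (Real.exp (r * Sab f X a l ω) + Real.exp (-r * Sab f X a l ω)) ∂μ := by
        refine norm_integral_le_of_norm_le (((iE r).add (iE (-r))).const_mul _) (ae_of_all _ fun ω => ?_)
        exact exp_sub_bd hr0 (by linarith)
    _ = 2 * ‖z‖ / r * ((∫ ω, Real.exp (r * Sab f X a l ω) ∂μ) + ∫ ω, Real.exp (-r * Sab f X a l ω) ∂μ) := by
        rw [integral_const_mul, integral_add (iE r) (iE (-r))]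
    _ ≤ 2 * ‖z‖ / r * (2 + 2) := by gcongr
    _ ≤ 1 / 2 := by
        rw [div_mul_eq_mul_div, div_le_iff₀ hr0]; linarith

end WBE
end
end

section
open MeasureTheory ProbabilityTheory Filter
open scoped ENNReal NNReal
noncomputable section
namespace WBE
open Set Topology
set_option linter.unusedSectionVars false

variable {Ω : Type*} [mΩ : MeasurableSpace Ω] {𝒳 : ℕ → Type*} [∀ j, MeasurableSpace (𝒳 j)]
variable {μ : Measure Ω} [IsProbabilityMeasure μ] {X : ∀ j, Ω → 𝒳 j} {κ : ∀ j n, Kernel (𝒳 j) (𝒳 (j + n))}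

lemma mgf_mult (hM : IsInhomMarkov μ X κ) {n₀ : ℕ} {γ : ℝ} (hD : Doeb κ n₀ γ) {f : ∀ j, 𝒳 j → ℝ} (hf : MB f) :
    ∃ r : ℝ, 0 < r ∧ ∀ z : ℂ, ‖z‖ < r → ∀ a l₁ l₂, complexMGF (Sab f X a l₁) μ z ≠ 0 ∧
      ‖complexMGF (Sab f X a (l₁ + l₂)) μ z - complexMGF (Sab f X a l₁) μ z * complexMGF (Sab f X (a + l₁) l₂) μ z‖ ≤
        1 / 2 * ‖complexMGF (Sab f X a l₁) μ z * complexMGF (Sab f X (a + l₁) l₂) μ z‖ := by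
  obtain ⟨hfm, C, hC, hfC⟩ := id hf
  have hγ1 := hD.2.1.1
  have hn : (0:ℝ) < n₀ := by exact_mod_cast hD.1
  set ε : ℝ := 3 / 8 * (γ / 68) * γ with hε
  have hε0 : 0 < ε := by positivity
  have hl : 0 < Real.log (1 + ε) := Real.log_pos (by linarith)
  refine ⟨Real.log (1 + ε) / (n₀ * (C + 1)), by positivity, fun z hz a l₁ l₂ => ?_⟩
  set r := Real.log (1 + ε) / (n₀ * (C + 1)) with hr
  have hr0 : 0 < r := by positivity
  have hb : ∀ j x, ‖z * (f j x : ℂ)‖ ≤ C * r := by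
    intro j x
    rw [norm_mul, Complex.norm_real, mul_comm]
    exact mul_le_mul (hfC j x) hz.le (norm_nonneg _) hC
  have hBn : Real.exp (C * r) ^ n₀ ≤ 1 + ε := by
    rw [← Real.exp_nat_mul, ← Real.le_log_iff_exp_le (by linarith)]
    have : (n₀ * (C + 1)) * r = Real.log (1 + ε) := by rw [hr]; field_simp
    nlinarith
  refine almost_mul hM hD (w := fun j x => Complex.exp (z * f j x)) ⟨fun j => ?_, Real.exp (C * r), by positivity, ?_⟩ (B := Real.exp (C * r))
    (η := Real.exp (C * r) ^ n₀ - 1) (Real.one_le_exp (by positivity)) ?_ ?_ (by ring) (by linarith)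
    (fun a l => complexMGF (Sab f X a l) μ z) ?_ a l₁ l₂
  · have := hfm j; fun_prop
  · intro j x; exact (Complex.norm_exp_le_exp_norm _).trans (Real.exp_le_exp.2 (hb j x))
  · intro j x; exact (Complex.norm_exp_le_exp_norm _).trans (Real.exp_le_exp.2 (hb j x))
  · intro j x
    have := Complex.norm_exp_sub_sum_le_exp_norm_sub_sum (z * f j x) 1
    simp only [Finset.range_one, Finset.sum_singleton, pow_zero, Nat.factorial_zero, Nat.cast_one, div_one] at this
    refine this.trans ?_
    have := Real.exp_le_exp.2 (hb j x)
    linarith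
  · intro a l
    unfold complexMGF Sab
    congr 1
    ext ω
    rw [← Complex.exp_sum]
    congr 1
    push_cast
    rw [Finset.mul_sum]

lemma Sab_mean (hM : IsInhomMarkov μ X κ) {f : ∀ j, 𝒳 j → ℝ} (hf : MB f)
    (h0 : ∀ j, ∫ ω, f j (X j ω) ∂μ = 0) (a l : ℕ) : ∫ ω, Sab f X a l ω ∂μ = 0 := by
  unfold Sab
  obtain ⟨hfm, C, hC, hfC⟩ := id hf
  rw [integral_finsetSum]
  · exact Finset.sum_eq_zero fun i _ => h0 _
  · intro i _
    exact int_bdd (B := C) _ ((hfm _).comp (hM.meas _)) fun ω => hfC _ _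

lemma blocks (hM : IsInhomMarkov μ X κ) {n₀ : ℕ} {γ : ℝ} (hD : Doeb κ n₀ γ) {f : ∀ j, 𝒳 j → ℝ} (hf : MB f)
    (h0 : ∀ j, ∫ ω, f j (X j ω) ∂μ = 0) : ∃ r : ℝ, 0 < r ∧ ∀ l a, ∃ (k : ℕ) (Λ : ℂ → ℂ), 
      DifferentiableOn ℂ Λ (Metric.ball 0 r) ∧ (∀ z ∈ Metric.ball (0:ℂ) r, Complex.exp (Λ z) = complexMGF (Sab f X a l) μ z) ∧
      (∀ z ∈ Metric.ball (0:ℂ) r, ‖Λ z‖ ≤ 2 * (k + 1)) ∧ IsQ Λ (∫ ω, Sab f X a l ω ^ 2 ∂μ) ∧ k ≤ ∫ ω, Sab f X a l ω ^ 2 ∂μ := by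
  obtain ⟨hfm, C, hC, hfC⟩ := id hf
  obtain ⟨r₀, hr₀, hmul⟩ := mgf_mult hM hD hf
  set V : ℕ → ℕ → ℝ := fun a l => ∫ ω, Sab f X a l ω ^ 2 ∂μ with hV
  set Z : ℕ → ℕ → ℂ → ℂ := fun a l => complexMGF (Sab f X a l) μ with hZ
  obtain ⟨C', hC', hSb⟩ := Sab_bdd (X := X) hf
  have hZQ : ∀ a l, IsQ (fun z => Z a l z - 1) (V a l) := fun a l =>
    mgf_Q μ _ (Sab_meas hM hf a l).aemeasurable (l * C') (ae_of_all _ (hSb a l)) (Sab_mean hM hf h0 a l)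
  have hZd : ∀ a l, Differentiable ℂ (Z a l) := fun a l =>
    mgf_diff μ _ (Sab_meas hM hf a l).aemeasurable (l * C') (ae_of_all _ (hSb a l))
  set R : ℕ → ℕ → ℕ → ℂ → ℂ := fun a l₁ l₂ z => Z a (l₁ + l₂) z * (Z a l₁ z * Z (a + l₁) l₂ z)⁻¹ with hR
  have hne : ∀ a l z, z ∈ Metric.ball (0:ℂ) r₀ → Z a l z ≠ 0 := fun a l z hz => (hmul z (by simpa using hz) a l 0).1
  have hR1 : ∀ a l₁ l₂, ∀ z ∈ Metric.ball (0:ℂ) r₀, ‖R a l₁ l₂ z - 1‖ ≤ 1 / 2 := by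
    intro a l₁ l₂ z hz
    have h1 := (hmul z (by simpa using hz) a l₁ l₂).2
    have h2 : Z a l₁ z * Z (a + l₁) l₂ z ≠ 0 := mul_ne_zero (hne _ _ _ hz) (hne _ _ _ hz)
    have : R a l₁ l₂ z - 1 = (Z a (l₁ + l₂) z - Z a l₁ z * Z (a + l₁) l₂ z) / (Z a l₁ z * Z (a + l₁) l₂ z) := by
      simp only [hR]; rw [sub_div, div_self h2, div_eq_mul_inv]
    rw [this, norm_div, div_le_iff₀ (norm_pos_iff.2 h2)]
    exact h1
  have hRd : ∀ a l₁ l₂, DifferentiableOn ℂ (R a l₁ l₂) (Metric.ball 0 r₀) := by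
    intro a l₁ l₂
    refine (hZd _ _).differentiableOn.mul (DifferentiableOn.fun_inv ((hZd _ _).differentiableOn.mul (hZd _ _).differentiableOn) ?_)
    intro z hz
    exact mul_ne_zero (hne _ _ _ hz) (hne _ _ _ hz)
  have hRQ : ∀ a l₁ l₂, IsQ (fun z => Complex.log (R a l₁ l₂ z)) (V a (l₁ + l₂) + -(V a l₁ + V (a + l₁) l₂)) :=
    fun a l₁ l₂ => ((hZQ _ _).mul ((hZQ _ _).mul (hZQ _ _)).inv).log
  set D : ℝ := 2 / r₀ ^ 2 with hDd
  have hD0 : 0 ≤ D := by positivity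
  have hVadd : ∀ a l₁ l₂, |V a (l₁ + l₂) + -(V a l₁ + V (a + l₁) l₂)| ≤ D := by
    intro a l₁ l₂
    have hp := log_props (hRd a l₁ l₂) (hR1 a l₁ l₂)
    have := ((hRQ a l₁ l₂).schwarz hr₀ hp.1 hp.2.1).1
    rw [hDd]
    have e : (2:ℝ) / r₀ ^ 2 = 2 * (1 / r₀ ^ 2) := by ring
    rw [e]; linarith
  have hV1 : ∀ a, V a 1 ≤ C ^ 2 := by
    intro a
    simp only [hV]
    have : ∀ ω, Sab f X a 1 ω ^ 2 ≤ C ^ 2 := by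
      intro ω
      simp only [Sab, Finset.range_one, Finset.sum_singleton]
      have := hfC (a+0) (X (a+0) ω)
      exact sq_le_sq.2 (this.trans (le_abs_self C))
    calc _ ≤ ∫ ω, C ^ 2 ∂μ := by
          refine integral_mono_of_nonneg (ae_of_all _ fun ω => sq_nonneg _) (integrable_const _) (ae_of_all _ this)
      _ = _ := by simp
  have hVn : ∀ a l, 0 ≤ V a l := fun a l => integral_nonneg fun ω => sq_nonneg _
  obtain ⟨r₁, hr₁, hmom⟩ := exp_mom hM hD hf h0 (1 + D + (C ^ 2 + D)) (by positivity)
  refine ⟨min r₀ r₁, lt_min hr₀ hr₁, ?_⟩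
  have hsub0 : Metric.ball (0:ℂ) (min r₀ r₁) ⊆ Metric.ball 0 r₀ := Metric.ball_subset_ball (min_le_left _ _)
  have hsub1 : Metric.ball (0:ℂ) (min r₀ r₁) ⊆ Metric.ball 0 r₁ := Metric.ball_subset_ball (min_le_right _ _)
  have hsmall : ∀ a l, V a l ≤ 1 + D + (C ^ 2 + D) → ∀ z ∈ Metric.ball (0:ℂ) (min r₀ r₁), ‖Z a l z - 1‖ ≤ 1 / 2 :=
    fun a l h z hz => hmom a l h z (by simpa using hsub1 hz)
  intro l
  induction l using Nat.strong_induction_on with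
  | _ l ih =>
  intro a
  by_cases hc : V a l < 1 + D
  · have hp := log_props (h := Z a l) (r := min r₀ r₁) (hZd a l).differentiableOn (hsmall a l (by nlinarith [sq_nonneg C]))
    refine ⟨0, fun z => Complex.log (Z a l z), hp.1, hp.2.2, fun z hz => (hp.2.1 z hz).trans (by norm_num), (hZQ a l).log, by simpa using hVn a l⟩
  · push Not at hc
    have hex : ∃ l₁, 1 + D ≤ V a l₁ := ⟨l, hc⟩
    classical
    obtain ⟨l₁, hl1, hmin⟩ : ∃ l₁, 1 + D ≤ V a l₁ ∧ ∀ m < l₁, V a m < 1 + D :=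
      ⟨Nat.find hex, Nat.find_spec hex, fun m hm => by simpa using Nat.find_min hex hm⟩
    have hl1l : l₁ ≤ l := by
      by_contra h
      push Not at h
      exact absurd (hmin l h) (by simpa using hc)
    have hl1p : l₁ ≠ 0 := by
      rintro rfl
      have : V a 0 = 0 := by simp [hV, Sab]
      linarith
    obtain ⟨p, rfl⟩ := Nat.exists_eq_succ_of_ne_zero hl1p
    have hup : V a (p + 1) ≤ 1 + D + (C ^ 2 + D) := by
      have h1 := hmin p (Nat.lt_succ_self p)
      have h2 := (abs_le.1 (hVadd a p 1)).2
      have h3 := hV1 (a + p)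
      linarith
    obtain ⟨l₂, rfl⟩ := Nat.exists_eq_add_of_le hl1l
    obtain ⟨k, Λ, i1, i2, i3, i4, i5⟩ := ih l₂ (by omega) (a + (p + 1))
    have hp := log_props (h := Z a (p+1)) (r := min r₀ r₁) (hZd a _).differentiableOn (hsmall a _ hup)
    have hq := log_props (r := min r₀ r₁) ((hRd a (p+1) l₂).mono hsub0) (fun z hz => hR1 a (p+1) l₂ z (hsub0 hz))
    refine ⟨k + 1, fun z => Complex.log (Z a (p+1) z) + Λ z + Complex.log (R a (p+1) l₂ z), (hp.1.add i1).add hq.1, fun z hz => ?_, fun z hz => ?_, ?_, ?_⟩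
    · rw [Complex.exp_add, Complex.exp_add, hp.2.2 z hz, i2 z hz, hq.2.2 z hz]
      have h1 := hne a (p+1) z (hsub0 hz)
      have h2 := hne (a + (p+1)) l₂ z (hsub0 hz)
      change Z a (p+1) z * Z (a + (p+1)) l₂ z * (Z a (p + 1 + l₂) z * (Z a (p + 1) z * Z (a + (p + 1)) l₂ z)⁻¹) = Z a (p+1+l₂) z
      field_simp
    · have h1 := hp.2.1 z hz
      have h2 := hq.2.1 z hz
      have h3 := i3 z hz
      refine norm_add₃_le.trans ?_
      push_cast
      linarith
    · have := ((hZQ a (p+1)).log.add i4).add (hRQ a (p+1) l₂)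
      convert this using 1
      change V a (p+1+l₂) = V a (p+1) + V (a+(p+1)) l₂ + _
      ring
    · have h2 := (abs_le.1 (hVadd a (p+1) l₂)).1
      change ((k+1:ℕ):ℝ) ≤ V a (p+1+l₂)
      change (k:ℝ) ≤ V (a+(p+1)) l₂ at i5
      push_cast
      linarith

end WBE
end
end

section
open MeasureTheory ProbabilityTheory Filter
open scoped ENNReal NNReal
noncomputable section
namespace WBE
open Set Topology
set_option linter.unusedSectionVars false

variable {Ω : Type*} [mΩ : MeasurableSpace Ω] {𝒳 : ℕ → Type*} [∀ j, MeasurableSpace (𝒳 j)]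
variable {μ : Measure Ω} [IsProbabilityMeasure μ] {X : ∀ j, Ω → 𝒳 j} {κ : ∀ j n, Kernel (𝒳 j) (𝒳 (j + n))}

lemma int_exp_map {S : Ω → ℝ} (hS : Measurable S) {K : ℝ} (hK : ∀ ω, |S ω| ≤ K) (θ : ℝ) :
    Integrable (fun x => Real.exp (θ * x)) (μ.map S) := by
  rw [integrable_map_measure (by fun_prop) hS.aemeasurable]
  refine int_bdd (B := Real.exp (|θ| * K)) _ (by simp only [Function.comp_def]; fun_prop) fun ω => ?_
  simp only [Function.comp_def]
  rw [Real.norm_of_nonneg (by positivity)]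
  refine Real.exp_le_exp.2 ((le_abs_self _).trans ?_)
  rw [abs_mul]
  exact mul_le_mul_of_nonneg_left (hK ω) (abs_nonneg _)

lemma core (hM : IsInhomMarkov μ X κ) {n₀ : ℕ} {γ : ℝ} (hD : Doeb κ n₀ γ) {f : ∀ j, 𝒳 j → ℝ} (hf : MB f)
    (h0 : ∀ j, ∫ ω, f j (X j ω) ∂μ = 0) : ∃ C σ0 : ℝ, 0 ≤ C ∧ 1 ≤ σ0 ∧ ∀ (n : ℕ) (σ : ℝ), σ0 ≤ σ → 
      ∫ ω, Sab f X 0 n ω ^ 2 ∂μ = σ ^ 2 → ∀ t, 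
      |(μ.map (fun ω => Sab f X 0 n ω / σ)).real (Iic t) - (gaussianReal 0 1).real (Iic t)| ≤ C * Real.exp (-|t|) / σ := by
  obtain ⟨r, hr, hb⟩ := blocks hM hD hf h0
  obtain ⟨C', hC', hSb⟩ := Sab_bdd (X := X) hf
  obtain ⟨C, σ0, hC, hσ0, hbe⟩ := berry (8 / r ^ 3) r (by positivity) hr
  refine ⟨C, σ0, hC, hσ0, fun n σ hσ hV => ?_⟩
  have hσ1 : 1 ≤ σ := hσ0.trans hσ
  have hσp : 0 < σ := by linarith
  have hSm : Measurable (fun ω => Sab f X 0 n ω / σ) := (Sab_meas hM hf 0 n).div_const _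
  have : IsProbabilityMeasure (μ.map (fun ω => Sab f X 0 n ω / σ)) := Measure.isProbabilityMeasure_map hSm.aemeasurable
  obtain ⟨k, Λ, i1, i2, i3, i4, i5⟩ := hb n 0
  rw [hV] at i4 i5
  have hsw := (i4.schwarz (M := 4 * σ ^ 2) hr i1 fun z hz => (i3 z hz).trans (by nlinarith)).2
  have hmem : ∀ w ∈ Metric.ball (0:ℂ) (r * σ), w / σ ∈ Metric.ball (0:ℂ) r := by
    intro w hw
    simp only [mem_ball_zero_iff, norm_div, Complex.norm_real, Real.norm_eq_abs, abs_of_pos hσp] at hw ⊢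
    rwa [div_lt_iff₀ hσp]
  have hσc : (σ : ℂ) ≠ 0 := by exact_mod_cast hσp.ne'
  refine hbe (μ.map (fun ω => Sab f X 0 n ω / σ)) σ (fun w => Λ (w / σ) - w ^ 2 / 2) hσ ?_ ?_ ?_ ?_
  · refine int_exp_map hSm (K := n * C' / σ) fun ω => ?_
    rw [abs_div, abs_of_pos hσp]
    exact div_le_div_of_nonneg_right (hSb 0 n ω) hσp.le
  · refine DifferentiableOn.sub (i1.comp (by fun_prop) hmem) (by fun_prop)
  · intro w hw
    have := hsw (w / σ) (hmem w hw)
    have e : ((σ ^ 2 : ℝ) : ℂ) * (w / σ) ^ 2 / 2 = w ^ 2 / 2 := by push_cast; field_simp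
    rw [e] at this
    refine this.trans (le_of_eq ?_)
    rw [norm_div, Complex.norm_real, Real.norm_eq_abs, abs_of_pos hσp]
    field_simp
    ring
  · intro w hw
    rw [complexMGF_id_map hSm.aemeasurable, add_sub_cancel, i2 _ (hmem w hw)]
    unfold complexMGF
    congr 1
    ext ω
    congr 1
    push_cast
    ring

lemma tail (P Q : Measure ℝ) [IsProbabilityMeasure P] [IsProbabilityMeasure Q] 
    (hP : ∀ θ, Integrable (fun x => Real.exp (θ * x)) P) (hQ : ∀ θ, Integrable (fun x => Real.exp (θ * x)) Q) : 
    ∃ D : ℝ, 0 ≤ D ∧ ∀ t, |P.real (Iic t) - Q.real (Iic t)| ≤ D * Real.exp (-|t|) := by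
  refine ⟨mgf id P 1 + mgf id P (-1) + (mgf id Q 1 + mgf id Q (-1)), ?_, fun t => ?_⟩
  · have := mgf_nonneg (X := id) (μ := P) (t := 1)
    have := mgf_nonneg (X := id) (μ := P) (t := -1)
    have := mgf_nonneg (X := id) (μ := Q) (t := 1)
    have := mgf_nonneg (X := id) (μ := Q) (t := -1)
    linarith
  have key : ∀ (P : Measure ℝ) [IsProbabilityMeasure P], (∀ θ, Integrable (fun x => Real.exp (θ * x)) P) →
      (0 ≤ t → 1 - P.real (Iic t) ≤ (mgf id P 1 + mgf id P (-1)) * Real.exp (-|t|)) ∧ 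
      (t ≤ 0 → P.real (Iic t) ≤ (mgf id P 1 + mgf id P (-1)) * Real.exp (-|t|)) := by
    intro P _ hP
    have a1 := mgf_nonneg (X := id) (μ := P) (t := 1)
    have a2 := mgf_nonneg (X := id) (μ := P) (t := -1)
    refine ⟨fun ht => ?_, fun ht => ?_⟩
    · have h1 := measure_ge_le_exp_mul_mgf (X := id) (μ := P) (t := 1) t zero_le_one (hP 1)
      have h2 : 1 - P.real (Iic t) ≤ P.real {x | t ≤ id x} := by
        rw [← probReal_compl_eq_one_sub measurableSet_Iic]
        refine measureReal_mono fun x hx => ?_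
        simp only [mem_compl_iff, mem_Iic, not_le] at hx
        exact hx.le
      rw [abs_of_nonneg ht]
      refine h2.trans (h1.trans ?_)
      rw [neg_one_mul, mul_comm]
      gcongr
      linarith
    · have h1 := measure_le_le_exp_mul_mgf (X := id) (μ := P) (t := -1) t (by norm_num) (hP (-1))
      rw [abs_of_nonpos ht]
      refine h1.trans ?_
      rw [neg_neg, one_mul, neg_neg, mul_comm]
      gcongr
      linarith
  have p1 := key P hP
  have q1 := key Q hQ
  have b1 : P.real (Iic t) ≤ 1 := measureReal_le_one
  have b2 : Q.real (Iic t) ≤ 1 := measureReal_le_one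
  have b3 : 0 ≤ P.real (Iic t) := measureReal_nonneg
  have b4 : 0 ≤ Q.real (Iic t) := measureReal_nonneg
  rcases le_total 0 t with h | h
  · have := p1.1 h; have := q1.1 h
    rw [abs_le]; constructor <;> linarith
  · have := p1.2 h; have := q1.2 h
    rw [abs_le]; constructor <;> linarith

lemma weight (s : ℝ) (hs : 1 ≤ s) : ∃ W : ℝ, 0 ≤ W ∧ ∀ t : ℝ, (1 + |t| ^ s) * Real.exp (-|t|) ≤ W := by
  set m := ⌈s⌉₊
  refine ⟨2 + m.factorial, by positivity, fun t => ?_⟩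
  have h0 := abs_nonneg t
  have h1 : |t| ^ s ≤ 1 + |t| ^ m := by
    rcases le_total |t| 1 with h | h
    · have := Real.rpow_le_one h0 h (by linarith : 0 ≤ s)
      have : 0 ≤ |t| ^ m := by positivity
      linarith
    · have : |t| ^ s ≤ |t| ^ (m:ℝ) := Real.rpow_le_rpow_of_exponent_le h (Nat.le_ceil s)
      rw [Real.rpow_natCast] at this
      linarith
  have h2 := Real.pow_div_factorial_le_exp |t| h0 m
  rw [div_le_iff₀ (by positivity)] at h2
  have h3 := Real.one_le_exp h0
  rw [Real.exp_neg, ← div_eq_mul_inv, div_le_iff₀ (Real.exp_pos _)]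
  nlinarith

lemma gauss_int (θ : ℝ) : Integrable (fun x => Real.exp (θ * x)) (gaussianReal 0 1) := integrable_exp_mul_gaussianReal θ

end WBE
end
end

/-- **Theorem (weighted Berry–Esseen bound, Doeblin case).**
If `σ_n → ∞`, then for every `1 ≤ s < ∞` there is a constant `C_s` such that
`sup_t (1 + |t|^s) |F_n(t) − Φ(t)| ≤ C_s σ_n⁻¹` for all `n`, where
`F_n(t) = ℙ(S_n − E[S_n] ≤ t σ_n)`.  (The bound is stated in the equivalent form
`σ_n (1 + |t|^s) |F_n(t) − Φ(t)| ≤ C_s`.) -/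
theorem weighted_berry_esseen_doeblin
    (μ : Measure Ω) [IsProbabilityMeasure μ]
    (X : ∀ j, Ω → 𝒳 j) (κ : ∀ j n, Kernel (𝒳 j) (𝒳 (j + n)))
    (hMarkov : IsInhomMarkov μ X κ)
    (n₀ : ℕ) (hn₀ : 0 < n₀) (γ : ℝ) (hγ : γ ∈ Set.Ioo (0 : ℝ) 1)
    (m : ∀ j, Measure (𝒳 j)) (hm : ∀ j, IsProbabilityMeasure (m j))
    (hDoeblin : ∀ j (x : 𝒳 j) (Γ : Set (𝒳 (j + n₀))), MeasurableSet Γ →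
      ENNReal.ofReal γ * m (j + n₀) Γ ≤ κ j n₀ x Γ)
    (f : ∀ j, 𝒳 j → ℝ) (hfmeas : ∀ j, Measurable (f j))
    (C : ℝ) (hbdd : ∀ j, ∀ᵐ ω ∂μ, |f j (X j ω)| ≤ C)
    (S : ℕ → Ω → ℝ) (hS : ∀ n ω, S n ω = ∑ j ∈ Finset.range n, f j (X j ω))
    (σs : ℕ → ℝ) (hσ : ∀ n, σs n = Real.sqrt (variance (S n) μ))
    (hσ_top : Tendsto σs atTop atTop)
    (F : ℕ → ℝ → ℝ)
    (hF : ∀ n t, F n t = (μ {ω | S n ω - ∫ ω', S n ω' ∂μ ≤ t * σs n}).toReal) :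
    ∀ s : ℝ, 1 ≤ s → ∃ Cs : ℝ, ∀ n : ℕ, ∀ t : ℝ,
      σs n * ((1 + |t| ^ s) * |F n t - stdNormalCDF t|) ≤ Cs := by
  classical
  have hD : WBE.Doeb κ n₀ γ := ⟨hn₀, hγ, m, hm, fun j x => Measure.le_iff.2 fun Γ hΓ => by
    simpa using hDoeblin j x Γ hΓ⟩
  have hC : 0 ≤ C := by
    obtain ⟨ω, h⟩ := (hbdd 0).exists
    exact (abs_nonneg _).trans h
  set g : ∀ j, 𝒳 j → ℝ := fun j x => max (-C) (min C (f j x)) with hg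
  have hgm : ∀ j, Measurable (g j) := fun j => by have := hfmeas j; fun_prop
  have hgb : ∀ j x, |g j x| ≤ C := fun j x => by
    rw [abs_le]
    exact ⟨le_max_left _ _, max_le (by linarith) (min_le_left _ _)⟩
  have hgf : ∀ j, ∀ᵐ ω ∂μ, g j (X j ω) = f j (X j ω) := fun j => by
    filter_upwards [hbdd j] with ω h
    rw [abs_le] at h
    simp only [hg]
    rw [min_eq_right h.2, max_eq_right h.1]
  set c : ℕ → ℝ := fun j => ∫ ω, g j (X j ω) ∂μ with hc
  have hgi : ∀ j, Integrable (fun ω => g j (X j ω)) μ := fun j =>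
    WBE.int_bdd (B := C) _ ((hgm j).comp (hMarkov.meas j)) fun ω => hgb _ _
  have hcb : ∀ j, |c j| ≤ C := fun j => by
    have := norm_integral_le_of_norm_le_const (μ := μ) (f := fun ω => g j (X j ω)) (C := C) (ae_of_all _ fun ω => hgb _ _)
    simpa using this
  set f' : ∀ j, 𝒳 j → ℝ := fun j x => g j x - c j with hf'
  have hMB : WBE.MB f' := by
    refine ⟨fun j => (hgm j).sub_const _, 2 * C, by linarith, fun j x => ?_⟩
    have := abs_sub (g j x) (c j)
    have := hgb j x
    have := hcb j
    rw [Real.norm_eq_abs]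
    simp only [hf']
    linarith
  have h0 : ∀ j, ∫ ω, f' j (X j ω) ∂μ = 0 := fun j => by
    simp only [hf']
    rw [integral_sub (hgi j) (integrable_const _)]
    simp [hc]
  have hSg : ∀ n, ∀ᵐ ω ∂μ, S n ω = ∑ j ∈ Finset.range n, g j (X j ω) := fun n => by
    filter_upwards [ae_all_iff.2 hgf] with ω h
    rw [hS]
    exact Finset.sum_congr rfl fun j _ => (h j).symm
  have hSi : ∀ n, ∫ ω, S n ω ∂μ = ∑ j ∈ Finset.range n, c j := fun n => by
    rw [integral_congr_ae (hSg n), integral_finsetSum _ fun j _ => hgi j]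
  have hSab : ∀ n, ∀ᵐ ω ∂μ, S n ω - ∫ ω', S n ω' ∂μ = WBE.Sab f' X 0 n ω := fun n => by
    filter_upwards [hSg n] with ω h
    rw [h, hSi, ← Finset.sum_sub_distrib]
    unfold WBE.Sab
    refine Finset.sum_congr rfl fun j _ => ?_
    have e : ∀ a b, a = b → f' a (X a ω) = f' b (X b ω) := by rintro a b rfl; rfl
    exact e _ _ (by omega)
  have hSm : ∀ n, Measurable (S n) := fun n => by
    have : S n = fun ω => ∑ j ∈ Finset.range n, f j (X j ω) := funext (hS n)
    rw [this]
    exact Finset.measurable_fun_sum _ fun i _ => (hfmeas _).comp (hMarkov.meas _)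
  have hV : ∀ n, ∫ ω, WBE.Sab f' X 0 n ω ^ 2 ∂μ = σs n ^ 2 := fun n => by
    rw [hσ, Real.sq_sqrt (variance_nonneg _ _), variance_eq_integral (hSm n).aemeasurable]
    refine integral_congr_ae ?_
    filter_upwards [hSab n] with ω h
    rw [h]
  have hσ0 : ∀ n, 0 ≤ σs n := fun n => by rw [hσ]; positivity
  have hFP : ∀ n, 0 < σs n → ∀ t, F n t = (μ.map (fun ω => WBE.Sab f' X 0 n ω / σs n)).real (Set.Iic t) := by
    intro n hn t
    have hm : Measurable (fun ω => WBE.Sab f' X 0 n ω / σs n) := (WBE.Sab_meas hMarkov hMB 0 n).div_const _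
    rw [hF, map_measureReal_apply hm measurableSet_Iic, measureReal_def]
    congr 1
    refine measure_congr ?_
    filter_upwards [hSab n] with ω h
    refine propext ?_
    change S n ω - ∫ ω', S n ω' ∂μ ≤ t * σs n ↔ WBE.Sab f' X 0 n ω / σs n ≤ t
    rw [h, div_le_iff₀ hn]
  intro s hs
  obtain ⟨W, hW, hWt⟩ := WBE.weight s hs
  obtain ⟨K, s0, hK, hs0, hcore⟩ := WBE.core hMarkov hD hMB h0
  obtain ⟨K', hK', hSb⟩ := WBE.Sab_bdd (X := X) hMB
  have hw0 : ∀ t : ℝ, 0 ≤ 1 + |t| ^ s := fun t => by positivity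
  have hone : ∀ n, ∃ A : ℝ, 0 ≤ A ∧ ∀ t : ℝ, σs n * ((1 + |t| ^ s) * |F n t - stdNormalCDF t|) ≤ A := by
    intro n
    rcases (hσ0 n).eq_or_lt with h | h
    · exact ⟨0, le_rfl, fun t => by rw [← h]; simp⟩
    have hm : Measurable (fun ω => WBE.Sab f' X 0 n ω / σs n) := (WBE.Sab_meas hMarkov hMB 0 n).div_const _
    have : IsProbabilityMeasure (μ.map (fun ω => WBE.Sab f' X 0 n ω / σs n)) := Measure.isProbabilityMeasure_map hm.aemeasurable
    obtain ⟨D, hD0, hDt⟩ := WBE.tail (μ.map (fun ω => WBE.Sab f' X 0 n ω / σs n)) (gaussianReal 0 1)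
      (WBE.int_exp_map hm (K := n * K' / σs n) fun ω => by
        rw [abs_div, abs_of_pos h]
        exact div_le_div_of_nonneg_right (hSb 0 n ω) h.le) WBE.gauss_int
    refine ⟨σs n * (D * W), by positivity, fun t => mul_le_mul_of_nonneg_left ?_ h.le⟩
    rw [hFP n h t]
    calc _ ≤ (1 + |t| ^ s) * (D * Real.exp (-|t|)) := mul_le_mul_of_nonneg_left (hDt t) (hw0 t)
      _ = D * ((1 + |t| ^ s) * Real.exp (-|t|)) := by ring
      _ ≤ D * W := mul_le_mul_of_nonneg_left (hWt t) hD0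
  choose A hA0 hAt using hone
  obtain ⟨N, hN⟩ := eventually_atTop.1 (hσ_top.eventually_ge_atTop s0)
  refine ⟨K * W + ∑ n ∈ Finset.range N, A n, fun n t => ?_⟩
  have hsum : 0 ≤ ∑ n ∈ Finset.range N, A n := Finset.sum_nonneg fun n _ => hA0 n
  rcases lt_or_ge n N with hn | hn
  · have := Finset.single_le_sum (f := A) (fun n _ => hA0 n) (Finset.mem_range.2 hn)
    have := hAt n t
    have : 0 ≤ K * W := by positivity
    linarith
  · have hs := hN n hn
    have hp : 0 < σs n := by linarith
    have h1 := hcore n (σs n) hs (hV n) t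
    rw [← hFP n hp t] at h1
    have h2 : σs n * ((1 + |t| ^ s) * |F n t - stdNormalCDF t|) ≤ σs n * ((1 + |t| ^ s) * (K * Real.exp (-|t|) / σs n)) :=
      mul_le_mul_of_nonneg_left (mul_le_mul_of_nonneg_left h1 (hw0 t)) hp.le
    have h3 : σs n * ((1 + |t| ^ s) * (K * Real.exp (-|t|) / σs n)) = K * ((1 + |t| ^ s) * Real.exp (-|t|)) := by
      field_simp
    have h4 := mul_le_mul_of_nonneg_left (hWt t) hK
    linarith

end
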